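/- arXiv:2212.11793 — 8 statements merged into one kernel-verified Lean document; each statement's English description precedes it below -/
import Mathlib

section
/- Let φ : ℝ → ℝ be smooth and compactly supported. Define a(t) := φ(t)/√(t+4), v(t) := 4·cosh(t/2)·∫₀^∞ a(4·sinh²(t/2) + y²) dy, and u(ξ) := ∫_ℝ v(t)·e^{−iξt} dt. Then φ(0) = (1/(4π))·∫_ℝ ξ·u(ξ)·coth(πξ) dξ, where the integrand is extended continuously at ξ = 0 (with ξ·coth(πξ) taken to be 1/π at ξ = 0) and the integral converges absolutely. -/
open MeasureTheory Real

/-!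
For an even Schwartz function `v` with Fourier transform `u (ξ) = ∫ v (t) e^{-iξt} dt`, the partial
fraction expansion `ξ coth (π ξ) = (1 + 2 ∑_{n ≥ 1} ξ² / (ξ² + n²)) / π` turns
`∫ ξ coth (π ξ) u (ξ) dξ` into a sum of integrals against Poisson kernels. By Fourier duality the
`n`-th of them is a Laplace transform `-2π ∫₀^∞ e^{-nt} v' (t) dt`, and the geometric series
gives `-2 ∫₀^∞ coth (t / 2) v' (t) dt`; this converges since `v' (0) = 0`.

Here `v (t) = 4 cosh (t / 2) A (4 sinh² (t / 2))`, where `A (x) = ∫₀^∞ a (x + y²) dy` satisfies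
`A' (x) = ∫₀^∞ a' (x + y²) dy`. Up to an exact derivative with vanishing boundary terms,
`coth (t / 2) v' (t)` is `16 cosh (t / 2) A' (4 sinh² (t / 2))`. With `s = 2 sinh (t / 2)` its
integral becomes the integral of `a' (s² + y²)` over a quarter plane, which polar coordinates
evaluate to `-(π / 4) a (0)`.

Only the values of `a` on `[0, ∞)` enter, so the singularity of `1 / √(t + 4)` at `t = -4` can be
cut off smoothly.
-/

open Filter Set
open scoped ContDiff Convolution FourierTransform SchwartzMap

section XCoth

/-- The function `x ↦ x coth x`, with its continuous extension `1` at `x = 0`. -/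
noncomputable def xCoth (x : ℝ) : ℝ :=
  if x = 0 then 1 else x * cosh x / sinh x

lemma xCoth_zero : xCoth 0 = 1 := if_pos rfl

lemma xCoth_of_ne_zero {x : ℝ} (hx : x ≠ 0) : xCoth x = x * cosh x / sinh x := if_neg hx

lemma inv_mul_xCoth_mul {b : ℝ} (hb : b ≠ 0) (x : ℝ) :
    b⁻¹ * xCoth (b * x) = if x = 0 then 1 / b else x * cosh (b * x) / sinh (b * x) := by
  simp only [xCoth, mul_eq_zero, hb, false_or]
  split_ifs <;> field_simp

lemma xCoth_neg (x : ℝ) : xCoth (-x) = xCoth x := by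
  simp [xCoth]

lemma measurable_xCoth : Measurable xCoth :=
  Measurable.ite (measurableSet_singleton 0) measurable_const
    ((by fun_prop : Continuous fun x : ℝ ↦ x * cosh x).measurable.div continuous_sinh.measurable)

lemma abs_xCoth_le (x : ℝ) : |xCoth x| ≤ 1 + |x| := by
  wlog hx : 0 < x generalizing x
  · rcases (not_lt.1 hx).eq_or_lt with rfl | hneg
    · simp [xCoth_zero]
    · simpa [xCoth_neg] using this (-x) (neg_pos.2 hneg)
  have hsinh : x ≤ sinh x := self_le_sinh_iff.2 hx.le
  have hsinh_pos : 0 < sinh x := hx.trans_le hsinh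
  have hcosh : cosh x ≤ sinh x + 1 := by
    have := cosh_sub_sinh x
    have := exp_le_one_iff.2 (neg_nonpos.2 hx.le)
    linarith
  have := cosh_pos x
  rw [xCoth_of_ne_zero hx.ne', abs_of_pos (by positivity), abs_of_pos hx, div_le_iff₀ hsinh_pos]
  nlinarith

lemma summable_sq_div_sq_add_sq (x : ℝ) :
    Summable fun n : ℕ ↦ x ^ 2 / (x ^ 2 + ((n : ℝ) + 1) ^ 2) := by
  have hsum : Summable fun n : ℕ ↦ x ^ 2 * (1 / ((n : ℝ) + 1) ^ 2) := by
    have := (summable_nat_add_iff 1).2 (summable_one_div_nat_pow.2 one_lt_two)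
    exact Summable.mul_left _ (by exact_mod_cast this)
  refine hsum.of_nonneg_of_le (fun n ↦ by positivity) fun n ↦ ?_
  rw [mul_one_div]
  gcongr
  exact le_add_of_nonneg_left (sq_nonneg x)

lemma cot_mul_I (x : ℝ) : Complex.cot (x * Complex.I) = -Complex.I * (cosh x / sinh x : ℝ) := by
  rw [Complex.cot, Complex.cos_mul_I, Complex.sin_mul_I, mul_comm _ Complex.I, ← div_div,
    Complex.div_I]
  push_cast
  ring

lemma one_div_sub_add_one_div_add_mul_I {x : ℝ} (hx : x ≠ 0) (m : ℝ) :
    1 / ((x : ℂ) * Complex.I - m) + 1 / (x * Complex.I + m) =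
      (-2 * Complex.I / x) * (x ^ 2 / (x ^ 2 + m ^ 2) : ℝ) := by
  have hsub : (x : ℂ) * Complex.I - m ≠ 0 := fun h ↦ hx (by simpa using congrArg Complex.im h)
  have hadd : (x : ℂ) * Complex.I + m ≠ 0 := fun h ↦ hx (by simpa using congrArg Complex.im h)
  have hsq : (x : ℂ) ^ 2 + (m : ℂ) ^ 2 ≠ 0 := by
    exact_mod_cast (by positivity : x ^ 2 + m ^ 2 ≠ 0)
  have hprod : ((x : ℂ) * Complex.I - m) * (x * Complex.I + m) = -((x : ℂ) ^ 2 + m ^ 2) := by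
    linear_combination (x : ℂ) ^ 2 * Complex.I_sq
  have : (x : ℂ) ≠ 0 := by exact_mod_cast hx
  rw [div_add_div _ _ hsub hadd, hprod]
  push_cast
  field_simp
  ring

lemma tsum_sq_div_sq_add_sq {x : ℝ} (hx : x ≠ 0) :
    ∑' n : ℕ, x ^ 2 / (x ^ 2 + ((n : ℝ) + 1) ^ 2) = (xCoth (π * x) - 1) / 2 := by
  have hmem : (x : ℂ) * Complex.I ∈ Complex.integerComplement := by
    rintro ⟨n, hn⟩
    exact hx (by simpa using (congrArg Complex.im hn).symm)
  have hcot := cot_series_rep' hmem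
  have hterm (n : ℕ) := one_div_sub_add_one_div_add_mul_I hx ((n : ℝ) + 1)
  push_cast at hterm
  simp only [hterm] at hcot
  rw [tsum_mul_left, ← mul_assoc, ← Complex.ofReal_mul, cot_mul_I] at hcot
  have hx' : (x : ℂ) ≠ 0 := by exact_mod_cast hx
  rw [xCoth_of_ne_zero (by positivity), mul_div_assoc]
  apply Complex.ofReal_injective
  push_cast at hcot ⊢
  generalize Complex.cosh (π * x) / Complex.sinh (π * x) = q at hcot ⊢
  field_simp at hcot ⊢
  simp only [Complex.I_sq] at hcot
  linear_combination -hcot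

lemma hasSum_sq_div_sq_add_sq (x : ℝ) :
    HasSum (fun n : ℕ ↦ x ^ 2 / (x ^ 2 + ((n : ℝ) + 1) ^ 2)) ((xCoth (π * x) - 1) / 2) := by
  rcases eq_or_ne x 0 with rfl | hx
  · simp [xCoth_zero]
  · exact tsum_sq_div_sq_add_sq hx ▸ (summable_sq_div_sq_add_sq x).hasSum

end XCoth

section BoseKernel

variable {E : Type*} [NormedAddCommGroup E] [NormedSpace ℝ E] {g : ℝ → E} {C : ℝ}

lemma exp_sub_one_eq_two_mul_exp_mul_sinh (t : ℝ) :
    exp t - 1 = 2 * exp (t / 2) * sinh (t / 2) := by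
  have hexp : exp (t / 2) * exp (t / 2) = exp t := by rw [← exp_add, add_halves]
  have hone : exp (t / 2) * exp (-(t / 2)) = 1 := by rw [← exp_add, add_neg_cancel, exp_zero]
  rw [sinh_eq]
  linear_combination hone - hexp

lemma cosh_half_div_sinh_half {t : ℝ} (ht : t ≠ 0) :
    cosh (t / 2) / sinh (t / 2) = 1 + 2 * (exp t - 1)⁻¹ := by
  have hsinh : sinh (t / 2) ≠ 0 := sinh_ne_zero.2 (by positivity)
  have hone : exp (-(t / 2)) * exp (t / 2) = 1 := by rw [← exp_add, neg_add_cancel, exp_zero]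
  rw [exp_sub_one_eq_two_mul_exp_mul_sinh]
  field_simp
  linear_combination exp (t / 2) * cosh_sub_sinh (t / 2) + hone

lemma inv_exp_sub_one_mul_le {t : ℝ} (ht : 0 < t) : (exp t - 1)⁻¹ * t ≤ exp (-(1 / 2 * t)) := by
  have hsinh : t / 2 ≤ sinh (t / 2) := self_le_sinh_iff.2 (by positivity)
  have : 0 < sinh (t / 2) := sinh_pos_iff.2 (by positivity)
  rw [exp_sub_one_eq_two_mul_exp_mul_sinh, inv_mul_le_iff₀ (by positivity), mul_right_comm,
    mul_assoc 2, ← exp_add, show t / 2 + -(1 / 2 * t) = 0 by ring, exp_zero]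
  linarith

lemma hasSum_exp_neg_succ_mul {t : ℝ} (ht : 0 < t) :
    HasSum (fun n : ℕ ↦ exp (-(((n : ℝ) + 1) * t))) (exp t - 1)⁻¹ := by
  have hlt : exp (-t) < 1 := exp_lt_one_iff.2 (neg_neg_iff_pos.2 ht)
  convert! (hasSum_geometric_of_lt_one (exp_pos _).le hlt).mul_left (exp (-t)) using 1
  · ext n
    rw [← exp_nat_mul, ← exp_add]
    ring_nf
  · rw [exp_neg, ← mul_inv, mul_one_sub, mul_inv_cancel₀ (exp_pos t).ne']

lemma integrableOn_inv_exp_sub_one_smul (hg : AEStronglyMeasurable g (volume.restrict (Ioi 0)))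
    (hgC : ∀ t, 0 < t → ‖g t‖ ≤ C * t) :
    IntegrableOn (fun t ↦ (exp t - 1)⁻¹ • g t) (Ioi 0) := by
  have hdom : IntegrableOn (fun t ↦ C * exp (-(1 / 2) * t)) (Ioi 0) :=
    (exp_neg_integrableOn_Ioi 0 one_half_pos).const_mul C
  refine hdom.mono' (by fun_prop) ?_
  filter_upwards [ae_restrict_mem measurableSet_Ioi] with t (ht : 0 < t)
  have hpos : 0 < (exp t - 1)⁻¹ := inv_pos.2 (sub_pos.2 (one_lt_exp_iff.2 ht))
  have hC : 0 ≤ C := nonneg_of_mul_nonneg_left ((norm_nonneg _).trans (hgC t ht)) ht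
  calc ‖(exp t - 1)⁻¹ • g t‖ = (exp t - 1)⁻¹ * ‖g t‖ := by
        rw [norm_smul, norm_of_nonneg hpos.le]
    _ ≤ (exp t - 1)⁻¹ * (C * t) := by gcongr; exact hgC t ht
    _ = C * ((exp t - 1)⁻¹ * t) := by ring
    _ ≤ C * exp (-(1 / 2) * t) := by
        rw [neg_mul]
        gcongr
        exact inv_exp_sub_one_mul_le ht

lemma hasSum_integral_exp_neg_succ_mul_smul
    (hg : AEStronglyMeasurable g (volume.restrict (Ioi 0)))
    (hgC : ∀ t, 0 < t → ‖g t‖ ≤ C * t) :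
    HasSum (fun n : ℕ ↦ ∫ t in Ioi (0 : ℝ), exp (-(((n : ℝ) + 1) * t)) • g t)
      (∫ t in Ioi (0 : ℝ), (exp t - 1)⁻¹ • g t) := by
  refine hasSum_integral_of_dominated_convergence
    (fun n t ↦ exp (-(((n : ℝ) + 1) * t)) * ‖g t‖) (fun n ↦ by fun_prop)
    (fun n ↦ .of_forall fun t ↦ by rw [norm_smul, norm_of_nonneg (exp_pos _).le]) ?_ ?_ ?_
  · filter_upwards [ae_restrict_mem measurableSet_Ioi] with t ht
    exact (hasSum_exp_neg_succ_mul ht).summable.mul_right _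
  · refine (integrableOn_inv_exp_sub_one_smul hg hgC).norm.congr ?_
    filter_upwards [ae_restrict_mem measurableSet_Ioi] with t ht
    have hpos : 0 < (exp t - 1)⁻¹ := inv_pos.2 (sub_pos.2 (one_lt_exp_iff.2 ht))
    rw [((hasSum_exp_neg_succ_mul ht).mul_right _).tsum_eq, norm_smul, norm_of_nonneg hpos.le]
  · filter_upwards [ae_restrict_mem measurableSet_Ioi] with t ht
    exact (hasSum_exp_neg_succ_mul ht).smul_const _

end BoseKernel

section Even

variable {E : Type*} [NormedAddCommGroup E] {f : ℝ → E}

lemma integrable_iff_integrableOn_Ioi_of_even (hf : f.Even) :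
    Integrable f ↔ IntegrableOn f (Ioi 0) := by
  refine ⟨Integrable.integrableOn, fun hIoi ↦ ?_⟩
  have hIic : IntegrableOn f (Iic 0) := by
    rw [← (Measure.measurePreserving_neg volume).integrableOn_comp_preimage
      (MeasurableEquiv.neg ℝ).measurableEmbedding, neg_preimage, neg_Iic, neg_zero,
      integrableOn_Ici_iff_integrableOn_Ioi]
    simpa only [Function.comp_def, hf _] using hIoi
  simpa [Iic_union_Ioi] using hIic.union hIoi

variable [NormedSpace ℝ E]

lemma integral_eq_two_smul_integral_Ioi_of_even (hf : f.Even) :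
    ∫ t, f t = (2 : ℝ) • ∫ t in Ioi (0 : ℝ), f t := by
  by_cases hint : Integrable f
  · have hIic : ∫ t in Iic (0 : ℝ), f t = ∫ t in Ioi (0 : ℝ), f t := by
      simpa only [hf _, neg_zero] using (integral_comp_neg_Ioi 0 f).symm
    rw [← intervalIntegral.integral_Iic_add_Ioi hint.integrableOn hint.integrableOn, hIic,
      two_smul]
  · rw [integral_undef hint,
      integral_undef ((integrable_iff_integrableOn_Ioi_of_even hf).not.1 hint), smul_zero]

lemma deriv_zero_of_even (hf : f.Even) : deriv f 0 = 0 := by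
  have hneg := deriv_comp_neg f 0
  simp only [hf _, neg_zero] at hneg
  have : IsAddTorsionFree E := .of_isTorsionFree ℝ E
  exact self_eq_neg.1 hneg

end Even

section SchwartzHalfLine

variable {E : Type*} [NormedAddCommGroup E] [NormedSpace ℝ E] (v : 𝓢(ℝ, E)) {c : ℝ}

lemma exists_norm_deriv_le_mul_of_even (hv : Function.Even v) :
    ∃ C, ∀ t, 0 < t → ‖deriv v t‖ ≤ C * t := by
  set v' := SchwartzMap.derivCLM ℝ E v
  refine ⟨SchwartzMap.seminorm ℝ 0 0 (SchwartzMap.derivCLM ℝ E v'), fun t ht ↦ ?_⟩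
  have := convex_univ.norm_image_sub_le_of_norm_deriv_le (𝕜 := ℝ) (f := v')
    (fun x _ ↦ v'.differentiableAt) (fun x _ ↦
      (SchwartzMap.derivCLM ℝ E v').norm_le_seminorm ℝ x) (mem_univ 0) (mem_univ t)
  simpa [v', deriv_zero_of_even hv, abs_of_pos ht] using this

lemma integrableOn_exp_neg_mul_smul (hc : 0 ≤ c) :
    IntegrableOn (fun t ↦ exp (-(c * t)) • v t) (Ioi 0) := by
  refine v.integrable.integrableOn.bdd_smul (φ := fun t ↦ exp (-(c * t))) 1 (by fun_prop) ?_
  filter_upwards [ae_restrict_mem measurableSet_Ioi] with t (ht : 0 < t)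
  rw [norm_of_nonneg (exp_pos _).le, exp_le_one_iff, neg_nonpos]
  positivity

lemma integral_Ioi_exp_neg_mul_smul_deriv [CompleteSpace E] (hc : 0 ≤ c) :
    ∫ t in Ioi (0 : ℝ), exp (-(c * t)) • deriv v t =
      c • (∫ t in Ioi (0 : ℝ), exp (-(c * t)) • v t) - v 0 := by
  have hderiv (t : ℝ) : HasDerivAt (fun t ↦ exp (-(c * t)) • v t)
      (exp (-(c * t)) • deriv v t - c • exp (-(c * t)) • v t) t := by
    convert! (((hasDerivAt_id t).const_mul c).neg.exp).smul v.differentiableAt.hasDerivAt using 1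
    simp [smul_smul, mul_comm, sub_eq_add_neg]
  have hint := integrableOn_exp_neg_mul_smul v hc
  have hint' : IntegrableOn (fun t ↦ exp (-(c * t)) • deriv v t) (Ioi 0) :=
    integrableOn_exp_neg_mul_smul (SchwartzMap.derivCLM ℝ E v) hc
  have hint_sub := hint'.fun_sub (hint.fun_smul c)
  have hlim := tendsto_zero_of_hasDerivAt_of_integrableOn_Ioi (fun t _ ↦ hderiv t) hint_sub hint
  have hftc := integral_Ioi_of_hasDerivAt_of_tendsto' (fun t _ ↦ hderiv t) hint_sub hlim
  rw [integral_sub hint' (hint.fun_smul c), integral_smul] at hftc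
  rw [sub_eq_iff_eq_add'.1 hftc]
  simp [sub_eq_add_neg]

lemma integral_Ioi_coth_half_smul_deriv [CompleteSpace E] (hv : Function.Even v) :
    ∫ t in Ioi (0 : ℝ), (cosh (t / 2) / sinh (t / 2)) • deriv v t =
      -v 0 + (2 : ℝ) • ∫ t in Ioi (0 : ℝ), (exp t - 1)⁻¹ • deriv v t := by
  obtain ⟨C, hC⟩ := exists_norm_deriv_le_mul_of_even v hv
  have hint : IntegrableOn (deriv v) (Ioi 0) := (SchwartzMap.derivCLM ℝ E v).integrable.integrableOn
  have hderiv : ∫ t in Ioi (0 : ℝ), deriv v t = -v 0 := by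
    simpa using integral_Ioi_exp_neg_mul_smul_deriv v le_rfl
  rw [← hderiv, ← integral_smul, ← integral_add hint
    ((integrableOn_inv_exp_sub_one_smul hint.aestronglyMeasurable hC).fun_smul (2 : ℝ))]
  refine setIntegral_congr_fun measurableSet_Ioi fun t ht ↦ ?_
  rw [cosh_half_div_sinh_half ht.out.ne', add_smul, one_smul, mul_smul]

end SchwartzHalfLine

section XCothSeries

variable {E : Type*} [NormedAddCommGroup E] [NormedSpace ℝ E] (v : 𝓢(ℝ, E))

lemma integrable_xCoth_mul_smul (b : ℝ) : Integrable fun w ↦ xCoth (b * w) • v w := by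
  have hdom : Integrable fun w ↦ ‖v w‖ + |b| * (‖w‖ ^ 1 * ‖v w‖) :=
    v.integrable.norm.add ((v.integrable_pow_mul volume 1).const_mul _)
  have hmeas : Measurable fun w ↦ xCoth (b * w) := measurable_xCoth.comp (by fun_prop)
  refine hdom.mono' (hmeas.aestronglyMeasurable.smul v.continuous.aestronglyMeasurable)
    (.of_forall fun w ↦ ?_)
  calc ‖xCoth (b * w) • v w‖ = |xCoth (b * w)| * ‖v w‖ := norm_smul _ _
    _ ≤ (1 + |b * w|) * ‖v w‖ := by gcongr; exact abs_xCoth_le _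
    _ = ‖v w‖ + |b| * (‖w‖ ^ 1 * ‖v w‖) := by rw [abs_mul, norm_eq_abs w]; ring

lemma hasSum_integral_sq_div_sq_add_sq_smul (b : ℝ) :
    HasSum (fun n : ℕ ↦ ∫ w, ((b * w) ^ 2 / ((b * w) ^ 2 + ((n : ℝ) + 1) ^ 2)) • v w)
      (∫ w, ((xCoth (π * b * w) - 1) / 2) • v w) := by
  have hsum (w : ℝ) : HasSum (fun n : ℕ ↦ (b * w) ^ 2 / ((b * w) ^ 2 + ((n : ℝ) + 1) ^ 2))
      ((xCoth (π * b * w) - 1) / 2) := by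
    simpa only [mul_assoc] using hasSum_sq_div_sq_add_sq (b * w)
  have hint : Integrable fun w ↦ ((xCoth (π * b * w) - 1) / 2) • v w := by
    simp only [div_eq_inv_mul, mul_smul, sub_smul, one_smul]
    exact ((integrable_xCoth_mul_smul v (π * b)).sub v.integrable).smul (2⁻¹ : ℝ)
  refine hasSum_integral_of_dominated_convergence
    (fun n w ↦ (b * w) ^ 2 / ((b * w) ^ 2 + ((n : ℝ) + 1) ^ 2) * ‖v w‖)
    (fun n ↦ (Measurable.aestronglyMeasurable (by fun_prop)).smul
      v.continuous.aestronglyMeasurable)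
    (fun n ↦ .of_forall fun w ↦ by rw [norm_smul, norm_of_nonneg (by positivity)])
    (.of_forall fun w ↦ (hsum w).summable.mul_right _) ?_
    (.of_forall fun w ↦ (hsum w).smul_const _)
  refine hint.norm.congr (.of_forall fun w ↦ ?_)
  beta_reduce
  rw [((hsum w).mul_right _).tsum_eq, norm_smul, norm_of_nonneg]
  exact (hsum w).nonneg fun n ↦ by positivity

end XCothSeries

section Fourier

variable {E : Type*} [NormedAddCommGroup E] [NormedSpace ℂ E] (v : 𝓢(ℝ, E)) {c : ℝ}

lemma integrable_exp_neg_mul_abs (hc : 0 < c) : Integrable fun t : ℝ ↦ exp (-(c * |t|)) := by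
  rw [integrable_iff_integrableOn_Ioi_of_even fun t ↦ by rw [abs_neg]]
  refine (exp_neg_integrableOn_Ioi 0 hc).congr_fun (fun t ht ↦ ?_) measurableSet_Ioi
  simp only [abs_of_pos ht.out, neg_mul]

lemma fourier_exp_neg_mul_abs (hc : 0 < c) (w : ℝ) :
    𝓕 (fun t : ℝ ↦ ((exp (-(c * |t|)) : ℝ) : ℂ)) w = (2 * c / ((2 * π * w) ^ 2 + c ^ 2) : ℝ) := by
  set θ : ℝ := 2 * π * w with hθ
  set F : ℝ → ℂ := fun t ↦ 𝐞 (-(t * w)) • ((exp (-(c * |t|)) : ℝ) : ℂ)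
  have hF : Integrable F := by
    simpa [F, mul_comm w] using (fourierIntegral_convergent_iff w).2
      ((integrable_exp_neg_mul_abs hc).ofReal (𝕜 := ℂ))
  have hIic : ∫ t in Iic (0 : ℝ), F t = 1 / (c - θ * Complex.I) := by
    rw [setIntegral_congr_fun (g := fun t : ℝ ↦ Complex.exp ((c - θ * Complex.I) * t))
      measurableSet_Iic fun t ht ↦ ?_, integral_exp_mul_complex_Iic (by simpa using hc)]
    · simp
    · simp only [F, Circle.smul_def, fourierChar_apply, smul_eq_mul, abs_of_nonpos ht.out, hθ]
      push_cast
      rw [← Complex.exp_add]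
      ring_nf
  have hIoi : ∫ t in Ioi (0 : ℝ), F t = 1 / (c + θ * Complex.I) := by
    rw [setIntegral_congr_fun (g := fun t : ℝ ↦ Complex.exp ((-(c + θ * Complex.I)) * t))
      measurableSet_Ioi fun t ht ↦ ?_, integral_exp_mul_complex_Ioi (by simpa using hc)]
    · rw [Complex.ofReal_zero, mul_zero, Complex.exp_zero, neg_div_neg_eq]
    · simp only [F, Circle.smul_def, fourierChar_apply, smul_eq_mul, abs_of_pos ht.out, hθ]
      push_cast
      rw [← Complex.exp_add]
      ring_nf
  rw [fourier_real_eq, ← intervalIntegral.integral_Iic_add_Ioi hF.integrableOn hF.integrableOn,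
    hIic, hIoi]
  have hsub : (c : ℂ) - θ * Complex.I ≠ 0 := fun h ↦ hc.ne' (by simpa using congrArg Complex.re h)
  have hadd : (c : ℂ) + θ * Complex.I ≠ 0 := fun h ↦ hc.ne' (by simpa using congrArg Complex.re h)
  have hprod : ((c : ℂ) - θ * Complex.I) * (c + θ * Complex.I) = θ ^ 2 + c ^ 2 := by
    linear_combination -(θ : ℂ) ^ 2 * Complex.I_sq
  rw [div_add_div _ _ hsub hadd, hprod]
  push_cast
  ring

lemma fourier_fourier_apply [CompleteSpace E] (t : ℝ) : 𝓕 (𝓕 (v : ℝ → E)) t = v (-t) := by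
  rw [← neg_neg t, ← fourierInv_eq_fourier_neg, neg_neg,
    v.continuous.fourierInv_fourier_eq v.integrable (𝓕 v).integrable]

lemma integral_smul_fourier_eq_integral_exp_neg_mul_abs_smul [CompleteSpace E] (hc : 0 < c) :
    ∫ w : ℝ, (2 * c / ((2 * π * w) ^ 2 + c ^ 2)) • 𝓕 v w = ∫ t : ℝ, exp (-(c * |t|)) • v t := by
  have hself : ∫ w : ℝ, 𝓕 (fun t : ℝ ↦ ((exp (-(c * |t|)) : ℝ) : ℂ)) w • 𝓕 v w =
      ∫ t : ℝ, ((exp (-(c * |t|)) : ℝ) : ℂ) • 𝓕 (𝓕 v) t := by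
    simpa using! VectorFourier.integral_fourierIntegral_smul_eq_flip (L := innerₗ ℝ)
      (μ := volume) (ν := volume) continuous_fourierChar continuous_inner
      ((integrable_exp_neg_mul_abs hc).ofReal (𝕜 := ℂ)) (𝓕 v).integrable
  simp only [fourier_exp_neg_mul_abs hc, SchwartzMap.fourier_coe, fourier_fourier_apply,
    Complex.coe_smul] at hself
  rw [SchwartzMap.fourier_coe, hself, ← integral_neg_eq_self]
  simp only [abs_neg, neg_neg]

lemma integral_fourier_eq_apply_zero [CompleteSpace E] : ∫ w : ℝ, 𝓕 v w = v 0 := by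
  rw [← neg_zero, ← fourier_fourier_apply v 0, fourier_real_eq]
  simp [SchwartzMap.fourier_coe]

lemma integral_sq_div_smul_fourier [CompleteSpace E] (hv : Function.Even v) (hc : 0 < c) :
    ∫ w : ℝ, ((2 * π * w) ^ 2 / ((2 * π * w) ^ 2 + c ^ 2)) • 𝓕 v w =
      -∫ t in Ioi (0 : ℝ), exp (-(c * t)) • deriv v t := by
  have hpoisson : Integrable fun w : ℝ ↦ (2 * c / ((2 * π * w) ^ 2 + c ^ 2)) • 𝓕 v w := by
    refine (𝓕 v).integrable.bdd_smul (φ := fun w : ℝ ↦ 2 * c / ((2 * π * w) ^ 2 + c ^ 2))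
      (2 * c / c ^ 2) (Measurable.aestronglyMeasurable (by fun_prop)) (.of_forall fun w ↦ ?_)
    rw [norm_of_nonneg (by positivity)]
    gcongr
    exact le_add_of_nonneg_left (sq_nonneg _)
  have hlaplace : ∫ t : ℝ, exp (-(c * |t|)) • v t =
      (2 : ℝ) • ∫ t in Ioi (0 : ℝ), exp (-(c * t)) • v t := by
    rw [integral_eq_two_smul_integral_Ioi_of_even (fun t ↦ by rw [abs_neg, hv])]
    congr 1
    exact setIntegral_congr_fun measurableSet_Ioi fun t ht ↦ by rw [abs_of_pos ht.out]
  have hsplit (w : ℝ) : ((2 * π * w) ^ 2 / ((2 * π * w) ^ 2 + c ^ 2)) • 𝓕 v w =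
      𝓕 v w - (c / 2) • (2 * c / ((2 * π * w) ^ 2 + c ^ 2)) • 𝓕 v w := by
    nth_rw 2 [← one_smul ℝ (𝓕 v w)]
    rw [smul_smul, ← sub_smul]
    congr 1
    field_simp
    ring
  simp only [hsplit]
  rw [integral_sub (𝓕 v).integrable (hpoisson.fun_smul _), integral_smul,
    integral_smul_fourier_eq_integral_exp_neg_mul_abs_smul v hc, hlaplace,
    integral_fourier_eq_apply_zero, integral_Ioi_exp_neg_mul_smul_deriv v hc.le, smul_smul]
  simp

lemma integral_xCoth_smul_fourier [CompleteSpace E] (hv : Function.Even v) :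
    ∫ w : ℝ, xCoth (π * (2 * π) * w) • 𝓕 v w =
      -∫ t in Ioi (0 : ℝ), (cosh (t / 2) / sinh (t / 2)) • deriv v t := by
  obtain ⟨C, hC⟩ := exists_norm_deriv_le_mul_of_even v hv
  have hsum : ∫ w : ℝ, ((xCoth (π * (2 * π) * w) - 1) / 2) • 𝓕 v w =
      -∫ t in Ioi (0 : ℝ), (exp t - 1)⁻¹ • deriv v t := by
    refine (hasSum_integral_sq_div_sq_add_sq_smul (𝓕 v) _).unique ?_
    simpa only [integral_sq_div_smul_fourier v hv (Nat.cast_add_one_pos _),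
      SchwartzMap.derivCLM_apply] using
      (hasSum_integral_exp_neg_succ_mul_smul
        (SchwartzMap.derivCLM ℝ E v).continuous.aestronglyMeasurable hC).neg
  have hfreq : ∫ w : ℝ, ((xCoth (π * (2 * π) * w) - 1) / 2) • 𝓕 v w =
      (1 / 2 : ℝ) • ((∫ w : ℝ, xCoth (π * (2 * π) * w) • 𝓕 v w) - v 0) := by
    rw [← integral_fourier_eq_apply_zero, ← integral_sub (integrable_xCoth_mul_smul (𝓕 v) _)
      (𝓕 v).integrable, ← integral_smul]
    simp only [div_eq_inv_mul, mul_smul, sub_smul, one_smul]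
  rw [hfreq] at hsum
  rw [integral_Ioi_coth_half_smul_deriv v hv, neg_add, neg_neg, ← smul_neg, ← hsum,
    smul_smul]
  simp

lemma integral_mul_exp_eq_fourier (f : ℝ → ℂ) (ξ : ℝ) :
    ∫ t : ℝ, f t * Complex.exp (-(Complex.I * ξ * t)) = 𝓕 f (ξ / (2 * π)) := by
  rw [fourier_real_eq_integral_exp_smul]
  congr 1 with t
  rw [smul_eq_mul, mul_comm]
  congr 2
  push_cast
  field_simp

lemma integrable_xCoth_smul_fourier_div :
    Integrable fun ξ : ℝ ↦ xCoth (π * ξ) • 𝓕 v (ξ / (2 * π)) := by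
  convert! (integrable_xCoth_mul_smul (𝓕 v) (π * (2 * π))).comp_div two_pi_pos.ne' using 4
  field_simp

lemma integral_xCoth_smul_fourier_div [CompleteSpace E] (hv : Function.Even v) :
    ∫ ξ : ℝ, xCoth (π * ξ) • 𝓕 v (ξ / (2 * π)) =
      -(2 * π) • ∫ t in Ioi (0 : ℝ), (cosh (t / 2) / sinh (t / 2)) • deriv v t := by
  have hscale := Measure.integral_comp_div (fun w ↦ xCoth (π * (2 * π) * w) • 𝓕 v w) (2 * π)
  rw [abs_of_pos two_pi_pos, integral_xCoth_smul_fourier v hv, smul_neg, ← neg_smul] at hscale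
  rw [← hscale]
  congr! 3 with ξ
  field_simp

end Fourier

section CompactSupport

variable {X Y E : Type*} [TopologicalSpace X] [R1Space X] [Zero E]

lemma hasCompactSupport_comp_of_tendsto_atTop [Preorder Y] {f : Y → E} {g : X → Y}
    (hf : f =ᶠ[atTop] 0) (hg : Tendsto g (cocompact X) atTop) : HasCompactSupport (f ∘ g) := by
  rw [hasCompactSupport_iff_eventuallyEq, coclosedCompact_eq_cocompact]
  exact hg.eventually hf

lemma eventuallyEq_zero_atTop_of_hasCompactSupport {f : ℝ → E} (hf : HasCompactSupport f) :
    f =ᶠ[atTop] 0 := by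
  rw [hasCompactSupport_iff_eventuallyEq, coclosedCompact_eq_cocompact] at hf
  exact hf.filter_mono atTop_le_cocompact

end CompactSupport

section SquareSubstitution

variable {E : Type*} [NormedAddCommGroup E] [NormedSpace ℝ E] (f : ℝ → E)

lemma integral_Ioi_two_mul_smul_comp_sq :
    ∫ y in Ioi (0 : ℝ), (2 * y) • f (y ^ 2) = ∫ s in Ioi (0 : ℝ), f s := by
  rw [← integral_comp_rpow_Ioi f two_ne_zero]
  norm_num

lemma integral_Ioi_comp_sq :
    ∫ y in Ioi (0 : ℝ), f (y ^ 2) = ∫ s in Ioi (0 : ℝ), (2 * √s)⁻¹ • f s := by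
  rw [← integral_Ioi_two_mul_smul_comp_sq fun s ↦ (2 * √s)⁻¹ • f s]
  refine setIntegral_congr_fun measurableSet_Ioi fun y (hy : 0 < y) ↦ ?_
  rw [sqrt_sq hy.le, smul_inv_smul₀ (by positivity)]

lemma integral_prod_comp_sq_add_sq :
    ∫ p : ℝ × ℝ, f (p.1 ^ 2 + p.2 ^ 2) = π • ∫ s in Ioi (0 : ℝ), f s := by
  have hpolar (p : ℝ × ℝ) :
      p.1 • f ((polarCoord.symm p).1 ^ 2 + (polarCoord.symm p).2 ^ 2) = p.1 • f (p.1 ^ 2) := by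
    rw [polarCoord_symm_apply, mul_pow, mul_pow, ← mul_add, cos_sq_add_sin_sq, mul_one]
  rw [← integral_comp_polarCoord_symm]
  simp only [hpolar]
  rw [polarCoord_target, Measure.volume_eq_prod, ← Measure.prod_restrict,
    integral_fun_fst (fun r ↦ r • f (r ^ 2)), measureReal_restrict_apply_univ, volume_real_Ioo,
    max_eq_left (by linarith [pi_pos]), ← integral_Ioi_two_mul_smul_comp_sq f]
  simp only [mul_smul, integral_smul]
  rw [smul_smul, sub_neg_eq_add, mul_two]

end SquareSubstitution

section AbelTransform

variable {E : Type*} [NormedAddCommGroup E] [NormedSpace ℝ E] {f : ℝ → E}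

/-- The Abel transform `x ↦ ∫₀^∞ f (x + y²) dy`. -/
noncomputable def abelTransform (f : ℝ → E) (x : ℝ) : E :=
  ∫ y in Ioi (0 : ℝ), f (x + y ^ 2)

lemma abelTransform_eventuallyEq_zero (hf : f =ᶠ[atTop] 0) : abelTransform f =ᶠ[atTop] 0 := by
  obtain ⟨R, hR⟩ := eventually_atTop.1 hf
  filter_upwards [eventually_ge_atTop R] with x hx
  refine integral_eq_zero_of_ae (.of_forall fun y ↦ hR _ ?_)
  linarith [sq_nonneg y]

/-- The kernel `s ↦ 1 / (2 √(-s))` on `s < 0` whose convolution operator is the Abel transform.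
It vanishes for `s ≥ 0`, because `√(-s) = 0` there and `0⁻¹ = 0`. -/
noncomputable def abelKernel (s : ℝ) : ℝ :=
  (2 * √(-s))⁻¹

lemma locallyIntegrable_abelKernel : LocallyIntegrable abelKernel := by
  have hmeas : Measurable abelKernel := by unfold abelKernel; fun_prop
  refine locallyIntegrable_of_norm_le_rpow (C := 1 / 2) (α := 1 / 2) (by simp) (by norm_num)
    (.of_forall fun s ↦ ?_) hmeas.aestronglyMeasurable
  rcases le_or_gt 0 s with hs | hs
  · rw [abelKernel, sqrt_eq_zero_of_nonpos (neg_nonpos.2 hs)]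
    simpa using by positivity
  · rw [abelKernel, norm_of_nonneg (by positivity), norm_of_nonpos hs.le,
      rpow_neg (neg_pos.2 hs).le, ← sqrt_eq_rpow, mul_inv, one_div]

lemma abelTransform_eq_convolution (f : ℝ → E) :
    abelTransform f = abelKernel ⋆[ContinuousLinearMap.lsmul ℝ ℝ] f := by
  ext x
  have hsupp (s : ℝ) (hs : s ∉ Ioi 0) : (2 * √s)⁻¹ • f (x + s) = 0 := by
    rw [sqrt_eq_zero_of_nonpos (not_lt.1 hs), mul_zero, inv_zero, zero_smul]
  rw [convolution_lsmul, ← integral_neg_eq_self, abelTransform,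
    integral_Ioi_comp_sq fun s ↦ f (x + s), setIntegral_eq_integral_of_forall_compl_eq_zero hsupp]
  simp only [abelKernel, neg_neg, sub_neg_eq_add]

lemma contDiff_abelTransform {n : ℕ∞} (hf : ContDiff ℝ n f) (hc : HasCompactSupport f) :
    ContDiff ℝ n (abelTransform f) := by
  rw [abelTransform_eq_convolution]
  exact hc.contDiff_convolution_right _ locallyIntegrable_abelKernel hf

lemma hasDerivAt_abelTransform (hf : ContDiff ℝ 1 f) (hc : HasCompactSupport f) (x : ℝ) :
    HasDerivAt (abelTransform f) (abelTransform (deriv f) x) x := by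
  simp only [abelTransform_eq_convolution]
  exact hc.hasDerivAt_convolution_right _ locallyIntegrable_abelKernel hf x

lemma tendsto_sq_add_sq_cocompact_atTop :
    Tendsto (fun p : ℝ × ℝ ↦ p.1 ^ 2 + p.2 ^ 2) (cocompact (ℝ × ℝ)) atTop := by
  refine tendsto_atTop_mono (fun p ↦ ?_)
    ((tendsto_pow_atTop two_ne_zero).comp (tendsto_norm_cocompact_atTop (E := ℝ × ℝ)))
  rw [Function.comp_apply, Prod.norm_def, ← sq_abs p.1, ← sq_abs p.2]
  rcases max_choice ‖p.1‖ ‖p.2‖ with h | h <;> rw [h] <;> simp [sq_nonneg]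

lemma integral_Ioi_abelTransform_sq (hf : Continuous f) (hc : HasCompactSupport f) :
    ∫ s in Ioi (0 : ℝ), abelTransform f (s ^ 2) = (π / 4) • ∫ s in Ioi (0 : ℝ), f s := by
  have hint : Integrable (fun p : ℝ × ℝ ↦ f (p.1 ^ 2 + p.2 ^ 2)) (volume.prod volume) :=
    Continuous.integrable_of_hasCompactSupport (by fun_prop)
      (hasCompactSupport_comp_of_tendsto_atTop (eventuallyEq_zero_atTop_of_hasCompactSupport hc)
        tendsto_sq_add_sq_cocompact_atTop)
  have hslice (x : ℝ) : ∫ y, f (x ^ 2 + y ^ 2) = (2 : ℝ) • abelTransform f (x ^ 2) :=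
    integral_eq_two_smul_integral_Ioi_of_even (f := fun y ↦ f (x ^ 2 + y ^ 2)) fun y ↦ by
      simp only [neg_sq]
  have hplane := integral_prod_comp_sq_add_sq f
  rw [Measure.volume_eq_prod, integral_prod _ hint] at hplane
  simp only [hslice] at hplane
  rw [integral_smul, integral_eq_two_smul_integral_Ioi_of_even fun x ↦ by rw [neg_sq],
    smul_smul] at hplane
  rw [div_eq_inv_mul, mul_smul, ← hplane, smul_smul]
  norm_num

lemma integral_Ioi_abelTransform_deriv_sq [CompleteSpace E] (hf : ContDiff ℝ 1 f)
    (hc : HasCompactSupport f) :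
    ∫ s in Ioi (0 : ℝ), abelTransform (deriv f) (s ^ 2) = -(π / 4) • f 0 := by
  rw [integral_Ioi_abelTransform_sq (hf.continuous_deriv le_rfl) hc.deriv,
    hc.integral_Ioi_deriv_eq hf, smul_neg, neg_smul]

end AbelTransform

section HyperbolicAbel

variable {E : Type*} [NormedAddCommGroup E] [NormedSpace ℝ E] {f : ℝ → E}

/-- The Abel transform of `f` in the geodesic coordinate `t`, where `4 sinh² (t / 2)` is the
point-pair invariant of two points at hyperbolic distance `t`; it takes `a` to `v` in the notation
of the theorem. -/
noncomputable def hyperbolicAbel (f : ℝ → E) (t : ℝ) : E :=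
  (4 * cosh (t / 2)) • abelTransform f (4 * sinh (t / 2) ^ 2)

lemma even_hyperbolicAbel (f : ℝ → E) : (hyperbolicAbel f).Even := fun t ↦ by
  simp [hyperbolicAbel, neg_div]

lemma hyperbolicAbel_congr {g : ℝ → E} (hfg : EqOn f g (Ici 0)) :
    hyperbolicAbel f = hyperbolicAbel g := by
  ext t
  have hcongr (y : ℝ) : f (4 * sinh (t / 2) ^ 2 + y ^ 2) = g (4 * sinh (t / 2) ^ 2 + y ^ 2) :=
    hfg (mem_Ici.2 (by positivity))
  simp only [hyperbolicAbel, abelTransform, hcongr]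

lemma hyperbolicAbel_ofReal (f : ℝ → ℝ) (t : ℝ) :
    hyperbolicAbel (fun x ↦ (f x : ℂ)) t = (hyperbolicAbel f t : ℝ) := by
  simp only [hyperbolicAbel, abelTransform, integral_complex_ofReal, Complex.real_smul,
    smul_eq_mul, Complex.ofReal_mul]

lemma tendsto_four_mul_sinh_half_sq_cocompact_atTop :
    Tendsto (fun t : ℝ ↦ 4 * sinh (t / 2) ^ 2) (cocompact ℝ) atTop := by
  refine tendsto_atTop_mono (fun t ↦ ?_)
    ((tendsto_pow_atTop two_ne_zero).comp (tendsto_norm_cocompact_atTop (E := ℝ)))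
  have hsinh : |t| / 2 ≤ |sinh (t / 2)| := by
    rw [abs_sinh, abs_div, abs_two]
    exact self_le_sinh_iff.2 (by positivity)
  rw [Function.comp_apply, norm_eq_abs, ← sq_abs (sinh _)]
  nlinarith [abs_nonneg t]

lemma hasCompactSupport_smul_abelTransform_sinh (hc : HasCompactSupport f) (g : ℝ → ℝ) :
    HasCompactSupport fun t ↦ g t • abelTransform f (4 * sinh (t / 2) ^ 2) :=
  (hasCompactSupport_comp_of_tendsto_atTop (abelTransform_eventuallyEq_zero
    (eventuallyEq_zero_atTop_of_hasCompactSupport hc))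
    tendsto_four_mul_sinh_half_sq_cocompact_atTop).smul_left

lemma contDiff_smul_abelTransform_sinh {n : ℕ∞} (hf : ContDiff ℝ n f) (hc : HasCompactSupport f)
    {g : ℝ → ℝ} (hg : ContDiff ℝ n g) :
    ContDiff ℝ n fun t ↦ g t • abelTransform f (4 * sinh (t / 2) ^ 2) := by
  have := contDiff_abelTransform hf hc
  fun_prop

lemma hasDerivAt_smul_abelTransform_sinh (hf : ContDiff ℝ 1 f) (hc : HasCompactSupport f)
    {g : ℝ → ℝ} {g' t : ℝ} (hg : HasDerivAt g g' t) :
    HasDerivAt (fun t ↦ g t • abelTransform f (4 * sinh (t / 2) ^ 2))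
      (g' • abelTransform f (4 * sinh (t / 2) ^ 2) +
        (g t * (4 * sinh (t / 2) * cosh (t / 2))) •
          abelTransform (deriv f) (4 * sinh (t / 2) ^ 2)) t := by
  have hinner : HasDerivAt (fun t : ℝ ↦ 4 * sinh (t / 2) ^ 2)
      (4 * sinh (t / 2) * cosh (t / 2)) t := by
    convert! (((hasDerivAt_id t).div_const 2).sinh.pow 2).const_mul 4 using 1
    simp only [Nat.cast_ofNat, id_eq, Nat.add_one_sub_one, pow_one, one_div]
    ring
  convert! hg.smul ((hasDerivAt_abelTransform hf hc _).scomp t hinner) using 1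
  rw [smul_smul, add_comm]
  rfl

lemma coth_half_smul_deriv_hyperbolicAbel (hf : ContDiff ℝ 1 f) (hc : HasCompactSupport f)
    {t : ℝ} (ht : t ≠ 0) :
    (cosh (t / 2) / sinh (t / 2)) • deriv (hyperbolicAbel f) t =
      deriv (fun t ↦ (4 * sinh (t / 2)) • abelTransform f (4 * sinh (t / 2) ^ 2)) t +
        (16 * cosh (t / 2)) • abelTransform (deriv f) (4 * sinh (t / 2) ^ 2) := by
  have hsinh : sinh (t / 2) ≠ 0 := sinh_ne_zero.2 (by positivity)
  have hhalf : HasDerivAt (fun t : ℝ ↦ t / 2) (1 / 2) t := (hasDerivAt_id' t).div_const 2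
  have hcosh_deriv : HasDerivAt (hyperbolicAbel f) _ t :=
    hasDerivAt_smul_abelTransform_sinh hf hc (hhalf.cosh.const_mul 4)
  have hsinh_deriv := hasDerivAt_smul_abelTransform_sinh hf hc (hhalf.sinh.const_mul 4)
  rw [hcosh_deriv.deriv, hsinh_deriv.deriv, smul_add, smul_smul, smul_smul, add_assoc, ← add_smul]
  congr 2
  · field_simp
  · field_simp
    rw [cosh_sq]
    ring

lemma integral_Ioi_cosh_half_smul_comp_sinh_half (g : ℝ → E) :
    ∫ t in Ioi (0 : ℝ), cosh (t / 2) • g (2 * sinh (t / 2)) = ∫ s in Ioi (0 : ℝ), g s := by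
  have hderiv (t : ℝ) : HasDerivAt (fun t ↦ 2 * sinh (t / 2)) (cosh (t / 2)) t := by
    convert! (((hasDerivAt_id' t).div_const 2).sinh).const_mul 2 using 1
    ring
  have hinj : Function.Injective fun t ↦ 2 * sinh (t / 2) := fun s t hst ↦ by simpa using hst
  have himage : (fun t ↦ 2 * sinh (t / 2)) '' Ioi 0 = Ioi 0 := by
    refine Subset.antisymm (image_subset_iff.2 fun t ht ↦ by simpa using ht) fun s hs ↦ ?_
    exact ⟨2 * arsinh (s / 2), by simpa using hs, by simp [mul_div_cancel₀]⟩
  have hsubst := integral_image_eq_integral_abs_deriv_smul measurableSet_Ioi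
    (fun t _ ↦ (hderiv t).hasDerivWithinAt) hinj.injOn g (s := Ioi 0)
  simpa only [himage, abs_of_pos (cosh_pos _)] using hsubst.symm

lemma integral_Ioi_coth_half_smul_deriv_hyperbolicAbel [CompleteSpace E] (hf : ContDiff ℝ 1 f)
    (hc : HasCompactSupport f) :
    ∫ t in Ioi (0 : ℝ), (cosh (t / 2) / sinh (t / 2)) • deriv (hyperbolicAbel f) t =
      -(4 * π) • f 0 := by
  set h : ℝ → E := fun t ↦ (4 * sinh (t / 2)) • abelTransform f (4 * sinh (t / 2) ^ 2)
  set k : ℝ → E := fun t ↦ (16 * cosh (t / 2)) • abelTransform (deriv f) (4 * sinh (t / 2) ^ 2)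
  have hh : ContDiff ℝ 1 h := contDiff_smul_abelTransform_sinh hf hc (by fun_prop)
  have hh_supp : HasCompactSupport h := hasCompactSupport_smul_abelTransform_sinh hc _
  have hk : Integrable k :=
    (contDiff_smul_abelTransform_sinh (n := 0) (contDiff_zero.2 (hf.continuous_deriv le_rfl))
      hc.deriv (by fun_prop)).continuous.integrable_of_hasCompactSupport
      (hasCompactSupport_smul_abelTransform_sinh hc.deriv _)
  have hintegral_h : ∫ t in Ioi (0 : ℝ), deriv h t = 0 := by
    rw [hh_supp.integral_Ioi_deriv_eq hh]
    simp [h]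
  have hintegral_k : ∫ t in Ioi (0 : ℝ), k t = -(4 * π) • f 0 := by
    have hsubst := integral_Ioi_cosh_half_smul_comp_sinh_half
      fun s ↦ abelTransform (deriv f) (s ^ 2)
    rw [integral_Ioi_abelTransform_deriv_sq hf hc] at hsubst
    simp only [mul_pow, show (2 : ℝ) ^ 2 = 4 by norm_num] at hsubst
    simp only [k, mul_smul, integral_smul]
    rw [hsubst, smul_smul]
    congr 1
    ring
  rw [setIntegral_congr_fun measurableSet_Ioi fun t ht ↦
    coth_half_smul_deriv_hyperbolicAbel hf hc ht.out.ne', integral_add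
    ((hh.continuous_deriv le_rfl).integrable_of_hasCompactSupport hh_supp.deriv).integrableOn
    hk.integrableOn, hintegral_h, hintegral_k, zero_add]

end HyperbolicAbel

section Inversion

variable {E : Type*} [NormedAddCommGroup E] [NormedSpace ℂ E] {f : ℝ → E}

lemma exists_schwartzMap_coe_eq_hyperbolicAbel (hf : ContDiff ℝ ∞ f) (hc : HasCompactSupport f) :
    ∃ w : 𝓢(ℝ, E), ⇑w = hyperbolicAbel f :=
  ⟨(hasCompactSupport_smul_abelTransform_sinh hc _).toSchwartzMap
    (contDiff_smul_abelTransform_sinh hf hc (by fun_prop)), rfl⟩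

lemma integrable_xCoth_smul_fourier_hyperbolicAbel (hf : ContDiff ℝ ∞ f)
    (hc : HasCompactSupport f) :
    Integrable fun ξ : ℝ ↦ xCoth (π * ξ) • 𝓕 (hyperbolicAbel f) (ξ / (2 * π)) := by
  obtain ⟨w, hw⟩ := exists_schwartzMap_coe_eq_hyperbolicAbel hf hc
  simpa only [SchwartzMap.fourier_coe, hw] using integrable_xCoth_smul_fourier_div w

lemma integral_xCoth_smul_fourier_hyperbolicAbel [CompleteSpace E] (hf : ContDiff ℝ ∞ f)
    (hc : HasCompactSupport f) :
    ∫ ξ : ℝ, xCoth (π * ξ) • 𝓕 (hyperbolicAbel f) (ξ / (2 * π)) = (8 * π ^ 2) • f 0 := by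
  obtain ⟨w, hw⟩ := exists_schwartzMap_coe_eq_hyperbolicAbel hf hc
  have hcoth := integral_xCoth_smul_fourier_div w (hw ▸ even_hyperbolicAbel f)
  rw [SchwartzMap.fourier_coe, hw,
    integral_Ioi_coth_half_smul_deriv_hyperbolicAbel (hf.of_le (by simp)) hc, smul_smul] at hcoth
  rw [hcoth]
  congr 1
  ring

end Inversion

section CutOff

lemma mul_smoothTransition_add_pos {c : ℝ} (hc : 0 < c) (x : ℝ) :
    0 < x * smoothTransition (2 * x / c + 1) + c := by
  rcases le_or_gt (2 * x / c + 1) 0 with hx | hx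
  · rwa [smoothTransition.zero_of_nonpos hx, mul_zero, zero_add]
  · have hlower : -c < 2 * x := by
      rw [← neg_lt_iff_pos_add, lt_div_iff₀ hc] at hx
      linarith
    have h_nonneg := smoothTransition.nonneg (2 * x / c + 1)
    have h_le_one := smoothTransition.le_one (2 * x / c + 1)
    nlinarith

lemma exists_contDiff_eqOn_Ici_div_sqrt {φ : ℝ → ℝ} {c : ℝ} {n : ℕ∞} (hφ : ContDiff ℝ n φ)
    (hsupp : HasCompactSupport φ) (hc : 0 < c) :
    ∃ f : ℝ → ℝ, ContDiff ℝ n f ∧ HasCompactSupport f ∧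
      EqOn f (fun x ↦ φ x / √(x + c)) (Ici 0) := by
  refine ⟨fun x ↦ φ x * (√(x * smoothTransition (2 * x / c + 1) + c))⁻¹, ?_, hsupp.mul_right,
    fun x (hx : 0 ≤ x) ↦ ?_⟩
  · have hpos := mul_smoothTransition_add_pos hc
    have hsmooth : ContDiff ℝ n fun x ↦ smoothTransition (2 * x / c + 1) :=
      smoothTransition.contDiff.comp (by fun_prop)
    exact hφ.mul ((((contDiff_id.mul hsmooth).add contDiff_const).sqrt fun x ↦ (hpos x).ne').inv
      fun x ↦ (sqrt_pos.2 (hpos x)).ne')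
  · beta_reduce
    rw [smoothTransition.one_of_one_le (le_add_of_nonneg_left (by positivity)), mul_one,
      div_eq_mul_inv]

end CutOff

/-- Lemma `calculPhi0`: for a smooth compactly supported `φ`, with
`a t = φ t / √(t+4)`, `v t = 4 cosh(t/2) ∫₀^∞ a(4 sinh²(t/2) + y²) dy`,
and `u` the Fourier transform of `v`, one has
`φ 0 = (1/(4π)) ∫ ξ u(ξ) coth(πξ) dξ`, the integrand extended by `1/π` at `ξ = 0`,
and the integral converges absolutely. -/
theorem stmt_0 (φ : ℝ → ℝ) (hφ : ContDiff ℝ (⊤ : ℕ∞) φ) (hsupp : HasCompactSupport φ)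
    (a v : ℝ → ℝ) (u : ℝ → ℂ) (K : ℝ → ℝ)
    (ha : ∀ t, a t = φ t / Real.sqrt (t + 4))
    (hv : ∀ t, v t = 4 * Real.cosh (t / 2) *
      ∫ y in Set.Ioi (0 : ℝ), a (4 * Real.sinh (t / 2) ^ 2 + y ^ 2))
    (hu : ∀ ξ : ℝ, u ξ = ∫ t : ℝ, (v t : ℂ) * Complex.exp (-(Complex.I * ξ * t)))
    (hK : ∀ ξ : ℝ, K ξ = if ξ = 0 then 1 / Real.pi
      else ξ * Real.cosh (Real.pi * ξ) / Real.sinh (Real.pi * ξ)) :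
    Integrable (fun ξ : ℝ => (K ξ : ℂ) * u ξ) ∧
    (φ 0 : ℂ) = (1 / (4 * Real.pi)) * ∫ ξ : ℝ, (K ξ : ℂ) * u ξ := by
  obtain ⟨f, hf, hf_supp, hf_eq⟩ := exists_contDiff_eqOn_Ici_div_sqrt hφ hsupp four_pos
  set F : ℝ → ℂ := fun x ↦ f x
  have hF : ContDiff ℝ ∞ F := Complex.ofRealCLM.contDiff.comp hf
  have hF_supp : HasCompactSupport F := hf_supp.comp_left (g := Complex.ofReal) rfl
  have hF_zero : F 0 = φ 0 / 2 := by
    have hsqrt : √(4 : ℝ) = 2 := (sqrt_eq_iff_mul_self_eq_of_pos two_pos).2 (by norm_num)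
    simp only [F, hf_eq self_mem_Ici, zero_add, hsqrt, Complex.ofReal_div, Complex.ofReal_ofNat]
  have hv_eq (t : ℝ) : (v t : ℂ) = hyperbolicAbel F t := by
    rw [hyperbolicAbel_ofReal, hyperbolicAbel_congr (hf_eq.trans fun x _ ↦ (ha x).symm), hv]
    rfl
  have hKu (ξ : ℝ) : (K ξ : ℂ) * u ξ =
      π⁻¹ • (xCoth (π * ξ) • 𝓕 (hyperbolicAbel F) (ξ / (2 * π))) := by
    have hK_eq : π⁻¹ * xCoth (π * ξ) = K ξ := (inv_mul_xCoth_mul pi_ne_zero ξ).trans (hK ξ).symm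
    rw [smul_smul, hK_eq, Complex.real_smul, ← integral_mul_exp_eq_fourier, hu]
    simp only [hv_eq]
  simp only [hKu]
  refine ⟨(integrable_xCoth_smul_fourier_hyperbolicAbel hF hF_supp).fun_smul π⁻¹, ?_⟩
  rw [integral_smul, integral_xCoth_smul_fourier_hyperbolicAbel hF hF_supp, hF_zero,
    Complex.real_smul, Complex.real_smul]
  push_cast
  field_simp
  ring
end

section
/- Let u : ℝ → ℝ be an even Schwartz function and define v(t) := (1/(2π))·∫_ℝ u(ξ)·e^{iξt} dξ. Then ∫₀^∞ v′(t)/sinh(t) dt = −(1/4)·∫_ℝ ξ·u(ξ)·tanh(πξ/2) dξ, both integrals converging absolutely. -/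
open MeasureTheory

/-!
Since `u` is even, `v` is a cosine transform, so `2π v'(t) = -∫ sin (ξ t) ξ u(ξ) dξ`. Dividing by
`sinh t` and exchanging the integrals reduces the theorem to
`∫₀^∞ sin (x t) / sinh t dt = (π / 2) tanh (π x / 2)`; the exchange is legitimate because
`|sin (ξ t)| / sinh t ≤ |ξ| t / sinh t` and `t / sinh t` decays exponentially.

For the sine integral, expand `1 / sinh t = ∑ 2 exp (-(2n+1) t)` and integrate termwise. The result
`∑ 2x / ((2n+1)² + x²)` is the partial fraction expansion of `(π / 2) tanh (π x / 2)`: it is the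
part of the Mittag-Leffler series of the cotangent at `i x` over odd integers, which the duplication
formula `2 cot 2w = cot w - tan w` isolates.
-/

open Set Filter

section SeriesExpansions

open Complex

lemma hasSum_cotTerm {z : ℂ} (hz : z ∈ integerComplement) :
    HasSum (cotTerm z) (Real.pi * cot (Real.pi * z) - 1 / z) :=
  (summable_cotTerm hz).hasSum_iff_tendsto_nat.mpr (tendsto_logDeriv_euler_cot_sub hz)

lemma div_two_mem_integerComplement {z : ℂ} (hz : z ∈ integerComplement) :
    z / 2 ∈ integerComplement := by
  rintro ⟨n, hn⟩
  exact hz ⟨n * 2, by push_cast; rw [hn]; ring⟩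

lemma two_mul_cot_two_mul {w : ℂ} (hs : sin w ≠ 0) (hc : cos w ≠ 0) :
    2 * cot (2 * w) = cot w - tan w := by
  rw [cot_eq_cos_div_sin, cot_eq_cos_div_sin, tan_eq_sin_div_cos, sin_two_mul, cos_two_mul']
  field_simp

lemma cotTerm_two_mul_add_one (z : ℂ) (n : ℕ) :
    cotTerm z (2 * n + 1) = 1 / 2 * cotTerm (z / 2) n := by
  have sub_eq : z - ((2 * n + 1 : ℕ) + 1) = 2 * (z / 2 - (n + 1)) := by push_cast; ring
  have add_eq : z + ((2 * n + 1 : ℕ) + 1) = 2 * (z / 2 + (n + 1)) := by push_cast; ring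
  simp only [cotTerm, sub_eq, add_eq, one_div, mul_inv]
  rw [mul_add]

lemma hasSum_cotTerm_two_mul {z : ℂ} (hz : z ∈ integerComplement) :
    HasSum (fun n : ℕ ↦ cotTerm z (2 * n)) (-(Real.pi / 2 * tan (Real.pi * z / 2))) := by
  have even_summable : Summable fun n : ℕ ↦ cotTerm z (2 * n) :=
    (summable_cotTerm hz).comp_injective (mul_right_injective₀ two_ne_zero)
  have odd_hasSum : HasSum (fun n : ℕ ↦ cotTerm z (2 * n + 1))
      (1 / 2 * (Real.pi * cot (Real.pi * (z / 2)) - 1 / (z / 2))) := by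
    simpa only [cotTerm_two_mul_add_one] using
      (hasSum_cotTerm (div_two_mem_integerComplement hz)).mul_left (1 / 2)
  have total := (even_summable.hasSum.even_add_odd odd_hasSum).unique (hasSum_cotTerm hz)
  have duplication : 2 * cot (Real.pi * z) =
      cot (Real.pi * z / 2) - tan (Real.pi * z / 2) := by
    have sin_ne : 2 * sin (Real.pi * z / 2) * cos (Real.pi * z / 2) ≠ 0 := by
      rw [← sin_two_mul, mul_div_cancel₀ _ two_ne_zero]
      exact sin_pi_mul_ne_zero hz
    rw [← two_mul_cot_two_mul (by grind) (by grind), mul_div_cancel₀ _ two_ne_zero]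
  convert even_summable.hasSum using 1
  rw [← mul_div_assoc] at total
  linear_combination (-1 : ℂ) * total - Real.pi / 2 * duplication

lemma hasSum_tanh (x : ℝ) :
    HasSum (fun n : ℕ ↦ 2 * (x / ((2 * n + 1) ^ 2 + x ^ 2)))
      (Real.pi / 2 * Real.tanh (Real.pi * x / 2)) := by
  rcases eq_or_ne x 0 with rfl | hx
  · simp
  have hz : I * x ∈ integerComplement := by
    rintro ⟨n, hn⟩
    exact hx (by simpa using congrArg im hn.symm)
  rw [← Complex.hasSum_ofReal]
  convert! (hasSum_cotTerm_two_mul hz).mul_left I using 1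
  · funext n
    have denom_ne : ((2 * n + 1) ^ 2 + x ^ 2 : ℂ) ≠ 0 := by
      exact_mod_cast (by positivity : ((2 * n + 1) ^ 2 + x ^ 2 : ℝ) ≠ 0)
    have factor : (I * x + (2 * n + 1)) * (I * x - (2 * n + 1)) =
        -((2 * n + 1) ^ 2 + x ^ 2 : ℂ) := by
      linear_combination (x : ℂ) ^ 2 * I_sq
    rw [cotTerm_identity hz]
    push_cast
    rw [factor]
    field_simp
    rw [I_sq]
    ring
  · rw [show (Real.pi * (I * x) / 2 : ℂ) = Real.pi * x / 2 * I by ring, tan_mul_I]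
    push_cast
    linear_combination (Real.pi / 2 * tanh (Real.pi * x / 2)) * I_sq

end SeriesExpansions

section SineIntegrals

open Real

lemma hasSum_inv_sinh {t : ℝ} (ht : 0 < t) :
    HasSum (fun n : ℕ ↦ 2 * exp (-(2 * n + 1) * t)) (sinh t)⁻¹ := by
  have ratio_lt_one : exp (-2 * t) < 1 := exp_lt_one_iff.mpr (by linarith)
  have geometric :=
    (hasSum_geometric_of_lt_one (exp_pos _).le ratio_lt_one).mul_left (2 * exp (-t))
  convert! geometric using 1
  · funext n
    rw [← exp_nat_mul, mul_assoc, ← exp_add]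
    ring_nf
  · have sinh_mul_exp_neg : sinh t * (2 * exp (-t)) = 1 - exp (-2 * t) := by
      have exp_mul_exp_neg : exp t * exp (-t) = 1 := by rw [← exp_add, add_neg_cancel, exp_zero]
      have exp_neg_two_mul : exp (-2 * t) = exp (-t) * exp (-t) := by rw [← exp_add]; ring_nf
      rw [sinh_eq, exp_neg_two_mul]
      linear_combination exp_mul_exp_neg
    have sinh_ne := (sinh_pos_iff.mpr ht).ne'
    rw [← sinh_mul_exp_neg]
    field_simp

lemma integral_Ioi_sin_mul_exp_neg {a : ℝ} (ha : 0 < a) (x : ℝ) :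
    ∫ t in Ioi 0, sin (x * t) * exp (-a * t) = x / (a ^ 2 + x ^ 2) := by
  have hre : (⟨-a, x⟩ : ℂ).re < 0 := neg_lt_zero.mpr ha
  have im_integral := congrArg Complex.im (integral_exp_mul_complex_Ioi hre 0)
  rw [← RCLike.im_eq_complex_im, ← integral_im (integrableOn_exp_mul_complex_Ioi hre 0)]
    at im_integral
  convert im_integral using 1
  · simp [Complex.exp_im, mul_comm]
  · simp [Complex.normSq_apply, pow_two, neg_div]

lemma div_sinh_le_two_mul_exp_neg {t : ℝ} (ht : 0 < t) : t / sinh t ≤ 2 * exp (-(1 / 2) * t) := by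
  have self_le : t / 2 ≤ sinh (t / 2) := self_le_sinh_iff.mpr (by positivity)
  have exp_le : exp (t / 2) / 2 ≤ cosh (t / 2) := by
    rw [cosh_eq]
    linarith [exp_pos (-(t / 2))]
  have exp_mul : exp (-(1 / 2) * t) * exp (t / 2) = 1 := by
    rw [← exp_add, exp_eq_one_iff]
    ring
  rw [div_le_iff₀ (sinh_pos_iff.mpr ht)]
  calc t = 2 * exp (-(1 / 2) * t) * (2 * (t / 2) * (exp (t / 2) / 2)) := by
        linear_combination (-t) * exp_mul
    _ ≤ 2 * exp (-(1 / 2) * t) * (2 * sinh (t / 2) * cosh (t / 2)) := by gcongr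
    _ = 2 * exp (-(1 / 2) * t) * sinh t := by
        rw [← sinh_two_mul, mul_div_cancel₀ _ two_ne_zero]

lemma integrableOn_div_sinh : IntegrableOn (fun t ↦ t / sinh t) (Ioi 0) := by
  refine ((exp_neg_integrableOn_Ioi 0 one_half_pos).const_mul 2).mono'
    (Measurable.aestronglyMeasurable (by fun_prop)) ?_
  filter_upwards [ae_restrict_mem measurableSet_Ioi] with t (ht : 0 < t)
  rw [norm_of_nonneg (div_nonneg ht.le (sinh_pos_iff.mpr ht).le)]
  exact div_sinh_le_two_mul_exp_neg ht

lemma abs_sin_mul_div_sinh_le (x : ℝ) {t : ℝ} (ht : 0 < t) :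
    |sin (x * t) / sinh t| ≤ |x| * (t / sinh t) := by
  have hsinh : 0 < sinh t := sinh_pos_iff.mpr ht
  calc |sin (x * t) / sinh t| = |sin (x * t)| / sinh t := by rw [abs_div, abs_of_pos hsinh]
    _ ≤ |x * t| / sinh t := by gcongr ?_ / _; exact abs_sin_le_abs
    _ = |x| * (t / sinh t) := by rw [abs_mul, abs_of_pos ht, mul_div_assoc]

lemma integrableOn_sin_mul_div_sinh (x : ℝ) :
    IntegrableOn (fun t ↦ sin (x * t) / sinh t) (Ioi 0) := by
  refine (integrableOn_div_sinh.const_mul |x|).mono'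
    (Measurable.aestronglyMeasurable (by fun_prop)) ?_
  filter_upwards [ae_restrict_mem measurableSet_Ioi] with t ht
  exact abs_sin_mul_div_sinh_le x ht

theorem integral_Ioi_sin_mul_div_sinh (x : ℝ) :
    ∫ t in Ioi 0, sin (x * t) / sinh t = π / 2 * tanh (π * x / 2) := by
  have expansion {t : ℝ} (ht : 0 < t) (c : ℝ) :
      HasSum (fun n : ℕ ↦ 2 * (c * exp (-(2 * n + 1) * t))) (c / sinh t) := by
    simpa only [mul_left_comm, div_eq_mul_inv] using (hasSum_inv_sinh ht).mul_left c
  have termwise : HasSum (fun n : ℕ ↦ ∫ t in Ioi 0, 2 * (sin (x * t) * exp (-(2 * n + 1) * t)))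
      (∫ t in Ioi 0, sin (x * t) / sinh t) := by
    refine hasSum_integral_of_dominated_convergence
      (fun n t ↦ 2 * (|sin (x * t)| * exp (-(2 * n + 1) * t)))
      (fun n ↦ by fun_prop) (fun n ↦ .of_forall fun t ↦ by simp) ?_ ?_ ?_
    · filter_upwards [ae_restrict_mem measurableSet_Ioi] with t ht
      exact (expansion ht _).summable
    · refine (integrableOn_sin_mul_div_sinh x).abs.congr ?_
      filter_upwards [ae_restrict_mem measurableSet_Ioi] with t ht
      rw [(expansion ht _).tsum_eq, abs_div, abs_of_pos (sinh_pos_iff.mpr ht)]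
    · filter_upwards [ae_restrict_mem measurableSet_Ioi] with t ht
      exact expansion ht _
  refine termwise.unique ?_
  convert! hasSum_tanh x using 2 with n
  rw [integral_const_mul, integral_Ioi_sin_mul_exp_neg (by positivity)]

end SineIntegrals

section Transforms

open Real

section RealScalars

variable {E : Type*} [NormedAddCommGroup E] [NormedSpace ℝ E] {μ : Measure ℝ}

lemma integrable_smul_of_integrable_sq_smul {u : ℝ → E} (hu : Integrable u μ)
    (hu_sq : Integrable (fun ξ ↦ ξ ^ 2 • u ξ) μ) : Integrable (fun ξ ↦ ξ • u ξ) μ := by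
  refine (hu.norm.add hu_sq.norm).mono' (aestronglyMeasurable_id.smul hu.1) (.of_forall fun ξ ↦ ?_)
  have abs_le : |ξ| ≤ 1 + |ξ| ^ 2 := by nlinarith [sq_nonneg (|ξ| - 1), abs_nonneg ξ]
  calc ‖ξ • u ξ‖ = |ξ| * ‖u ξ‖ := norm_smul _ _
    _ ≤ (1 + |ξ| ^ 2) * ‖u ξ‖ := by gcongr
    _ = ‖u ξ‖ + ‖ξ ^ 2 • u ξ‖ := by rw [norm_smul, norm_pow, norm_eq_abs]; ring

lemma integrable_pow_smul_schwartzMap (f : SchwartzMap ℝ E) (k : ℕ) :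
    Integrable fun ξ : ℝ ↦ ξ ^ k • f ξ :=
  (f.integrable_pow_mul volume k).mono (by fun_prop) (.of_forall fun ξ ↦ by simp [norm_smul])

lemma integrable_prod_sin_mul_div_sinh_smul [SFinite μ] {w : ℝ → E}
    (hw : AEStronglyMeasurable w μ) (hw_moment : Integrable (fun ξ ↦ ξ • w ξ) μ) :
    Integrable (Function.uncurry fun t ξ ↦ (sin (ξ * t) / sinh t) • w ξ)
      ((volume.restrict (Ioi 0)).prod μ) := by
  refine (Integrable.mul_prod integrableOn_div_sinh hw_moment.norm).mono' ?_ ?_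
  · have kernel_measurable : Measurable fun p : ℝ × ℝ ↦ sin (p.2 * p.1) / sinh p.1 := by fun_prop
    exact kernel_measurable.aestronglyMeasurable.smul hw.comp_snd
  · have fst_pos : ∀ᵐ p : ℝ × ℝ ∂(volume.restrict (Ioi 0)).prod μ, p.1 ∈ Ioi 0 :=
      Measure.quasiMeasurePreserving_fst.ae (ae_restrict_mem measurableSet_Ioi)
    filter_upwards [fst_pos] with ⟨t, ξ⟩ ht
    calc ‖(sin (ξ * t) / sinh t) • w ξ‖ = |sin (ξ * t) / sinh t| * ‖w ξ‖ := norm_smul _ _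
      _ ≤ |ξ| * (t / sinh t) * ‖w ξ‖ := by gcongr; exact abs_sin_mul_div_sinh_le ξ ht
      _ = t / sinh t * ‖ξ • w ξ‖ := by rw [norm_smul, norm_eq_abs]; ring

lemma hasDerivAt_integral_cos_mul_smul {u : ℝ → E} (hu : Integrable u μ)
    (hu_moment : Integrable (fun ξ ↦ ξ • u ξ) μ) (t : ℝ) :
    HasDerivAt (fun t ↦ ∫ ξ, cos (ξ * t) • u ξ ∂μ) (-∫ ξ, sin (ξ * t) • ξ • u ξ ∂μ) t := by
  have cos_mul_measurable (s : ℝ) : AEStronglyMeasurable (fun ξ ↦ cos (ξ * s) • u ξ) μ :=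
    (by fun_prop : Continuous fun ξ ↦ cos (ξ * s)).aestronglyMeasurable.smul hu.1
  have cos_mul_integrable : Integrable (fun ξ ↦ cos (ξ * t) • u ξ) μ :=
    hu.mono (cos_mul_measurable t) <| .of_forall fun ξ ↦ by
      rw [norm_smul]
      exact mul_le_of_le_one_left (norm_nonneg _) (abs_cos_le_one _)
  rw [← integral_neg]
  refine (hasDerivAt_integral_of_dominated_loc_of_deriv_le
    (F' := fun s ξ ↦ -(sin (ξ * s) • ξ • u ξ)) univ_mem (.of_forall cos_mul_measurable)
    cos_mul_integrable ?_ (.of_forall fun ξ s _ ↦ ?_) hu_moment.norm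
    (.of_forall fun ξ s _ ↦ ?_)).2
  · exact ((by fun_prop : Continuous fun ξ ↦ sin (ξ * t)).aestronglyMeasurable.smul
      hu_moment.1).neg
  · rw [norm_neg, norm_smul]
    exact mul_le_of_le_one_left (norm_nonneg _) (abs_sin_le_one _)
  · have hcos : HasDerivAt (fun s ↦ cos (ξ * s)) (-sin (ξ * s) * ξ) s := by
      simpa using ((hasDerivAt_id s).const_mul ξ).cos
    simpa only [mul_smul, neg_smul] using hcos.smul_const (u ξ)

lemma inv_sinh_smul_integral_sin_mul_smul (w : ℝ → E) (t : ℝ) :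
    (sinh t)⁻¹ • ∫ ξ, sin (ξ * t) • w ξ ∂μ = ∫ ξ, (sin (ξ * t) / sinh t) • w ξ ∂μ := by
  simp only [← integral_smul, smul_smul, inv_mul_eq_div]

lemma integrableOn_inv_sinh_smul_integral_sin_mul_smul [SFinite μ] {w : ℝ → E}
    (hw : AEStronglyMeasurable w μ) (hw_moment : Integrable (fun ξ ↦ ξ • w ξ) μ) :
    IntegrableOn (fun t ↦ (sinh t)⁻¹ • ∫ ξ, sin (ξ * t) • w ξ ∂μ) (Ioi 0) := by
  simp only [inv_sinh_smul_integral_sin_mul_smul]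
  exact (integrable_prod_sin_mul_div_sinh_smul hw hw_moment).integral_prod_left

variable [CompleteSpace E]

lemma integral_Ioi_sin_mul_div_sinh_smul (ξ : ℝ) (c : E) :
    ∫ t in Ioi 0, (sin (ξ * t) / sinh t) • c = (π / 2) • tanh (π * ξ / 2) • c := by
  rw [integral_smul_const, integral_Ioi_sin_mul_div_sinh, mul_smul]

lemma integrable_tanh_smul [SFinite μ] {w : ℝ → E} (hw : AEStronglyMeasurable w μ)
    (hw_moment : Integrable (fun ξ ↦ ξ • w ξ) μ) :
    Integrable (fun ξ ↦ tanh (π * ξ / 2) • w ξ) μ := by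
  have inner_integrable := (integrable_prod_sin_mul_div_sinh_smul hw hw_moment).integral_prod_right
  simp only [Function.uncurry_apply_pair, integral_Ioi_sin_mul_div_sinh_smul] at inner_integrable
  exact (integrable_smul_iff (by positivity) _).mp inner_integrable

lemma integral_inv_sinh_smul_integral_sin_mul_smul [SFinite μ] {w : ℝ → E}
    (hw : AEStronglyMeasurable w μ) (hw_moment : Integrable (fun ξ ↦ ξ • w ξ) μ) :
    ∫ t in Ioi 0, (sinh t)⁻¹ • ∫ ξ, sin (ξ * t) • w ξ ∂μ =
      (π / 2) • ∫ ξ, tanh (π * ξ / 2) • w ξ ∂μ := by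
  simp only [inv_sinh_smul_integral_sin_mul_smul]
  rw [integral_integral_swap (integrable_prod_sin_mul_div_sinh_smul hw hw_moment)]
  simp only [integral_Ioi_sin_mul_div_sinh_smul, integral_smul]

end RealScalars

variable {E : Type*} [NormedAddCommGroup E] [NormedSpace ℂ E]

lemma integral_exp_smul_eq_integral_cos_smul_of_even {μ : Measure ℝ} [μ.IsNegInvariant]
    {u : ℝ → E} (hu_even : Function.Even u) (hu : Integrable u μ) (t : ℝ) :
    ∫ ξ, Complex.exp (Complex.I * ξ * t) • u ξ ∂μ = ∫ ξ, cos (ξ * t) • u ξ ∂μ := by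
  let f (ξ : ℝ) : E := Complex.exp (Complex.I * ξ * t) • u ξ
  have hf : Integrable f μ := by
    have exp_continuous : Continuous fun ξ : ℝ ↦ Complex.exp (Complex.I * ξ * t) := by fun_prop
    refine hu.mono (exp_continuous.aestronglyMeasurable.smul hu.1) (.of_forall fun ξ ↦ ?_)
    rw [norm_smul, mul_assoc, ← Complex.ofReal_mul, Complex.norm_exp_I_mul_ofReal, one_mul]
  have two_smul_cos (ξ : ℝ) : f ξ + f (-ξ) = (2 : ℝ) • cos (ξ * t) • u ξ := by
    simp only [f]
    rw [hu_even, ← add_smul, smul_smul, ← Complex.coe_smul]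
    push_cast
    rw [Complex.two_cos]
    ring_nf
  refine smul_right_injective E (two_ne_zero : (2 : ℝ) ≠ 0) ?_
  calc (2 : ℝ) • ∫ ξ, f ξ ∂μ = ∫ ξ, f ξ ∂μ + ∫ ξ, f (-ξ) ∂μ := by
        rw [integral_neg_eq_self, two_smul]
    _ = ∫ ξ, (f ξ + f (-ξ)) ∂μ := (integral_add hf hf.comp_neg).symm
    _ = (2 : ℝ) • ∫ ξ, cos (ξ * t) • u ξ ∂μ := by simp only [two_smul_cos, integral_smul]

theorem stmt_3_general [CompleteSpace E] {u : ℝ → E} (hu_even : Function.Even u) (hu : Integrable u)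
    (hu_sq : Integrable fun ξ : ℝ ↦ ξ ^ 2 • u ξ) {v : ℝ → E}
    (hv : ∀ t : ℝ, v t = (1 / (2 * π)) •
      ∫ ξ : ℝ, Complex.exp (Complex.I * ξ * t) • u ξ) :
    IntegrableOn (fun t : ℝ ↦ (sinh t)⁻¹ • deriv v t) (Ioi 0) ∧
    Integrable (fun ξ : ℝ ↦ tanh (π * ξ / 2) • ξ • u ξ) ∧
    ∫ t in Ioi (0 : ℝ), (sinh t)⁻¹ • deriv v t =
      (-(1 / 4) : ℝ) • ∫ ξ : ℝ, tanh (π * ξ / 2) • ξ • u ξ := by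
  have hu_moment := integrable_smul_of_integrable_sq_smul hu hu_sq
  have hw_moment : Integrable fun ξ : ℝ ↦ ξ • ξ • u ξ := by
    simpa only [smul_smul, ← pow_two] using hu_sq
  have deriv_v (t : ℝ) :
      deriv v t = (-(1 / (2 * π))) • ∫ ξ : ℝ, sin (ξ * t) • ξ • u ξ := by
    simp only [funext hv, integral_exp_smul_eq_integral_cos_smul_of_even hu_even hu]
    rw [((hasDerivAt_integral_cos_mul_smul hu hu_moment t).fun_const_smul _).deriv,
      smul_neg, neg_smul]
  simp only [deriv_v, smul_comm (sinh _)⁻¹ (-(1 / (2 * π)))]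
  refine ⟨(integrableOn_inv_sinh_smul_integral_sin_mul_smul hu_moment.1 hw_moment).smul _,
    integrable_tanh_smul hu_moment.1 hw_moment, ?_⟩
  rw [integral_smul, integral_inv_sinh_smul_integral_sin_mul_smul hu_moment.1 hw_moment, smul_smul]
  congr 1
  field

end Transforms

/-- For `u` an even real Schwartz function and `v` its inverse Fourier transform,
`∫₀^∞ v′(t)/sinh(t) dt = −(1/4)·∫_ℝ ξ·u(ξ)·tanh(πξ/2) dξ`,
both integrals converging absolutely. -/
theorem stmt_3 (u : SchwartzMap ℝ ℝ) (hu_even : ∀ ξ : ℝ, u (-ξ) = u ξ)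
    (v : ℝ → ℂ)
    (hv : ∀ t : ℝ, v t = (1 / (2 * Real.pi)) *
      ∫ ξ : ℝ, (u ξ : ℂ) * Complex.exp (Complex.I * ξ * t)) :
    IntegrableOn (fun t : ℝ => deriv v t / (Real.sinh t : ℂ)) (Set.Ioi 0) ∧
    Integrable (fun ξ : ℝ => ξ * u ξ * Real.tanh (Real.pi * ξ / 2)) ∧
    ∫ t in Set.Ioi (0 : ℝ), deriv v t / (Real.sinh t : ℂ) =
      -(1 / 4) * ((∫ ξ : ℝ, ξ * u ξ * Real.tanh (Real.pi * ξ / 2) : ℝ) : ℂ) := by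
  obtain ⟨h_deriv, h_tanh, h_eq⟩ := stmt_3_general (u := fun ξ ↦ (u ξ : ℂ)) (v := v)
    (fun ξ ↦ congrArg _ (hu_even ξ)) u.integrable.ofReal
    (by simpa using (integrable_pow_smul_schwartzMap u 2).ofReal (𝕜 := ℂ))
    (by simpa [mul_comm] using hv)
  refine ⟨by simpa [div_eq_inv_mul] using h_deriv,
    by simpa [-Complex.real_smul, Complex.smul_re, mul_comm] using h_tanh.re, ?_⟩
  rw [← integral_complex_ofReal]
  simpa [div_eq_inv_mul, mul_comm] using h_eq
end

section
/- For every real ξ ≠ 0, ∫_ℝ e^{iξt}/cosh²(t/2) dt = 4πξ/sinh(πξ). -/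
/-!
The substitution `x = σ(t)`, with `σ` the logistic sigmoid, turns Euler's Beta integral into an
integral over `ℝ`: since `σ' = σ (1 - σ)` and `σ(±t) = e^{±t/2} / (2 cosh (t/2))`,
`B(u, v) = ∫ σ(t)^u σ(-t)^v dt = ∫ e^{(u-v)t/2} / (2 cosh (t/2))^{u+v} dt`.
At `u = 1 + iξ`, `v = 1 - iξ` the right-hand side is a quarter of the integral sought, and Euler's
reflection formula gives `B(1 + z, 1 - z) = Γ(1 + z) Γ(1 - z) = πz / sin (πz)`.
-/

open MeasureTheory

section Sigmoid

open Real

theorem sigmoid_eq_exp_div_two_mul_cosh (t : ℝ) :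
    sigmoid t = exp (t / 2) / (2 * cosh (t / 2)) := by
  have exp_neg_eq : exp (-t) = exp (-(t / 2)) / exp (t / 2) := by
    rw [← exp_sub]
    ring_nf
  rw [sigmoid_def, exp_neg_eq, cosh_eq]
  field_simp

theorem log_sigmoid (t : ℝ) : log (sigmoid t) = t / 2 - log (2 * cosh (t / 2)) := by
  rw [sigmoid_eq_exp_div_two_mul_cosh, log_div (exp_ne_zero _) (by positivity), log_exp]

theorem setIntegral_Ioo_zero_one_eq_integral_sigmoid {E : Type*} [NormedAddCommGroup E]
    [NormedSpace ℝ E] (g : ℝ → E) :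
    ∫ x in Set.Ioo 0 1, g x = ∫ t, (sigmoid t * sigmoid (-t)) • g (sigmoid t) := by
  have deriv_pos (t : ℝ) : 0 < sigmoid t * sigmoid (-t) :=
    mul_pos (sigmoid_pos t) (sigmoid_pos (-t))
  have change_of_variables := integral_image_eq_integral_abs_deriv_smul MeasurableSet.univ
    (fun t _ ↦ (hasDerivAt_sigmoid t).hasDerivWithinAt) sigmoid_injective.injOn g
  simpa only [Set.image_univ, range_sigmoid, setIntegral_univ, ← sigmoid_neg,
    abs_of_pos (deriv_pos _)] using change_of_variables

end Sigmoid

section Beta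

open Complex

theorem ofReal_sigmoid_cpow (t : ℝ) (u : ℂ) :
    (Real.sigmoid t : ℂ) ^ u = exp (u * (t / 2)) / (2 * Real.cosh (t / 2) : ℝ) ^ u := by
  have two_cosh_pos : 0 < 2 * Real.cosh (t / 2) := by positivity
  rw [cpow_def_of_ne_zero (ofReal_ne_zero.2 (Real.sigmoid_pos t).ne'),
    cpow_def_of_ne_zero (ofReal_ne_zero.2 two_cosh_pos.ne'), ← exp_sub,
    ← ofReal_log (Real.sigmoid_nonneg t), ← ofReal_log two_cosh_pos.le, log_sigmoid]
  push_cast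
  ring_nf

theorem betaIntegral_eq_integral_sigmoid (u v : ℂ) :
    betaIntegral u v = ∫ t : ℝ, (Real.sigmoid t : ℂ) ^ u * (Real.sigmoid (-t) : ℂ) ^ v := by
  rw [betaIntegral, intervalIntegral.integral_of_le zero_le_one, integral_Ioc_eq_integral_Ioo,
    setIntegral_Ioo_zero_one_eq_integral_sigmoid]
  congr! 2 with t
  have sigmoid_ne_zero (s : ℝ) : (Real.sigmoid s : ℂ) ≠ 0 :=
    ofReal_ne_zero.2 (Real.sigmoid_pos s).ne'
  have one_sub_sigmoid : 1 - (Real.sigmoid t : ℂ) = Real.sigmoid (-t) := by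
    rw [Real.sigmoid_neg, ofReal_sub, ofReal_one]
  rw [one_sub_sigmoid, cpow_sub _ _ (sigmoid_ne_zero t), cpow_sub _ _ (sigmoid_ne_zero (-t)),
    cpow_one, cpow_one, real_smul, ofReal_mul, mul_mul_mul_comm,
    mul_div_cancel₀ _ (sigmoid_ne_zero t), mul_div_cancel₀ _ (sigmoid_ne_zero (-t))]

theorem betaIntegral_eq_integral_exp_div_two_mul_cosh_cpow (u v : ℂ) :
    betaIntegral u v =
      ∫ t : ℝ, exp ((u - v) * (t / 2)) / (2 * Real.cosh (t / 2) : ℝ) ^ (u + v) := by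
  rw [betaIntegral_eq_integral_sigmoid]
  congr! 2 with t
  have two_cosh_ne_zero : ((2 * Real.cosh (t / 2) : ℝ) : ℂ) ≠ 0 :=
    ofReal_ne_zero.2 (by positivity)
  rw [ofReal_sigmoid_cpow, ofReal_sigmoid_cpow, neg_div, Real.cosh_neg, div_mul_div_comm,
    ← exp_add, ← cpow_add _ _ two_cosh_ne_zero]
  push_cast
  ring_nf

theorem Gamma_one_add_mul_Gamma_one_sub {z : ℂ} (hz : z ≠ 0) :
    Gamma (1 + z) * Gamma (1 - z) = Real.pi * z / sin (Real.pi * z) := by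
  rw [add_comm, Gamma_add_one z hz, mul_assoc, Gamma_mul_Gamma_one_sub, mul_div_assoc',
    mul_comm z]

theorem betaIntegral_one_add_one_sub {z : ℂ} (hz : z ≠ 0) (hre : |z.re| < 1) :
    betaIntegral (1 + z) (1 - z) = Real.pi * z / sin (Real.pi * z) := by
  obtain ⟨neg_one_lt_re, re_lt_one⟩ := abs_lt.1 hre
  have Gamma_sum : Gamma ((1 + z) + (1 - z)) = 1 := by
    simp [one_add_one_eq_two]
  rw [betaIntegral_eq_Gamma_mul_div _ _ (by simpa using neg_lt_iff_pos_add'.1 neg_one_lt_re)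
    (by simpa using re_lt_one), Gamma_sum, div_one, Gamma_one_add_mul_Gamma_one_sub hz]

theorem integral_exp_mul_div_cosh_sq {z : ℂ} (hz : z ≠ 0) (hre : |z.re| < 1) :
    ∫ t : ℝ, exp (z * t) / (Real.cosh (t / 2) : ℂ) ^ 2 =
      4 * Real.pi * z / sin (Real.pi * z) := by
  have integrand_eq (t : ℝ) : exp (z * t) / (Real.cosh (t / 2) : ℂ) ^ 2 =
      4 * (exp (((1 + z) - (1 - z)) * (t / 2)) /
        (2 * Real.cosh (t / 2) : ℝ) ^ ((1 + z) + (1 - z))) := by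
    rw [add_add_sub_cancel, one_add_one_eq_two, cpow_ofNat, add_sub_sub_cancel,
      ← two_mul, mul_assoc, mul_div_left_comm]
    push_cast
    ring_nf
  simp_rw [integrand_eq]
  rw [integral_const_mul, ← betaIntegral_eq_integral_exp_div_two_mul_cosh_cpow,
    betaIntegral_one_add_one_sub hz hre, mul_div_assoc', mul_assoc]

theorem stmt_4_general {ξ : ℂ} (hξ : ξ ≠ 0) (him : |ξ.im| < 1) :
    ∫ t : ℝ, exp (I * ξ * t) / (Real.cosh (t / 2) : ℂ) ^ 2 =
      4 * Real.pi * ξ / sinh (Real.pi * ξ) := by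
  have sin_eq : sin (Real.pi * (I * ξ)) = I * sinh (Real.pi * ξ) := by
    rw [mul_left_comm, mul_comm I, sin_mul_I, mul_comm]
  rw [integral_exp_mul_div_cosh_sq (mul_ne_zero I_ne_zero hξ) (by simpa using him), sin_eq,
    mul_left_comm, mul_div_mul_left _ _ I_ne_zero]

end Beta

/-- For every real `ξ ≠ 0`, `∫_ℝ e^{iξt}/cosh²(t/2) dt = 4πξ/sinh(πξ)`. -/
theorem stmt_4 (ξ : ℝ) (hξ : ξ ≠ 0) :
    ∫ t : ℝ, Complex.exp (Complex.I * ξ * t) / (Real.cosh (t / 2) : ℂ) ^ 2 =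
      ((4 * Real.pi * ξ / Real.sinh (Real.pi * ξ) : ℝ) : ℂ) := by
  simpa using stmt_4_general (Complex.ofReal_ne_zero.2 hξ) (by simp)
end

section
/- Let φ : ℝ → ℝ be smooth and compactly supported. Define a(t) := φ(t)/√(t+4), v(t) := 4·cosh(t/2)·∫₀^∞ a(4·sinh²(t/2) + y²) dy, and u(ξ) := ∫_ℝ v(t)·e^{−iξt} dt. Then for every ξ ∈ ℝ, ∫₀^∞ ∫_ℝ φ( (x² + (y−1)²)/y ) · y^{−3/2 − iξ} · (1+y)/√(x² + (y+1)²) dx dy = u(ξ), where y^{−3/2−iξ} denotes the complex power of the positive real y. -/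
open MeasureTheory

/-!
In the coordinates `x = exp (t / 2) * w`, `y = exp t` the invariant `(x² + (y - 1)²) / y` becomes
`4 sinh² (t / 2) + w²`, and the spinor factor `(1 + y) / √(x² + (y + 1)²)` becomes
`2 cosh (t / 2) / √(4 sinh² (t / 2) + w² + 4)`. Both are even in `w`, so integrating over the
horocycle `y = exp t` gives `exp (t / 2) * v t`. The Jacobian `exp t` and this `exp (t / 2)`
together cancel `y ^ (-3 / 2)`, which leaves the Fourier integral of `v`.
-/

/-- The Abel-type transform `v` of a radial kernel `φ` acting on spinors: up to the factor
`exp (t / 2)`, the integral over the horocycle at height `exp t` of `φ` times the spinor factor.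
It is written with the profile `a s = φ s / √(s + 4)` unfolded. -/
noncomputable def spinorAbelTransform (φ : ℝ → ℝ) (t : ℝ) : ℝ :=
  4 * Real.cosh (t / 2) * ∫ y in Set.Ioi (0 : ℝ),
    φ (4 * Real.sinh (t / 2) ^ 2 + y ^ 2) / Real.sqrt (4 * Real.sinh (t / 2) ^ 2 + y ^ 2 + 4)

theorem integral_Ioi_zero_eq_integral_exp_smul {E : Type*} [NormedAddCommGroup E]
    [NormedSpace ℝ E] (f : ℝ → E) :
    ∫ y in Set.Ioi (0 : ℝ), f y = ∫ t : ℝ, Real.exp t • f (Real.exp t) := by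
  rw [← Real.range_exp, ← Set.image_univ, integral_image_eq_integral_abs_deriv_smul
    MeasurableSet.univ (fun t _ => (Real.hasDerivAt_exp t).hasDerivWithinAt)
    Real.exp_injective.injOn, setIntegral_univ]
  simp only [Real.abs_exp]

theorem ofReal_exp_cpow (t : ℝ) (s : ℂ) : (Real.exp t : ℂ) ^ s = Complex.exp (t * s) := by
  rw [Complex.cpow_def_of_ne_zero (Complex.ofReal_ne_zero.2 (Real.exp_ne_zero t)),
    ← Complex.ofReal_log (Real.exp_pos t).le, Real.log_exp]

theorem exp_half_sq (t : ℝ) : Real.exp (t / 2) ^ 2 = Real.exp t := by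
  rw [Real.exp_half, Real.sq_sqrt (Real.exp_pos t).le]

theorem exp_sub_one_eq_exp_half_mul_sinh (t : ℝ) :
    Real.exp t - 1 = Real.exp (t / 2) * (2 * Real.sinh (t / 2)) := by
  rw [Real.sinh_eq, Real.exp_neg, ← exp_half_sq]
  field_simp

theorem exp_add_one_eq_exp_half_mul_cosh (t : ℝ) :
    Real.exp t + 1 = Real.exp (t / 2) * (2 * Real.cosh (t / 2)) := by
  rw [Real.cosh_eq, Real.exp_neg, ← exp_half_sq]
  field_simp

theorem exp_half_mul_sq_add_exp_sub_one_sq_div_exp (t w : ℝ) :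
    ((Real.exp (t / 2) * w) ^ 2 + (Real.exp t - 1) ^ 2) / Real.exp t =
      4 * Real.sinh (t / 2) ^ 2 + w ^ 2 := by
  rw [exp_sub_one_eq_exp_half_mul_sinh, ← exp_half_sq t]
  field_simp
  ring

theorem one_add_exp_div_sqrt_exp_half_mul_sq_add_sq (t w : ℝ) :
    (1 + Real.exp t) / Real.sqrt ((Real.exp (t / 2) * w) ^ 2 + (Real.exp t + 1) ^ 2) =
      2 * Real.cosh (t / 2) / Real.sqrt (4 * Real.sinh (t / 2) ^ 2 + w ^ 2 + 4) := by
  have radicand_eq : (Real.exp (t / 2) * w) ^ 2 + (Real.exp t + 1) ^ 2 =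
      Real.exp (t / 2) ^ 2 * (4 * Real.sinh (t / 2) ^ 2 + w ^ 2 + 4) := by
    rw [exp_add_one_eq_exp_half_mul_cosh, mul_pow _ (2 * _), mul_pow 2, Real.cosh_sq]
    ring
  rw [radicand_eq, Real.sqrt_mul (sq_nonneg _), Real.sqrt_sq (Real.exp_pos _).le, add_comm 1,
    exp_add_one_eq_exp_half_mul_cosh, mul_div_mul_left _ _ (Real.exp_ne_zero _)]

theorem integral_horocycle_eq_spinorAbelTransform (φ : ℝ → ℝ) (t : ℝ) :
    ∫ x : ℝ, φ ((x ^ 2 + (Real.exp t - 1) ^ 2) / Real.exp t) *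
        ((1 + Real.exp t) / Real.sqrt (x ^ 2 + (Real.exp t + 1) ^ 2)) =
      Real.exp (t / 2) * spinorAbelTransform φ t := by
  let profile (w : ℝ) : ℝ :=
    φ (4 * Real.sinh (t / 2) ^ 2 + w ^ 2) / Real.sqrt (4 * Real.sinh (t / 2) ^ 2 + w ^ 2 + 4)
  let integrand (x : ℝ) : ℝ := φ ((x ^ 2 + (Real.exp t - 1) ^ 2) / Real.exp t) *
    ((1 + Real.exp t) / Real.sqrt (x ^ 2 + (Real.exp t + 1) ^ 2))
  have integrand_exp_half_mul (w : ℝ) :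
      integrand (Real.exp (t / 2) * w) = 2 * Real.cosh (t / 2) * profile |w| := by
    simp only [integrand, profile, sq_abs, exp_half_mul_sq_add_exp_sub_one_sq_div_exp,
      one_add_exp_div_sqrt_exp_half_mul_sq_add_sq]
    ring
  calc ∫ x, integrand x
      = Real.exp (t / 2) * ∫ w, integrand (Real.exp (t / 2) * w) := by
        rw [Measure.integral_comp_mul_left, abs_inv, Real.abs_exp, smul_eq_mul,
          mul_inv_cancel_left₀ (Real.exp_ne_zero _)]
    _ = Real.exp (t / 2) * (2 * Real.cosh (t / 2) * ∫ w, profile |w|) := by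
        simp only [integrand_exp_half_mul, integral_const_mul]
    _ = Real.exp (t / 2) * (4 * Real.cosh (t / 2) * ∫ w in Set.Ioi 0, profile w) := by
        rw [integral_comp_abs]
        ring

theorem exp_mul_exp_cpow_mul_exp_half (ξ : ℂ) (t : ℝ) :
    (Real.exp t : ℂ) * (Real.exp t : ℂ) ^ (-(3 / 2 : ℂ) - Complex.I * ξ) * Real.exp (t / 2) =
      Complex.exp (-(Complex.I * ξ * t)) := by
  rw [ofReal_exp_cpow, Complex.ofReal_exp, Complex.ofReal_exp, ← Complex.exp_add,
    ← Complex.exp_add]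
  congr 1
  push_cast
  ring

theorem stmt_5_general (φ : ℝ → ℝ) (ξ : ℂ) :
    ∫ y in Set.Ioi (0 : ℝ), ∫ x : ℝ,
        (φ ((x ^ 2 + (y - 1) ^ 2) / y) : ℂ) *
          (y : ℂ) ^ (-(3 / 2 : ℂ) - Complex.I * ξ) *
          (((1 + y) / Real.sqrt (x ^ 2 + (y + 1) ^ 2) : ℝ) : ℂ) =
      ∫ t : ℝ, (spinorAbelTransform φ t : ℂ) * Complex.exp (-(Complex.I * ξ * t)) := by
  calc
    _ = ∫ y in Set.Ioi (0 : ℝ),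
          ((∫ x : ℝ, φ ((x ^ 2 + (y - 1) ^ 2) / y) *
            ((1 + y) / Real.sqrt (x ^ 2 + (y + 1) ^ 2)) : ℝ) : ℂ) *
          (y : ℂ) ^ (-(3 / 2 : ℂ) - Complex.I * ξ) := by
        simp only [mul_right_comm _ ((_ : ℂ) ^ (_ : ℂ)), integral_mul_const,
          ← Complex.ofReal_mul, integral_complex_ofReal]
    _ = ∫ t : ℝ, Real.exp t • (((Real.exp (t / 2) * spinorAbelTransform φ t : ℝ) : ℂ) *
          (Real.exp t : ℂ) ^ (-(3 / 2 : ℂ) - Complex.I * ξ)) := by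
        simp only [integral_Ioi_zero_eq_integral_exp_smul,
          integral_horocycle_eq_spinorAbelTransform]
    _ = ∫ t : ℝ, (spinorAbelTransform φ t : ℂ) * Complex.exp (-(Complex.I * ξ * t)) := by
        congr with t
        rw [← exp_mul_exp_cpow_mul_exp_half, Complex.real_smul, Complex.ofReal_mul]
        ring

/-- The orbital integral computing the eigenvalue of the convolution operator on the
Dirac eigenspinor `y^{1/2−iξ}σ⁺` of the hyperbolic plane, evaluated at `i`:
`∫₀^∞ ∫_ℝ φ((x²+(y−1)²)/y) · y^{−3/2−iξ} · (1+y)/√(x²+(y+1)²) dx dy = u(ξ)`. -/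
theorem stmt_5 (φ : ℝ → ℝ) (hφ : ContDiff ℝ (⊤ : ℕ∞) φ) (hsupp : HasCompactSupport φ)
    (a v : ℝ → ℝ) (u : ℝ → ℂ)
    (ha : ∀ t, a t = φ t / Real.sqrt (t + 4))
    (hv : ∀ t, v t = 4 * Real.cosh (t / 2) *
      ∫ y in Set.Ioi (0 : ℝ), a (4 * Real.sinh (t / 2) ^ 2 + y ^ 2))
    (hu : ∀ ξ : ℝ, u ξ = ∫ t : ℝ, (v t : ℂ) * Complex.exp (-(Complex.I * ξ * t)))
    (ξ : ℝ) :
    ∫ y in Set.Ioi (0 : ℝ), ∫ x : ℝ,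
        (φ ((x ^ 2 + (y - 1) ^ 2) / y) : ℂ) *
          (y : ℂ) ^ (-(3 / 2 : ℂ) - Complex.I * ξ) *
          (((1 + y) / Real.sqrt (x ^ 2 + (y + 1) ^ 2) : ℝ) : ℂ) = u ξ := by
  obtain rfl : v = spinorAbelTransform φ :=
    funext fun t => by simp only [hv, ha, spinorAbelTransform]
  rw [hu, stmt_5_general]
end

section
/- Let f : [0,∞) → ℝ be continuous on [0,∞), differentiable on (0,∞), and suppose there is C > 0 with |f(x)| ≤ C for all x ≥ 0 and |x·f′(x)| ≤ C for all x > 0. Then for every ℓ > 0 the series Σ_{n=1}^∞ ((−1)^n/n)·f(nℓ) converges, and lim_{ℓ→0⁺} Σ_{n=1}^∞ ((−1)^n/n)·f(nℓ) = −log(2)·f(0). -/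
open Filter

/-!
Let `Aₙ` be the partial sums of `∑ (-1)ⁿ / n`, so that `Aₙ → -log 2`, and put `rₙ = Aₙ + log 2`.
Summation by parts against `rₙ` rather than `Aₙ` gives
`∑ ((-1)ⁿ / n) f(nℓ) = -log 2 · f(ℓ) + ∑ rₙ (f(nℓ) - f((n+1)ℓ))`.
Here `|rₙ| ≤ 1 / (n+1)` because the series alternates, and the bound on `x f'(x)` gives
`|f(nℓ) - f((n+1)ℓ)| ≤ C / n`, whatever `ℓ` is. The series on the right is therefore dominated
by `∑ C / n²` uniformly in `ℓ`, while each of its terms tends to `0` as `ℓ → 0⁺`.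
The boundary term `rₙ f(nℓ)` vanishes since the increments of `n ↦ f(nℓ)` tend to `0`, which by
Cesàro makes `f(nℓ) / n` tend to `0`.
-/

open scoped Topology

section AlternatingHarmonicSeries

theorem abs_sum_alternating_sub_le {R : Type*} [Ring R] [LinearOrder R] [IsOrderedRing R]
    [TopologicalSpace R] [OrderClosedTopology R] {b : ℕ → R} {l : R} (hb : Antitone b)
    (hl : Tendsto (fun N ↦ ∑ n ∈ Finset.range N, (-1) ^ n * b n) atTop (𝓝 l)) (N : ℕ) :
    |∑ n ∈ Finset.range N, (-1) ^ n * b n - l| ≤ b N := by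
  rw [abs_sub_le_iff, sub_le_iff_le_add', sub_le_iff_le_add']
  obtain ⟨k, rfl | rfl⟩ := N.even_or_odd'
  · have lower := hb.alternating_series_le_tendsto hl k
    have upper := hb.tendsto_le_alternating_series hl k
    rw [Finset.sum_range_succ, (even_two_mul k).neg_one_pow, one_mul] at upper
    have hb_nonneg : 0 ≤ b (2 * k) := le_add_iff_nonneg_right _ |>.1 (lower.trans upper)
    exact ⟨lower.trans (le_add_of_nonneg_right hb_nonneg), upper⟩
  · have lower := hb.alternating_series_le_tendsto hl (k + 1)
    have upper := hb.tendsto_le_alternating_series hl k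
    rw [mul_add_one, Finset.sum_range_succ, (odd_two_mul_add_one k).neg_one_pow, neg_one_mul,
      ← sub_eq_add_neg, sub_le_iff_le_add] at lower
    have hb_nonneg : 0 ≤ b (2 * k + 1) := le_add_iff_nonneg_right _ |>.1 (upper.trans lower)
    exact ⟨lower, upper.trans (le_add_of_nonneg_right hb_nonneg)⟩

theorem sum_range_two_mul_alternating_harmonic (N : ℕ) :
    ∑ n ∈ Finset.range (2 * N), (-1 : ℝ) ^ n * (1 / (n + 1)) = harmonic (2 * N) - harmonic N := by
  induction N with
  | zero => simp
  | succ N ih =>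
    rw [mul_add_one, Finset.sum_range_succ, Finset.sum_range_succ, ih,
      (even_two_mul N).neg_one_pow, (odd_two_mul_add_one N).neg_one_pow, harmonic_succ,
      harmonic_succ, harmonic_succ]
    push_cast
    field

theorem tendsto_harmonic_two_mul_sub_harmonic :
    Tendsto (fun N : ℕ ↦ (harmonic (2 * N) - harmonic N : ℝ)) atTop (𝓝 (Real.log 2)) := by
  have hdouble : Tendsto (fun N : ℕ ↦ 2 * N) atTop atTop :=
    tendsto_id.const_mul_atTop' two_pos
  have hγ := Real.tendsto_harmonic_sub_log
  have hlim := ((hγ.comp hdouble).sub hγ).add_const (Real.log 2)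
  rw [sub_self, zero_add] at hlim
  refine hlim.congr' ?_
  filter_upwards [eventually_ne_atTop 0] with N hN
  have hlog : Real.log (2 * N : ℕ) = Real.log 2 + Real.log N := by
    rw [Nat.cast_mul, Nat.cast_ofNat, Real.log_mul two_ne_zero (Nat.cast_ne_zero.2 hN)]
  simp only [Function.comp_apply, hlog]
  ring

theorem antitone_one_div_natCast_add_one : Antitone fun n : ℕ ↦ 1 / ((n : ℝ) + 1) :=
  fun _ _ h ↦ Nat.one_div_le_one_div h

theorem tendsto_sum_alternating_harmonic :
    Tendsto (fun N ↦ ∑ n ∈ Finset.range N, (-1 : ℝ) ^ n * (1 / (n + 1))) atTop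
      (𝓝 (Real.log 2)) := by
  obtain ⟨l, hl⟩ := antitone_one_div_natCast_add_one.tendsto_alternating_series_of_tendsto_zero
    tendsto_one_div_add_atTop_nhds_zero_nat
  have hdouble : Tendsto (fun N : ℕ ↦ 2 * N) atTop atTop :=
    tendsto_id.const_mul_atTop' two_pos
  have heven : Tendsto (fun N : ℕ ↦ (harmonic (2 * N) - harmonic N : ℝ)) atTop (𝓝 l) :=
    (hl.comp hdouble).congr sum_range_two_mul_alternating_harmonic
  rwa [tendsto_nhds_unique heven tendsto_harmonic_two_mul_sub_harmonic] at hl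

theorem abs_sum_neg_one_pow_succ_div_sub_neg_log_two_le (N : ℕ) :
    |∑ n ∈ Finset.range N, (-1 : ℝ) ^ (n + 1) / (n + 1) - -Real.log 2| ≤ 1 / (N + 1) := by
  have hsum : ∑ n ∈ Finset.range N, (-1 : ℝ) ^ (n + 1) / (n + 1) =
      -∑ n ∈ Finset.range N, (-1 : ℝ) ^ n * (1 / (n + 1)) := by
    rw [← Finset.sum_neg_distrib]
    exact Finset.sum_congr rfl fun n _ ↦ by ring
  rw [hsum, ← neg_sub', abs_neg]
  exact abs_sum_alternating_sub_le antitone_one_div_natCast_add_one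
    tendsto_sum_alternating_harmonic N

end AlternatingHarmonicSeries

section SummationByParts

theorem sum_range_smul_eq_summation_by_parts {R M : Type*} [Ring R] [AddCommGroup M] [Module R M]
    (a : ℕ → R) (L : R) (x : ℕ → M) (N : ℕ) :
    ∑ n ∈ Finset.range N, a n • x n =
      L • x 0 + ∑ n ∈ Finset.range N,
          (∑ k ∈ Finset.range (n + 1), a k - L) • (x n - x (n + 1)) +
        (∑ k ∈ Finset.range N, a k - L) • x N := by
  induction N with
  | zero => simp
  | succ N ih =>
    rw [Finset.sum_range_succ, ih, Finset.sum_range_succ _ N, Finset.sum_range_succ a N]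
    simp only [add_smul, sub_smul, smul_sub]
    abel

variable {E : Type*} [NormedAddCommGroup E] [NormedSpace ℝ E]

theorem tendsto_inv_natCast_smul_of_tendsto_sub {x : ℕ → E} {l : E}
    (hx : Tendsto (fun n ↦ x (n + 1) - x n) atTop (𝓝 l)) :
    Tendsto (fun n : ℕ ↦ (n : ℝ)⁻¹ • x n) atTop (𝓝 l) := by
  have hinit : Tendsto (fun n : ℕ ↦ (n : ℝ)⁻¹ • x 0) atTop (𝓝 0) := by
    simpa using (tendsto_inv_atTop_nhds_zero_nat (𝕜 := ℝ)).smul_const (x 0)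
  have hmean := hx.cesaro_smul.add hinit
  rw [add_zero] at hmean
  refine hmean.congr fun n ↦ ?_
  rw [Finset.sum_range_sub, ← smul_add, sub_add_cancel]

/-- The value that summation by parts assigns to the series `∑ aₙ • xₙ` when the partial sums of
`a` converge to `L`. The `tsum` is meaningful only if its terms are summable. -/
noncomputable def abelSum (a : ℕ → ℝ) (L : ℝ) (x : ℕ → E) : E :=
  L • x 0 + ∑' n, (∑ k ∈ Finset.range (n + 1), a k - L) • (x n - x (n + 1))

theorem summable_const_mul_one_div_natCast_add_one_sq (c : ℝ) :
    Summable fun n : ℕ ↦ c * (1 / ((n : ℝ) + 1) ^ 2) := by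
  have h := (summable_nat_add_iff 1).2 (Real.summable_one_div_nat_pow.2 one_lt_two)
  simp only [Nat.cast_add_one] at h
  exact h.mul_left c

variable {a : ℕ → ℝ} {L K C : ℝ}

theorem norm_partialSum_sub_smul_sub_le
    (ha : ∀ N : ℕ, |∑ k ∈ Finset.range N, a k - L| ≤ K / (N + 1)) {x : ℕ → E}
    (hx : ∀ n : ℕ, ‖x n - x (n + 1)‖ ≤ C / (n + 1)) (n : ℕ) :
    ‖(∑ k ∈ Finset.range (n + 1), a k - L) • (x n - x (n + 1))‖ ≤
      K * C * (1 / ((n : ℝ) + 1) ^ 2) := by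
  have hK : 0 ≤ K := by simpa using (abs_nonneg _).trans (ha 0)
  have ha' : ‖∑ k ∈ Finset.range (n + 1), a k - L‖ ≤ K / (n + 1) :=
    calc _ ≤ K / ((n + 1 : ℕ) + 1) := ha (n + 1)
      _ ≤ K / (n + 1) := by gcongr; simp
  calc _ ≤ ‖∑ k ∈ Finset.range (n + 1), a k - L‖ * ‖x n - x (n + 1)‖ := norm_smul_le _ _
    _ ≤ K / (n + 1) * (C / (n + 1)) := by gcongr; exact hx n
    _ = K * C * (1 / ((n : ℝ) + 1) ^ 2) := by field

theorem tendsto_partialSum_sub_smul_zero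
    (ha : ∀ N : ℕ, |∑ k ∈ Finset.range N, a k - L| ≤ K / (N + 1)) {x : ℕ → E}
    (hx : Tendsto (fun n ↦ x (n + 1) - x n) atTop (𝓝 0)) :
    Tendsto (fun N ↦ (∑ k ∈ Finset.range N, a k - L) • x N) atTop (𝓝 0) := by
  have hK : 0 ≤ K := by simpa using (abs_nonneg _).trans (ha 0)
  have hlim : Tendsto (fun N : ℕ ↦ K * ‖(N : ℝ)⁻¹ • x N‖) atTop (𝓝 0) := by
    simpa using (tendsto_inv_natCast_smul_of_tendsto_sub hx).norm.const_mul K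
  refine squeeze_zero_norm' ?_ hlim
  filter_upwards [eventually_gt_atTop 0] with N hN
  calc ‖(∑ k ∈ Finset.range N, a k - L) • x N‖
      ≤ |∑ k ∈ Finset.range N, a k - L| * ‖x N‖ := norm_smul_le _ _
    _ ≤ K / (N + 1) * ‖x N‖ := by gcongr; exact ha N
    _ ≤ K / N * ‖x N‖ := by gcongr; simp
    _ = K * ‖(N : ℝ)⁻¹ • x N‖ := by
      rw [norm_smul, norm_inv, Real.norm_natCast, div_eq_mul_inv, mul_assoc]

variable [CompleteSpace E]

theorem tendsto_sum_smul_abelSum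
    (ha : ∀ N : ℕ, |∑ k ∈ Finset.range N, a k - L| ≤ K / (N + 1)) {x : ℕ → E}
    (hx : ∀ n : ℕ, ‖x n - x (n + 1)‖ ≤ C / (n + 1)) :
    Tendsto (fun N ↦ ∑ n ∈ Finset.range N, a n • x n) atTop (𝓝 (abelSum a L x)) := by
  have hsummable : Summable fun n ↦ (∑ k ∈ Finset.range (n + 1), a k - L) • (x n - x (n + 1)) :=
    .of_norm_bounded (summable_const_mul_one_div_natCast_add_one_sq (K * C))
      (norm_partialSum_sub_smul_sub_le ha hx)
  have hincr : Tendsto (fun n ↦ x (n + 1) - x n) atTop (𝓝 0) := by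
    refine squeeze_zero_norm (fun n ↦ (norm_sub_rev _ _).trans_le (hx n)) ?_
    simpa [div_eq_mul_one_div C] using
      (tendsto_one_div_add_atTop_nhds_zero_nat (𝕜 := ℝ)).const_mul C
  have hlim := (hsummable.hasSum.tendsto_sum_nat.const_add (L • x 0)).add
    (tendsto_partialSum_sub_smul_zero ha hincr)
  rw [add_zero] at hlim
  exact hlim.congr fun N ↦ (sum_range_smul_eq_summation_by_parts a L x N).symm

theorem tendsto_abelSum {ι : Type*} {F : Filter ι}
    (ha : ∀ N : ℕ, |∑ k ∈ Finset.range N, a k - L| ≤ K / (N + 1)) {x : ι → ℕ → E} {y : E}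
    (hx : ∀ᶠ i in F, ∀ n : ℕ, ‖x i n - x i (n + 1)‖ ≤ C / (n + 1))
    (hxy : ∀ n, Tendsto (fun i ↦ x i n) F (𝓝 y)) :
    Tendsto (fun i ↦ abelSum a L (x i)) F (𝓝 (L • y)) := by
  have hterm (n : ℕ) : Tendsto
      (fun i ↦ (∑ k ∈ Finset.range (n + 1), a k - L) • (x i n - x i (n + 1))) F (𝓝 0) := by
    simpa using ((hxy n).sub (hxy (n + 1))).const_smul (∑ k ∈ Finset.range (n + 1), a k - L)
  have htail := tendsto_tsum_of_dominated_convergence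
    (summable_const_mul_one_div_natCast_add_one_sq (K * C)) hterm
    (hx.mono fun i hi ↦ norm_partialSum_sub_smul_sub_le ha hi)
  simpa [abelSum] using ((hxy 0).const_smul L).add htail

end SummationByParts

section Dilation

variable {E : Type*} [NormedAddCommGroup E] [NormedSpace ℝ E] {f : ℝ → E} {C : ℝ}

theorem norm_sub_le_of_norm_smul_deriv_le
    (hdiff : ∀ x ∈ Set.Ioi (0 : ℝ), DifferentiableAt ℝ f x)
    (hderiv : ∀ x : ℝ, 0 < x → ‖x • deriv f x‖ ≤ C) {x y : ℝ} (hx : 0 < x) (hxy : x ≤ y) :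
    ‖f x - f y‖ ≤ C / x * (y - x) := by
  have hderiv_le : ∀ t ∈ Set.Ici x, ‖deriv f t‖ ≤ C / x := fun t (ht : x ≤ t) ↦ by
    have ht_pos : 0 < t := hx.trans_le ht
    rw [le_div_iff₀' hx]
    calc x * ‖deriv f t‖ ≤ t * ‖deriv f t‖ := by gcongr
      _ = ‖t • deriv f t‖ := by rw [norm_smul, Real.norm_of_nonneg ht_pos.le]
      _ ≤ C := hderiv t ht_pos
  have hmvt := (convex_Ici x).norm_image_sub_le_of_norm_deriv_le
    (fun t ht ↦ hdiff t (hx.trans_le ht)) hderiv_le Set.self_mem_Ici hxy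
  rwa [norm_sub_rev, Real.norm_of_nonneg (sub_nonneg.2 hxy)] at hmvt

theorem norm_sub_succ_mul_le_of_norm_smul_deriv_le
    (hdiff : ∀ x ∈ Set.Ioi (0 : ℝ), DifferentiableAt ℝ f x)
    (hderiv : ∀ x : ℝ, 0 < x → ‖x • deriv f x‖ ≤ C) {ℓ : ℝ} (hℓ : 0 < ℓ) (n : ℕ) :
    ‖f ((n + 1) * ℓ) - f (((n + 1 : ℕ) + 1) * ℓ)‖ ≤ C / (n + 1) := by
  have hpos : (0 : ℝ) < n + 1 := n.cast_add_one_pos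
  have hle : ((n : ℝ) + 1) * ℓ ≤ ((n + 1 : ℕ) + 1) * ℓ := by gcongr; simp
  refine (norm_sub_le_of_norm_smul_deriv_le hdiff hderiv (mul_pos hpos hℓ) hle).trans_eq ?_
  push_cast
  field

theorem tendsto_const_mul_nhdsGT_zero {M₀ : Type*} [MulZeroClass M₀] [Preorder M₀]
    [PosMulStrictMono M₀] [TopologicalSpace M₀] [ContinuousMul M₀] {c : M₀} (hc : 0 < c) :
    Tendsto (fun x ↦ c * x) (𝓝[>] 0) (𝓝[>] 0) :=
  tendsto_nhdsWithin_iff.2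
    ⟨((continuous_const_mul c).tendsto' 0 0 (mul_zero c)).mono_left nhdsWithin_le_nhds,
      eventually_nhdsWithin_of_forall fun _ hx ↦ mul_pos hc hx⟩

end Dilation

theorem stmt_8_general {E : Type*} [NormedAddCommGroup E] [NormedSpace ℝ E] [CompleteSpace E]
    {f : ℝ → E} {C : ℝ} {y : E} (hlim : Tendsto f (𝓝[>] 0) (𝓝 y))
    (hdiff : ∀ x ∈ Set.Ioi (0 : ℝ), DifferentiableAt ℝ f x)
    (hderiv : ∀ x : ℝ, 0 < x → ‖x • deriv f x‖ ≤ C) :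
    ∃ S : ℝ → E,
      (∀ ℓ : ℝ, 0 < ℓ →
        Tendsto (fun N : ℕ ↦ ∑ n ∈ Finset.range N, ((-1 : ℝ) ^ (n + 1) / (n + 1)) •
            f ((n + 1) * ℓ))
          atTop (𝓝 (S ℓ))) ∧
      Tendsto S (𝓝[>] 0) (𝓝 (-(Real.log 2) • y)) := by
  have hincr {ℓ : ℝ} (hℓ : 0 < ℓ) := norm_sub_succ_mul_le_of_norm_smul_deriv_le hdiff hderiv hℓ
  have hpartial := abs_sum_neg_one_pow_succ_div_sub_neg_log_two_le
  refine ⟨fun ℓ ↦ abelSum (fun n ↦ (-1) ^ (n + 1) / (n + 1)) (-Real.log 2)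
    fun n ↦ f ((n + 1) * ℓ), fun ℓ hℓ ↦ tendsto_sum_smul_abelSum hpartial (hincr hℓ), ?_⟩
  exact tendsto_abelSum hpartial (eventually_nhdsWithin_of_forall fun ℓ hℓ ↦ hincr hℓ)
    fun n ↦ hlim.comp (tendsto_const_mul_nhdsGT_zero n.cast_add_one_pos)

/-- The analytic core of the pinching limit of the geometric side of the trace formula:
if `f` is continuous on `[0,∞)`, differentiable on `(0,∞)`, with `|f|` and `|x·f′(x)|`
bounded, then for every `ℓ > 0` the series `Σ_{n≥1} ((−1)^n/n)·f(nℓ)` converges, and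
its sum tends to `−log(2)·f(0)` as `ℓ → 0⁺`. -/
theorem stmt_8 (f : ℝ → ℝ) (C : ℝ) (hC : 0 < C)
    (hcont : ContinuousOn f (Set.Ici 0))
    (hdiff : ∀ x ∈ Set.Ioi (0 : ℝ), DifferentiableAt ℝ f x)
    (hbound : ∀ x : ℝ, 0 ≤ x → |f x| ≤ C)
    (hbound' : ∀ x : ℝ, 0 < x → |x * deriv f x| ≤ C) :
    ∃ S : ℝ → ℝ,
      (∀ ℓ : ℝ, 0 < ℓ →
        Tendsto (fun N : ℕ => ∑ n ∈ Finset.range N, ((-1 : ℝ) ^ (n + 1) / (n + 1)) *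
            f ((n + 1) * ℓ))
          atTop (nhds (S ℓ))) ∧
      Tendsto S (nhdsWithin 0 (Set.Ioi 0)) (nhds (-(Real.log 2) * f 0)) :=
  stmt_8_general ((hcont 0 Set.self_mem_Ici).mono Set.Ioi_subset_Ici_self) hdiff hbound'
end

section
/- Let I(T) := ∫_ℝ e^{−Tξ²}·ξ·coth(πξ) dξ (with ξ·coth(πξ) extended continuously at 0 by 1/π). Then there exist C > 0 and T₀ > 0 such that for all T > T₀, | I(T) − 1/√(πT) − (1/6)·√(π³/T³) | ≤ C·T^{−5/2}. -/
open MeasureTheory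

/-!
Near `0` the kernel `ξ coth(πξ)` is `1/π + (π/3) ξ²` up to a quartic error, and in fact
`1 + x²/3 - x⁴/45 ≤ x coth x ≤ 1 + x²/3` holds for every real `x ≠ 0`: multiplied by `sinh x`, both
inequalities follow by integrating derivatives from `0`. Integrated against `e^{-Tξ²}`, the
quadratic Taylor polynomial gives the two main terms exactly, and the error is at most `π³/45` times
the fourth Gaussian moment, which is a multiple of `T^{-5/2}`.
-/

section HyperbolicInequalities

open Real

variable {x : ℝ}

lemma le_of_hasDerivAt_nonneg {f f' : ℝ → ℝ} {a b : ℝ} (hab : a ≤ b)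
    (hf : ∀ x, a ≤ x → HasDerivAt f (f' x) x) (hf' : ∀ x, a < x → 0 ≤ f' x) : f a ≤ f b := by
  have f_mono : MonotoneOn f (Set.Ici a) := by
    refine monotoneOn_of_hasDerivWithinAt_nonneg (f' := f') (convex_Ici a)
      (fun x hx ↦ (hf x hx).continuousAt.continuousWithinAt) ?_ ?_
    · exact fun x hx ↦ (hf x (interior_subset hx)).hasDerivWithinAt
    · exact fun x hx ↦ hf' x (by simpa using hx)
  exact f_mono Set.self_mem_Ici hab hab

lemma sinh_le_mul_cosh (hx : 0 ≤ x) : sinh x ≤ x * cosh x := by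
  have deriv_formula (y : ℝ) :
      HasDerivAt (fun y ↦ y * cosh y - sinh y) (y * sinh y) y := by
    refine (((hasDerivAt_id y).mul (hasDerivAt_cosh y)).sub (hasDerivAt_sinh y)).congr_deriv ?_
    simp
  have deriv_nonneg (y : ℝ) (hy : 0 < y) : 0 ≤ y * sinh y :=
    mul_nonneg hy.le (sinh_nonneg_iff.2 hy.le)
  simpa using le_of_hasDerivAt_nonneg hx (fun y _ ↦ deriv_formula y) deriv_nonneg

lemma mul_cosh_le_one_add_sq_div_three_mul_sinh (hx : 0 ≤ x) :
    x * cosh x ≤ (1 + x ^ 2 / 3) * sinh x := by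
  have deriv_formula (y : ℝ) :
      HasDerivAt (fun y ↦ (1 + y ^ 2 / 3) * sinh y - y * cosh y)
        (y / 3 * (y * cosh y - sinh y)) y := by
    refine (((((hasDerivAt_pow 2 y).div_const 3).const_add 1).mul (hasDerivAt_sinh y)).sub
      ((hasDerivAt_id y).mul (hasDerivAt_cosh y))).congr_deriv ?_
    simp only [Nat.cast_ofNat, Nat.add_one_sub_one, pow_one, one_mul, id_eq]
    ring
  have deriv_nonneg (y : ℝ) (hy : 0 < y) : 0 ≤ y / 3 * (y * cosh y - sinh y) :=
    mul_nonneg (by positivity) (sub_nonneg.2 (sinh_le_mul_cosh hy.le))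
  simpa using le_of_hasDerivAt_nonneg hx (fun y _ ↦ deriv_formula y) deriv_nonneg

lemma sub_cube_div_fifteen_mul_cosh_le (hx : 0 ≤ x) :
    (x - x ^ 3 / 15) * cosh x ≤ (1 + 4 * x ^ 2 / 15) * sinh x := by
  have deriv_formula (y : ℝ) :
      HasDerivAt (fun y ↦ (1 + 4 * y ^ 2 / 15) * sinh y - (y - y ^ 3 / 15) * cosh y)
        (y / 15 * (7 * (y * cosh y - sinh y) + y ^ 2 * sinh y)) y := by
    refine ((((((hasDerivAt_pow 2 y).const_mul 4).div_const 15).const_add 1).mul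
      (hasDerivAt_sinh y)).sub (((hasDerivAt_id y).sub ((hasDerivAt_pow 3 y).div_const 15)).mul
      (hasDerivAt_cosh y))).congr_deriv ?_
    simp only [Nat.cast_ofNat, Nat.add_one_sub_one, pow_one, Pi.sub_apply, id_eq]
    ring
  have deriv_nonneg (y : ℝ) (hy : 0 < y) :
      0 ≤ y / 15 * (7 * (y * cosh y - sinh y) + y ^ 2 * sinh y) := by
    have h_diff : 0 ≤ y * cosh y - sinh y := sub_nonneg.2 (sinh_le_mul_cosh hy.le)
    positivity
  simpa using le_of_hasDerivAt_nonneg hx (fun y _ ↦ deriv_formula y) deriv_nonneg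

lemma one_add_sq_div_three_sub_mul_sinh_le_mul_cosh (hx : 0 ≤ x) :
    (1 + x ^ 2 / 3 - x ^ 4 / 45) * sinh x ≤ x * cosh x := by
  have deriv_formula (y : ℝ) :
      HasDerivAt (fun y ↦ y * cosh y - (1 + y ^ 2 / 3 - y ^ 4 / 45) * sinh y)
        (y / 3 * ((1 + 4 * y ^ 2 / 15) * sinh y - (y - y ^ 3 / 15) * cosh y)) y := by
    refine (((hasDerivAt_id y).mul (hasDerivAt_cosh y)).sub
      (((((hasDerivAt_pow 2 y).div_const 3).const_add 1).sub
        ((hasDerivAt_pow 4 y).div_const 45)).mul (hasDerivAt_sinh y))).congr_deriv ?_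
    simp only [one_mul, id_eq, Nat.cast_ofNat, Nat.add_one_sub_one, pow_one, Pi.sub_apply]
    ring
  have deriv_nonneg (y : ℝ) (hy : 0 < y) :
      0 ≤ y / 3 * ((1 + 4 * y ^ 2 / 15) * sinh y - (y - y ^ 3 / 15) * cosh y) :=
    mul_nonneg (by positivity) (sub_nonneg.2 (sub_cube_div_fifteen_mul_cosh_le hy.le))
  simpa using le_of_hasDerivAt_nonneg hx (fun y _ ↦ deriv_formula y) deriv_nonneg

lemma abs_mul_cosh_div_sinh_sub_le (hx : x ≠ 0) :
    |x * cosh x / sinh x - (1 + x ^ 2 / 3)| ≤ x ^ 4 / 45 := by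
  wlog hx_pos : 0 < x generalizing x
  · have h_neg := this (neg_ne_zero.2 hx) (by grind)
    simpa [Even.neg_pow (show Even 4 by decide)] using h_neg
  have h_sinh : 0 < sinh x := sinh_pos_iff.2 hx_pos
  have lower : 1 + x ^ 2 / 3 - x ^ 4 / 45 ≤ x * cosh x / sinh x :=
    (le_div_iff₀ h_sinh).2 (one_add_sq_div_three_sub_mul_sinh_le_mul_cosh hx_pos.le)
  have upper : x * cosh x / sinh x ≤ 1 + x ^ 2 / 3 :=
    (div_le_iff₀ h_sinh).2 (mul_cosh_le_one_add_sq_div_three_mul_sinh hx_pos.le)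
  rw [abs_of_nonpos (by linarith)]
  linarith

lemma abs_mul_cosh_mul_div_sinh_mul_sub_le {c : ℝ} (hc : 0 < c) (hx : x ≠ 0) :
    |x * cosh (c * x) / sinh (c * x) - (1 / c + c / 3 * x ^ 2)| ≤ c ^ 3 / 45 * x ^ 4 := by
  have rescale : x * cosh (c * x) / sinh (c * x) - (1 / c + c / 3 * x ^ 2) =
      (c * x * cosh (c * x) / sinh (c * x) - (1 + (c * x) ^ 2 / 3)) / c := by
    field_simp
  rw [rescale, abs_div, abs_of_pos hc, div_le_iff₀ hc]
  calc |c * x * cosh (c * x) / sinh (c * x) - (1 + (c * x) ^ 2 / 3)|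
      ≤ (c * x) ^ 4 / 45 := abs_mul_cosh_div_sinh_sub_le (mul_ne_zero hc.ne' hx)
    _ = c ^ 3 / 45 * x ^ 4 * c := by ring

end HyperbolicInequalities

section GaussianIntegrals

open Real

variable {s T : ℝ}

lemma integrable_comp_abs_iff {E : Type*} [NormedAddCommGroup E] [NormedSpace ℝ E] {f : ℝ → E} :
    (Integrable fun x : ℝ ↦ f |x|) ↔ IntegrableOn f (Set.Ioi 0) := by
  simpa using integrable_fun_norm_addHaar (volume : Measure ℝ) (f := f)

lemma integrable_exp_neg_mul_sq_mul_abs_rpow (hT : 0 < T) (hs : -1 < s) :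
    Integrable fun ξ : ℝ ↦ exp (-T * ξ ^ 2) * |ξ| ^ s := by
  have h_Ioi : IntegrableOn (fun ξ : ℝ ↦ exp (-T * ξ ^ 2) * ξ ^ s) (Set.Ioi 0) := by
    simpa only [mul_comm] using integrableOn_rpow_mul_exp_neg_mul_sq hT hs
  have h_abs := integrable_comp_abs_iff.2 h_Ioi
  simpa only [sq_abs] using h_abs

lemma integral_exp_neg_mul_sq_mul_abs_rpow (hT : 0 < T) (hs : -1 < s) :
    ∫ ξ : ℝ, exp (-T * ξ ^ 2) * |ξ| ^ s = T ^ (-(s + 1) / 2) * Gamma ((s + 1) / 2) := by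
  calc ∫ ξ : ℝ, exp (-T * ξ ^ 2) * |ξ| ^ s
      = 2 * ∫ ξ in Set.Ioi (0 : ℝ), exp (-T * ξ ^ 2) * ξ ^ s := by
        have h_abs := integral_comp_abs (f := fun ξ ↦ exp (-T * ξ ^ 2) * ξ ^ s)
        simpa only [sq_abs] using h_abs
    _ = 2 * ∫ ξ in Set.Ioi (0 : ℝ), ξ ^ s * exp (-T * ξ ^ (2 : ℝ)) := by
        simp only [rpow_two, mul_comm]
    _ = T ^ (-(s + 1) / 2) * Gamma ((s + 1) / 2) := by
        rw [integral_rpow_mul_exp_neg_mul_rpow two_pos hs hT]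
        ring

lemma integrable_exp_neg_mul_sq_mul_sq (hT : 0 < T) :
    Integrable fun ξ : ℝ ↦ exp (-T * ξ ^ 2) * ξ ^ 2 := by
  simpa using integrable_exp_neg_mul_sq_mul_abs_rpow hT (s := 2) (by norm_num)

lemma integral_exp_neg_mul_sq_mul_sq (hT : 0 < T) :
    ∫ ξ : ℝ, exp (-T * ξ ^ 2) * ξ ^ 2 = √(π / T) / (2 * T) := by
  have moment : ∫ ξ : ℝ, exp (-T * ξ ^ 2) * ξ ^ 2 = T ^ (-(3 / 2) : ℝ) * Gamma (3 / 2) := by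
    convert! integral_exp_neg_mul_sq_mul_abs_rpow hT (s := 2) (by norm_num) using 2 <;> norm_num
  have gamma_value : Gamma (3 / 2) = √π / 2 := by
    rw [show (3 / 2 : ℝ) = 1 / 2 + 1 by norm_num, Gamma_add_one (by norm_num), Gamma_one_half_eq]
    ring
  have power_value : T ^ (-(3 / 2) : ℝ) = 1 / (T * √T) := by
    rw [show (-(3 / 2) : ℝ) = -(1 + 1 / 2) by norm_num, rpow_neg hT.le, rpow_add hT, rpow_one,
      ← sqrt_eq_rpow, one_div]
  rw [moment, gamma_value, power_value, sqrt_div pi_nonneg]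
  field_simp

lemma integrable_exp_neg_mul_sq_mul_add_sq (hT : 0 < T) (a b : ℝ) :
    Integrable fun ξ : ℝ ↦ exp (-T * ξ ^ 2) * (a + b * ξ ^ 2) := by
  refine (((integrable_exp_neg_mul_sq hT).const_mul a).add
    ((integrable_exp_neg_mul_sq_mul_sq hT).const_mul b)).congr (.of_forall fun ξ ↦ ?_)
  simp only [Pi.add_apply]
  ring

lemma integral_exp_neg_mul_sq_mul_add_sq (hT : 0 < T) (a b : ℝ) :
    ∫ ξ : ℝ, exp (-T * ξ ^ 2) * (a + b * ξ ^ 2) = √(π / T) * (a + b / (2 * T)) := by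
  calc ∫ ξ : ℝ, exp (-T * ξ ^ 2) * (a + b * ξ ^ 2)
      = ∫ ξ : ℝ, (a * exp (-T * ξ ^ 2) + b * (exp (-T * ξ ^ 2) * ξ ^ 2)) := by
        congr with ξ
        ring
    _ = a * √(π / T) + b * (√(π / T) / (2 * T)) := by
        rw [integral_add ((integrable_exp_neg_mul_sq hT).const_mul a)
          ((integrable_exp_neg_mul_sq_mul_sq hT).const_mul b), integral_const_mul,
          integral_const_mul, integral_gaussian, integral_exp_neg_mul_sq_mul_sq hT]
    _ = √(π / T) * (a + b / (2 * T)) := by ring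

lemma norm_integral_exp_neg_mul_sq_smul_sub_le {E : Type*} [NormedAddCommGroup E]
    [NormedSpace ℝ E] {f g : ℝ → E} {M : ℝ} (hT : 0 < T) (hs : -1 < s)
    (hf : AEStronglyMeasurable f) (hg : Integrable fun ξ : ℝ ↦ exp (-T * ξ ^ 2) • g ξ)
    (hfg : ∀ᵐ ξ : ℝ, ‖f ξ - g ξ‖ ≤ M * |ξ| ^ s) :
    ‖(∫ ξ : ℝ, exp (-T * ξ ^ 2) • f ξ) - ∫ ξ : ℝ, exp (-T * ξ ^ 2) • g ξ‖ ≤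
      M * (T ^ (-(s + 1) / 2) * Gamma ((s + 1) / 2)) := by
  have majorant_integrable := (integrable_exp_neg_mul_sq_mul_abs_rpow hT hs).const_mul M
  have pointwise_bound : ∀ᵐ ξ : ℝ, ‖exp (-T * ξ ^ 2) • f ξ - exp (-T * ξ ^ 2) • g ξ‖ ≤
      M * (exp (-T * ξ ^ 2) * |ξ| ^ s) := by
    filter_upwards [hfg] with ξ hξ
    rw [← smul_sub, norm_smul, norm_of_nonneg (exp_pos _).le, mul_left_comm]
    gcongr
  have f_smul_measurable : AEStronglyMeasurable fun ξ : ℝ ↦ exp (-T * ξ ^ 2) • f ξ := by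
    fun_prop
  have diff_integrable :=
    majorant_integrable.mono' (f_smul_measurable.sub hg.aestronglyMeasurable) pointwise_bound
  have f_integrable : Integrable fun ξ : ℝ ↦ exp (-T * ξ ^ 2) • f ξ :=
    (diff_integrable.add hg).congr (.of_forall fun ξ ↦ sub_add_cancel _ _)
  rw [← integral_sub f_integrable hg, ← integral_exp_neg_mul_sq_mul_abs_rpow hT hs,
    ← integral_const_mul]
  exact norm_integral_le_of_norm_le majorant_integrable pointwise_bound

lemma sqrt_pi_div_mul_eq (hT : 0 < T) :
    √(π / T) * (1 / π + π / 3 / (2 * T)) = 1 / √(π * T) + 1 / 6 * √(π ^ 3 / T ^ 3) := by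
  have first_term : √(π / T) / π = 1 / √(π * T) := by
    rw [sqrt_div pi_nonneg, sqrt_mul pi_nonneg, div_right_comm, sqrt_div_self', div_div]
  have second_term : √(π ^ 3 / T ^ 3) = π / T * √(π / T) := by
    rw [← div_pow, pow_succ, sqrt_mul (by positivity), sqrt_sq (by positivity)]
  rw [← first_term, second_term]
  ring

end GaussianIntegrals

theorem stmt_11_general (K : ℝ → ℝ)
    (hK : ∀ ξ : ℝ, ξ ≠ 0 → K ξ = ξ * Real.cosh (Real.pi * ξ) / Real.sinh (Real.pi * ξ))
    {T : ℝ} (hT : 0 < T) :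
    |(∫ ξ : ℝ, Real.exp (-T * ξ ^ 2) * K ξ) - 1 / Real.sqrt (Real.pi * T) -
        (1 / 6) * Real.sqrt (Real.pi ^ 3 / T ^ 3)| ≤
      Real.pi ^ 3 / 45 * Real.Gamma (5 / 2) * T ^ (-(5 : ℝ) / 2) := by
  have K_ae : ∀ᵐ ξ : ℝ, K ξ = ξ * Real.cosh (Real.pi * ξ) / Real.sinh (Real.pi * ξ) :=
    (Measure.ae_ne volume 0).mono hK
  have K_measurable : AEStronglyMeasurable K :=
    AEStronglyMeasurable.congr (Measurable.aestronglyMeasurable (by fun_prop))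
      (K_ae.mono fun _ ↦ .symm)
  have K_approx : ∀ᵐ ξ : ℝ, ‖K ξ - (1 / Real.pi + Real.pi / 3 * ξ ^ 2)‖ ≤
      Real.pi ^ 3 / 45 * |ξ| ^ (4 : ℝ) := by
    filter_upwards [Measure.ae_ne volume 0] with ξ hξ
    rw [hK ξ hξ, Real.norm_eq_abs, Real.rpow_ofNat, Even.pow_abs (by decide)]
    exact abs_mul_cosh_mul_div_sinh_mul_sub_le Real.pi_pos hξ
  have remainder := norm_integral_exp_neg_mul_sq_smul_sub_le hT (by norm_num) K_measurable
    (integrable_exp_neg_mul_sq_mul_add_sq hT _ _) K_approx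
  simp only [smul_eq_mul, integral_exp_neg_mul_sq_mul_add_sq hT, sqrt_pi_div_mul_eq hT,
    Real.norm_eq_abs] at remainder
  rw [sub_sub, mul_assoc, mul_comm (Real.Gamma _)]
  convert! remainder using 4 <;> norm_num

/-- Large-time asymptotics of `I(T) = ∫_ℝ e^{−Tξ²}·ξ·coth(πξ) dξ`:
`I(T) = 1/√(πT) + (1/6)√(π³/T³) + O(T^{−5/2})` as `T → ∞`. -/
theorem stmt_11 (K : ℝ → ℝ)
    (hK : ∀ ξ : ℝ, K ξ = if ξ = 0 then 1 / Real.pi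
      else ξ * Real.cosh (Real.pi * ξ) / Real.sinh (Real.pi * ξ)) :
    ∃ C > (0 : ℝ), ∃ T₀ > (0 : ℝ), ∀ T : ℝ, T₀ < T →
      |(∫ ξ : ℝ, Real.exp (-T * ξ ^ 2) * K ξ) - 1 / Real.sqrt (Real.pi * T) -
          (1 / 6) * Real.sqrt (Real.pi ^ 3 / T ^ 3)| ≤
        C * T ^ (-(5 : ℝ) / 2) :=
  ⟨Real.pi ^ 3 / 45 * Real.Gamma (5 / 2), by positivity, 1, one_pos, fun _ hT ↦
    stmt_11_general K (fun ξ hξ ↦ (hK ξ).trans (if_neg hξ)) (one_pos.trans hT)⟩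
end

section
/- Let α > 0 and suppose for every t ∈ [0,1] we are given a sequence (λ_j(t))_{j∈ℕ} of nonnegative reals such that for every λ ≥ 0 the set {j : λ_j(t) ≤ λ} is finite and Σ_{j=0}^∞ e^{−T·λ_j(t)} < ∞ for every T > 0. Set N_t(λ) := #{j : λ_j(t) ≤ λ}. If T·Σ_{j=0}^∞ e^{−T·λ_j(t)} → α as T → 0⁺ uniformly in t ∈ [0,1], then N_t(λ)/λ → α as λ → ∞ uniformly in t ∈ [0,1]. -/
open Filter MeasureTheory

/-!
Replace each sequence by its counting measure `∑ j, δ_{λ_j(t)}`, dilate this by `Λ` and normalise by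
`Λ ^ ρ` (the theorem is the case `ρ = 1`). Evaluating the hypothesis at `T = (n + 1) / Λ` shows that
the Laplace transforms of the dilated measures converge at every positive integer to those of
`C u ^ (ρ - 1) du / Γ(ρ)`, uniformly in the parameter. Under `x = exp (-u)` these are the moments of
measures on `[0, 1]`, so Weierstrass approximation gives convergence against
`exp (-u) * g (exp (-u))` for every continuous `g`. Such test functions fit between the indicators
of `u ≤ a` and `u ≤ b` whenever `a < b`, which gives convergence of the distribution functions; at
`1` this is the claim. Uniformity costs nothing: it is convergence along `atTop ×ˢ 𝓟 S`, and the
argument works along any filter.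
-/

open Real Set Topology

/-- A measure concentrated on `[0, ∞)` whose Laplace transform is finite at `1`. The measure itself
may be infinite. -/
structure IsLaplaceMeasure (μ : Measure ℝ) : Prop where
  ae_nonneg : ∀ᵐ u ∂μ, 0 ≤ u
  integrable_exp_neg : Integrable (fun u => exp (-u)) μ

namespace IsLaplaceMeasure

variable {μ : Measure ℝ} {f g : ℝ → ℝ}

lemma smul (hμ : IsLaplaceMeasure μ) {c : ENNReal} (hc : c ≠ ⊤) : IsLaplaceMeasure (c • μ) :=
  ⟨Measure.ae_smul_measure hμ.ae_nonneg c, hμ.integrable_exp_neg.smul_measure hc⟩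

lemma ae_exp_neg_mem_Icc (hμ : IsLaplaceMeasure μ) : ∀ᵐ u ∂μ, exp (-u) ∈ Icc (0 : ℝ) 1 := by
  filter_upwards [hμ.ae_nonneg] with u hu
  exact ⟨(exp_pos _).le, exp_le_one_iff.2 (neg_nonpos.2 hu)⟩

lemma integrable_exp_neg_mul_comp (hμ : IsLaplaceMeasure μ) (hg : Continuous g) :
    Integrable (fun u => exp (-u) * g (exp (-u))) μ := by
  obtain ⟨K, hK⟩ := isCompact_Icc.exists_bound_of_continuousOn (s := Icc (0 : ℝ) 1) hg.continuousOn
  refine hμ.integrable_exp_neg.mul_bdd (c := K) ?_ ?_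
  · exact (by fun_prop : Continuous fun u => g (exp (-u))).aestronglyMeasurable
  · filter_upwards [hμ.ae_exp_neg_mem_Icc] with u hu using hK _ hu

lemma abs_integral_sub_le (hμ : IsLaplaceMeasure μ) (hf : Continuous f) (hg : Continuous g)
    {δ : ℝ} (hfg : ∀ x ∈ Icc (0 : ℝ) 1, |f x - g x| ≤ δ) :
    |∫ u, exp (-u) * f (exp (-u)) ∂μ - ∫ u, exp (-u) * g (exp (-u)) ∂μ| ≤
      δ * ∫ u, exp (-u) ∂μ := by
  rw [← integral_sub (hμ.integrable_exp_neg_mul_comp hf) (hμ.integrable_exp_neg_mul_comp hg),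
    ← integral_const_mul, ← norm_eq_abs]
  refine norm_integral_le_of_norm_le (hμ.integrable_exp_neg.const_mul δ) ?_
  filter_upwards [hμ.ae_exp_neg_mem_Icc] with u hu
  rw [← mul_sub, norm_mul, norm_of_nonneg hu.1, mul_comm]
  exact mul_le_mul_of_nonneg_right (hfg _ hu) hu.1

lemma integral_exp_neg_mul_eval (hμ : IsLaplaceMeasure μ) (P : Polynomial ℝ) :
    ∫ u, exp (-u) * P.eval (exp (-u)) ∂μ =
      ∑ n ∈ Finset.range (P.natDegree + 1), P.coeff n * ∫ u, exp (-(n + 1) * u) ∂μ := by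
  have exp_mul_pow (n : ℕ) (u : ℝ) : exp (-u) * exp (-u) ^ n = exp (-(n + 1) * u) := by
    rw [← exp_nat_mul, ← exp_add]
    ring_nf
  have integrable_exp (n : ℕ) : Integrable (fun u => exp (-(n + 1) * u)) μ := by
    simpa only [exp_mul_pow] using hμ.integrable_exp_neg_mul_comp (continuous_pow n)
  calc ∫ u, exp (-u) * P.eval (exp (-u)) ∂μ
      = ∫ u, ∑ n ∈ Finset.range (P.natDegree + 1), P.coeff n * exp (-(n + 1) * u) ∂μ := by
        simp_rw [Polynomial.eval_eq_sum_range, Finset.mul_sum, mul_left_comm, exp_mul_pow]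
    _ = _ := by
        rw [integral_finsetSum _ fun n _ => (integrable_exp n).const_mul _]
        simp_rw [integral_const_mul]

lemma integrable_indicator_Iic (hμ : IsLaplaceMeasure μ) (b : ℝ) :
    Integrable ((Iic b).indicator (1 : ℝ → ℝ)) μ := by
  have hlt : μ {u | exp (-b) ≤ exp (-u)} < ⊤ :=
    hμ.integrable_exp_neg.measure_ge_lt_top (exp_pos (-b))
  simp only [exp_le_exp, neg_le_neg_iff] at hlt
  exact (integrable_indicator_iff measurableSet_Iic).2 (integrableOn_const hlt.ne)

lemma measureReal_Iic_le_integral (hμ : IsLaplaceMeasure μ) (hf : Integrable f μ) {a : ℝ}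
    (hle : ∀ u, (Iic a).indicator 1 u ≤ f u) : μ.real (Iic a) ≤ ∫ u, f u ∂μ := by
  rw [← integral_indicator_one measurableSet_Iic]
  exact integral_mono (hμ.integrable_indicator_Iic a) hf hle

lemma integral_le_measureReal_Iic (hμ : IsLaplaceMeasure μ) (hf : Integrable f μ) {b : ℝ}
    (hle : ∀ u, f u ≤ (Iic b).indicator 1 u) : ∫ u, f u ∂μ ≤ μ.real (Iic b) := by
  rw [← integral_indicator_one measurableSet_Iic]
  exact integral_mono hf (hμ.integrable_indicator_Iic b) hle

end IsLaplaceMeasure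

lemma exists_continuous_exp_neg_mul_between_indicator_Iic {a b : ℝ} (hab : a < b) :
    ∃ g : ℝ → ℝ, Continuous g ∧ ∀ u, (Iic a).indicator 1 u ≤ exp (-u) * g (exp (-u)) ∧
      exp (-u) * g (exp (-u)) ≤ (Iic b).indicator 1 u := by
  obtain ⟨φ, hφ0, hφ1, hφ⟩ := exists_continuous_zero_one_of_isClosed
    (isClosed_Iic (a := exp (-b))) (isClosed_Ici (a := exp (-a)))
    (Iic_disjoint_Ici.2 (by simpa using hab))
  have max_pos (x : ℝ) : 0 < max x (exp (-b)) := lt_max_of_lt_right (exp_pos _)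
  refine ⟨fun x => (max x (exp (-b)))⁻¹ * φ x,
    ((by fun_prop : Continuous _).inv₀ fun x => (max_pos x).ne').mul φ.continuous, fun u => ?_⟩
  rcases le_or_gt u b with hub | hbu
  · have hmax : max (exp (-u)) (exp (-b)) = exp (-u) := max_eq_left (by simpa using hub)
    simp only [hmax, mul_inv_cancel_left₀ (exp_ne_zero _)]
    refine ⟨indicator_apply_le' (fun hua => ?_) fun _ => (hφ _).1, ?_⟩
    · exact (hφ1 (exp_le_exp.2 (neg_le_neg hua))).ge
    · simpa [hub] using (hφ (exp (-u))).2
  · have hφu : φ (exp (-u)) = 0 := hφ0 (by simpa using hbu.le)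
    simp [hφu, hbu, hab.trans hbu]

section ContinuityTheorem

variable {ι : Type*} {l : Filter ι} {μ : ι → Measure ℝ} {ν : Measure ℝ}

lemma tendsto_integral_exp_neg_mul_eval_of_tendsto_laplace
    (hμ : ∀ᶠ i in l, IsLaplaceMeasure (μ i)) (hν : IsLaplaceMeasure ν)
    (hlim : ∀ n : ℕ, Tendsto (fun i => ∫ u, exp (-(n + 1) * u) ∂μ i) l
      (𝓝 (∫ u, exp (-(n + 1) * u) ∂ν)))
    (P : Polynomial ℝ) :
    Tendsto (fun i => ∫ u, exp (-u) * P.eval (exp (-u)) ∂μ i) l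
      (𝓝 (∫ u, exp (-u) * P.eval (exp (-u)) ∂ν)) := by
  rw [hν.integral_exp_neg_mul_eval]
  refine (tendsto_finsetSum _ fun n _ => (hlim n).const_mul (P.coeff n)).congr' ?_
  filter_upwards [hμ] with i hi using (hi.integral_exp_neg_mul_eval P).symm

theorem tendsto_integral_exp_neg_mul_comp_of_tendsto_laplace
    (hμ : ∀ᶠ i in l, IsLaplaceMeasure (μ i)) (hν : IsLaplaceMeasure ν)
    (hlim : ∀ n : ℕ, Tendsto (fun i => ∫ u, exp (-(n + 1) * u) ∂μ i) l
      (𝓝 (∫ u, exp (-(n + 1) * u) ∂ν)))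
    {g : ℝ → ℝ} (hg : Continuous g) :
    Tendsto (fun i => ∫ u, exp (-u) * g (exp (-u)) ∂μ i) l
      (𝓝 (∫ u, exp (-u) * g (exp (-u)) ∂ν)) := by
  have hlim_mass : Tendsto (fun i => ∫ u, exp (-u) ∂μ i) l (𝓝 (∫ u, exp (-u) ∂ν)) := by
    simpa using hlim 0
  set M := ∫ u, exp (-u) ∂ν
  have hM : 0 ≤ M := integral_nonneg fun u => (exp_pos _).le
  refine Metric.tendsto_nhds.2 fun ε hε => ?_
  obtain ⟨δ, hδ, hδε⟩ : ∃ δ > 0, δ * (M + 1) + δ + δ * M = ε :=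
    ⟨ε / (2 * (M + 1)), by positivity, by field_simp; ring⟩
  obtain ⟨P, hP⟩ := exists_polynomial_near_of_continuousOn 0 1 g hg.continuousOn δ hδ
  have hPg : ∀ x ∈ Icc (0 : ℝ) 1, |P.eval x - g x| ≤ δ := fun x hx => (hP x hx).le
  have hlim_poly := tendsto_integral_exp_neg_mul_eval_of_tendsto_laplace hμ hν hlim P
  have hν_near := hν.abs_integral_sub_le P.continuous hg hPg
  filter_upwards [hμ, hlim_mass.eventually_lt_const (lt_add_one M),
    Metric.tendsto_nhds.1 hlim_poly δ hδ] with i hi hmass hpoly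
  have hμ_near := hi.abs_integral_sub_le P.continuous hg hPg
  have hmass_le := mul_le_mul_of_nonneg_left hmass.le hδ.le
  rw [dist_eq] at hpoly ⊢
  rw [abs_lt] at hpoly ⊢
  rw [abs_le] at hμ_near hν_near
  constructor <;> linarith [hpoly.1, hpoly.2, hμ_near.1, hμ_near.2, hν_near.1, hν_near.2]

theorem tendsto_measureReal_Iic_of_tendsto_laplace
    (hμ : ∀ᶠ i in l, IsLaplaceMeasure (μ i)) (hν : IsLaplaceMeasure ν)
    (hlim : ∀ n : ℕ, Tendsto (fun i => ∫ u, exp (-(n + 1) * u) ∂μ i) l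
      (𝓝 (∫ u, exp (-(n + 1) * u) ∂ν)))
    {a : ℝ} (ha : ContinuousAt (fun b => ν.real (Iic b)) a) :
    Tendsto (fun i => (μ i).real (Iic a)) l (𝓝 (ν.real (Iic a))) := by
  refine tendsto_order.2 ⟨fun c hc => ?_, fun c hc => ?_⟩
  · obtain ⟨b, hcb, hba⟩ :=
      ((ha.eventually_const_lt hc).filter_mono nhdsWithin_le_nhds |>.and
        (self_mem_nhdsWithin (s := Iio a))).exists
    obtain ⟨g, hg, hbetween⟩ := exists_continuous_exp_neg_mul_between_indicator_Iic hba
    have hcg := hcb.trans_le <| hν.measureReal_Iic_le_integral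
      (hν.integrable_exp_neg_mul_comp hg) fun u => (hbetween u).1
    filter_upwards [hμ, (tendsto_integral_exp_neg_mul_comp_of_tendsto_laplace hμ hν hlim
      hg).eventually_const_lt hcg] with i hi hci
    exact hci.trans_le <| hi.integral_le_measureReal_Iic
      (hi.integrable_exp_neg_mul_comp hg) fun u => (hbetween u).2
  · obtain ⟨b, hbc, hab⟩ :=
      ((ha.eventually_lt_const hc).filter_mono nhdsWithin_le_nhds |>.and
        (self_mem_nhdsWithin (s := Ioi a))).exists
    obtain ⟨g, hg, hbetween⟩ := exists_continuous_exp_neg_mul_between_indicator_Iic hab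
    have hgc := (hν.integral_le_measureReal_Iic
      (hν.integrable_exp_neg_mul_comp hg) fun u => (hbetween u).2).trans_lt hbc
    filter_upwards [hμ, (tendsto_integral_exp_neg_mul_comp_of_tendsto_laplace hμ hν hlim
      hg).eventually_lt_const hgc] with i hi hic
    exact (hi.measureReal_Iic_le_integral
      (hi.integrable_exp_neg_mul_comp hg) fun u => (hbetween u).1).trans_lt hic

end ContinuityTheorem

/-- The measure `u ^ (ρ - 1) du / Γ(ρ)` on `(0, ∞)`, for `0 < ρ`: a multiple of it is the limit of
the dilated measures. It is normalised so that its Laplace transform is `s ↦ (s ^ ρ)⁻¹`. -/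
noncomputable def powerMeasure (ρ : ℝ) : Measure ℝ :=
  (volume.restrict (Ioi 0)).withDensity fun u => ENNReal.ofReal (u ^ (ρ - 1) / Gamma ρ)

section PowerMeasure

variable {ρ : ℝ}

lemma integral_powerMeasure (hρ : 0 < ρ) (f : ℝ → ℝ) :
    ∫ u, f u ∂powerMeasure ρ = (∫ u in Ioi 0, u ^ (ρ - 1) * f u) / Gamma ρ := by
  rw [powerMeasure, integral_withDensity_eq_integral_toReal_smul (by fun_prop) (by simp),
    ← integral_div]
  refine setIntegral_congr_fun measurableSet_Ioi fun u hu => ?_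
  have hdensity : 0 ≤ u ^ (ρ - 1) / Gamma ρ :=
    div_nonneg (rpow_nonneg (le_of_lt hu) _) (Gamma_pos_of_pos hρ).le
  simp only [ENNReal.toReal_ofReal hdensity, smul_eq_mul, div_mul_eq_mul_div]

lemma integral_exp_neg_mul_powerMeasure (hρ : 0 < ρ) {s : ℝ} (hs : 0 < s) :
    ∫ u, exp (-s * u) ∂powerMeasure ρ = (s ^ ρ)⁻¹ := by
  simp_rw [integral_powerMeasure hρ, neg_mul]
  rw [integral_rpow_mul_exp_neg_mul_Ioi hρ hs, mul_div_cancel_right₀ _ (Gamma_pos_of_pos hρ).ne',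
    one_div, inv_rpow hs.le]

lemma isLaplaceMeasure_powerMeasure (hρ : 0 < ρ) : IsLaplaceMeasure (powerMeasure ρ) where
  ae_nonneg := (withDensity_absolutelyContinuous _ _).ae_le <|
    ae_restrict_of_forall_mem measurableSet_Ioi fun _ hu => le_of_lt hu
  integrable_exp_neg := by
    have hlaplace := integral_exp_neg_mul_powerMeasure hρ one_pos
    simp only [neg_mul, one_mul, one_rpow, inv_one] at hlaplace
    exact .of_integral_ne_zero (hlaplace ▸ one_ne_zero)

lemma measureReal_powerMeasure_Iic (hρ : 0 < ρ) {b : ℝ} (hb : 0 ≤ b) :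
    (powerMeasure ρ).real (Iic b) = b ^ ρ / Gamma (ρ + 1) := by
  calc (powerMeasure ρ).real (Iic b)
      = (∫ u in Ioi 0, (Iic b).indicator (fun u => u ^ (ρ - 1)) u) / Gamma ρ := by
        rw [← integral_indicator_one measurableSet_Iic, integral_powerMeasure hρ]
        simp [indicator_apply]
    _ = (∫ u in (0)..b, u ^ (ρ - 1)) / Gamma ρ := by
        rw [setIntegral_indicator measurableSet_Iic, Ioi_inter_Iic,
          intervalIntegral.integral_of_le hb]
    _ = b ^ ρ / Gamma (ρ + 1) := by
        rw [integral_rpow (.inl (by linarith)), sub_add_cancel, zero_rpow hρ.ne', sub_zero,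
          div_div, Gamma_add_one hρ.ne']

end PowerMeasure

/-- The image of `μ` under `x ↦ x / Λ`, normalised by `Λ ^ ρ`: its value on `(-∞, 1]` is the ratio
`μ (-∞, Λ] / Λ ^ ρ` whose limit is sought. Meaningful for `0 < Λ`. -/
noncomputable def dilation (ρ Λ : ℝ) (μ : Measure ℝ) : Measure ℝ :=
  ENNReal.ofReal (Λ ^ ρ)⁻¹ • μ.map (· / Λ)

section Dilation

variable {ρ Λ : ℝ} {μ : Measure ℝ}

lemma integral_exp_neg_mul_dilation (hΛ : 0 < Λ) (s : ℝ) :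
    ∫ u, exp (-s * u) ∂dilation ρ Λ μ = (Λ ^ ρ)⁻¹ * ∫ x, exp (-(s / Λ) * x) ∂μ := by
  rw [dilation, integral_smul_measure, ENNReal.toReal_ofReal (by positivity), smul_eq_mul,
    integral_map (by fun_prop) (by fun_prop)]
  simp_rw [mul_div_assoc', neg_mul, neg_div, div_mul_eq_mul_div]

lemma measureReal_dilation_Iic_one (hΛ : 0 < Λ) :
    (dilation ρ Λ μ).real (Iic 1) = μ.real (Iic Λ) / Λ ^ ρ := by
  have hpreimage : (· / Λ) ⁻¹' Iic 1 = Iic Λ := by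
    ext x
    exact div_le_one hΛ
  rw [dilation, measureReal_ennreal_smul_apply, map_measureReal_apply (by fun_prop)
    measurableSet_Iic, hpreimage, ENNReal.toReal_ofReal (by positivity), inv_mul_eq_div]

lemma isLaplaceMeasure_dilation (hΛ : 0 < Λ) (hμ : ∀ᵐ x ∂μ, 0 ≤ x)
    (hint : Integrable (fun x => exp (-Λ⁻¹ * x)) μ) : IsLaplaceMeasure (dilation ρ Λ μ) := by
  refine IsLaplaceMeasure.smul ⟨?_, ?_⟩ ENNReal.ofReal_ne_top
  · rw [ae_map_iff (by fun_prop) measurableSet_Ici]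
    filter_upwards [hμ] with x hx using div_nonneg hx hΛ.le
  · rw [integrable_map_measure (by fun_prop) (by fun_prop)]
    simpa only [Function.comp_def, div_eq_inv_mul, neg_mul] using hint

end Dilation

section Karamata

variable {X : Type*} {S : Set X} {μ : X → Measure ℝ} {ρ C : ℝ}

lemma eventually_atTop_prod_principal_pos_mem (S : Set X) :
    ∀ᶠ q : ℝ × X in atTop ×ˢ 𝓟 S, 0 < q.1 ∧ q.2 ∈ S :=
  (eventually_gt_atTop 0).prod_mk (eventually_principal.2 fun _ ht => ht)

lemma tendsto_integral_exp_neg_mul_dilation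
    (hunif : TendstoUniformlyOn (fun T t => T ^ ρ * ∫ x, exp (-T * x) ∂μ t) (fun _ => C)
      (𝓝[>] 0) S) {s : ℝ} (hs : 0 < s) :
    Tendsto (fun q : ℝ × X => ∫ u, exp (-s * u) ∂dilation ρ q.1 (μ q.2)) (atTop ×ˢ 𝓟 S)
      (𝓝 (C / s ^ ρ)) := by
  have hdiv : Tendsto (fun Λ : ℝ => s / Λ) atTop (𝓝[>] 0) :=
    tendsto_nhdsWithin_iff.2 ⟨tendsto_const_nhds.div_atTop tendsto_id,
      (eventually_gt_atTop 0).mono fun Λ hΛ => div_pos hs hΛ⟩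
  have hcomp := ((tendsto_prod_principal_iff.2 hunif).comp
    (hdiv.prodMap (tendsto_id (x := 𝓟 S)))).div_const (s ^ ρ)
  refine hcomp.congr' ?_
  filter_upwards [eventually_atTop_prod_principal_pos_mem S] with ⟨Λ, t⟩ ⟨hΛ, _⟩
  have hsρ : s ^ ρ ≠ 0 := (rpow_pos_of_pos hs ρ).ne'
  simp only [Function.comp_apply, Prod.map_apply, id_eq, Function.HasUncurry.uncurry,
    integral_exp_neg_mul_dilation hΛ, div_rpow hs.le hΛ.le]
  field_simp

theorem tendstoUniformlyOn_measureReal_Iic_div_rpow (hρ : 0 < ρ) (hC : 0 ≤ C)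
    (hnonneg : ∀ t ∈ S, ∀ᵐ x ∂μ t, 0 ≤ x)
    (hint : ∀ t ∈ S, ∀ T : ℝ, 0 < T → Integrable (fun x => exp (-T * x)) (μ t))
    (hunif : TendstoUniformlyOn (fun T t => T ^ ρ * ∫ x, exp (-T * x) ∂μ t) (fun _ => C)
      (𝓝[>] 0) S) :
    TendstoUniformlyOn (fun Λ t => (μ t).real (Iic Λ) / Λ ^ ρ) (fun _ => C / Gamma (ρ + 1))
      atTop S := by
  set ν := ENNReal.ofReal C • powerMeasure ρ with hν_def
  have hν : IsLaplaceMeasure ν := (isLaplaceMeasure_powerMeasure hρ).smul ENNReal.ofReal_ne_top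
  have hν_laplace (n : ℕ) : ∫ u, exp (-(n + 1) * u) ∂ν = C / (n + 1) ^ ρ := by
    rw [hν_def, integral_smul_measure, ENNReal.toReal_ofReal hC, smul_eq_mul,
      integral_exp_neg_mul_powerMeasure hρ n.cast_add_one_pos, div_eq_mul_inv]
  have hν_Iic {b : ℝ} (hb : 0 ≤ b) : ν.real (Iic b) = C * (b ^ ρ / Gamma (ρ + 1)) := by
    rw [hν_def, measureReal_ennreal_smul_apply, ENNReal.toReal_ofReal hC,
      measureReal_powerMeasure_Iic hρ hb]
  have hν_cont : ContinuousAt (fun b => ν.real (Iic b)) 1 :=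
    (((continuousAt_rpow_const 1 ρ (.inl one_ne_zero)).div_const _).const_mul C).congr <|
      (eventually_ge_nhds one_pos).mono fun b hb => (hν_Iic hb).symm
  have hdilation : ∀ᶠ q : ℝ × X in atTop ×ˢ 𝓟 S, IsLaplaceMeasure (dilation ρ q.1 (μ q.2)) := by
    filter_upwards [eventually_atTop_prod_principal_pos_mem S] with ⟨Λ, t⟩ ⟨hΛ, ht⟩
    exact isLaplaceMeasure_dilation hΛ (hnonneg t ht) (hint t ht _ (inv_pos.2 hΛ))
  have hlim := tendsto_measureReal_Iic_of_tendsto_laplace hdilation hν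
    (fun n => by
      rw [hν_laplace]
      exact tendsto_integral_exp_neg_mul_dilation hunif n.cast_add_one_pos) hν_cont
  rw [hν_Iic zero_le_one, one_rpow, mul_one_div] at hlim
  refine tendsto_prod_principal_iff.1 (hlim.congr' ?_)
  filter_upwards [eventually_atTop_prod_principal_pos_mem S] with ⟨Λ, t⟩ ⟨hΛ, _⟩
  exact measureReal_dilation_Iic_one hΛ

end Karamata

section Counting

variable {ι : Type*} [Countable ι] [MeasurableSpace ι] [MeasurableSingletonClass ι]

lemma integral_count_eq_tsum (f : ι → ℝ) : ∫ j, f j ∂Measure.count = ∑' j, f j := by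
  by_cases hf : Integrable f Measure.count
  · simp [integral_countable hf]
  · rw [integral_undef hf, tsum_eq_zero_of_not_summable fun h => hf (integrable_count_iff.2 h.norm)]

lemma measureReal_count_eq_natCard (s : Set ι) :
    (Measure.count : Measure ι).real s = Nat.card s := by
  rw [measureReal_def, Measure.count_apply s.to_countable.measurableSet, Nat.card_coe_set_eq]
  cases h : s.encard <;> simp [Set.ncard, h]

end Counting

theorem stmt_12_general {X ι : Type*} [Countable ι] {S : Set X} {ρ C : ℝ} (hρ : 0 < ρ)
    (hC : 0 ≤ C) {lam : X → ι → ℝ} (hnonneg : ∀ t ∈ S, ∀ j, 0 ≤ lam t j)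
    (hsum : ∀ t ∈ S, ∀ T : ℝ, 0 < T → Summable fun j => exp (-T * lam t j))
    (hunif : TendstoUniformlyOn (fun T t => T ^ ρ * ∑' j, exp (-T * lam t j)) (fun _ => C)
      (𝓝[>] 0) S) :
    TendstoUniformlyOn (fun Λ t => (Nat.card {j | lam t j ≤ Λ} : ℝ) / Λ ^ ρ)
      (fun _ => C / Gamma (ρ + 1)) atTop S := by
  let _ : MeasurableSpace ι := ⊤
  have hmeas (t : X) : Measurable (lam t) := measurable_from_top
  have htrace (T : ℝ) (t : X) : ∫ x, exp (-T * x) ∂(Measure.count.map (lam t)) =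
      ∑' j, exp (-T * lam t j) := by
    rw [integral_map (hmeas t).aemeasurable (by fun_prop), integral_count_eq_tsum]
  have hcount (Λ : ℝ) (t : X) : (Measure.count.map (lam t)).real (Iic Λ) =
      Nat.card {j | lam t j ≤ Λ} := by
    rw [map_measureReal_apply (hmeas t) measurableSet_Iic, measureReal_count_eq_natCard]
    rfl
  have hae (t : X) (ht : t ∈ S) : ∀ᵐ x ∂(Measure.count.map (lam t)), 0 ≤ x :=
    (ae_map_iff (hmeas t).aemeasurable measurableSet_Ici).2 (.of_forall (hnonneg t ht))
  have hint (t : X) (ht : t ∈ S) (T : ℝ) (hT : 0 < T) :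
      Integrable (fun x => exp (-T * x)) (Measure.count.map (lam t)) :=
    (integrable_map_measure (by fun_prop) (hmeas t).aemeasurable).2
      (integrable_count_iff.2 (hsum t ht T hT).norm)
  simp_rw [← hcount]
  simp_rw [← htrace] at hunif
  exact tendstoUniformlyOn_measureReal_Iic_div_rpow hρ hC hae hint hunif

/-- Uniform Karamata-type Tauberian theorem: if for a family of nonnegative eigenvalue
sequences `λ_j(t)`, `t ∈ [0,1]`, the rescaled heat traces `T·Σ_j e^{−Tλ_j(t)}` converge
to `α` as `T → 0⁺` uniformly in `t`, then the counting functions satisfy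
`N_t(λ)/λ → α` as `λ → ∞` uniformly in `t`. -/
theorem stmt_12 (α : ℝ) (hα : 0 < α) (lam : ℝ → ℕ → ℝ)
    (hnonneg : ∀ t ∈ Set.Icc (0 : ℝ) 1, ∀ j : ℕ, 0 ≤ lam t j)
    (hfin : ∀ t ∈ Set.Icc (0 : ℝ) 1, ∀ Λ : ℝ, 0 ≤ Λ → {j : ℕ | lam t j ≤ Λ}.Finite)
    (hsum : ∀ t ∈ Set.Icc (0 : ℝ) 1, ∀ T : ℝ, 0 < T →
      Summable (fun j : ℕ => Real.exp (-T * lam t j)))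
    (hunif : TendstoUniformlyOn
      (fun T : ℝ => fun t : ℝ => T * ∑' j : ℕ, Real.exp (-T * lam t j))
      (fun _ => α) (nhdsWithin 0 (Set.Ioi 0)) (Set.Icc 0 1)) :
    TendstoUniformlyOn
      (fun Λ : ℝ => fun t : ℝ => (Nat.card {j : ℕ | lam t j ≤ Λ} : ℝ) / Λ)
      (fun _ => α) atTop (Set.Icc 0 1) := by
  simpa [one_add_one_eq_two] using
    stmt_12_general one_pos hα.le hnonneg hsum (by simpa only [rpow_one] using hunif)
end

section
/- For every s ∈ ℂ with Re(s) > 1, the infinite product ∏_{k=0}^∞ (1 + e^{−(s+k)ℓ})² converges absolutely for every ℓ > 0, and lim_{ℓ→0⁺} e^{−π²/(6ℓ)} · ∏_{k=0}^∞ (1 + e^{−(s+k)ℓ})² = 2^{1−2s}, where 2^{1−2s} := exp((1−2s)·log 2). -/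
open Filter

/-!
Write `f z = log (1 + e^{-z})` and `Φ z = -Li₂(-e^{-z})`, so that `Φ' = -f`, `Φ → 0` as
`Re z → ∞` and `Φ 0 = π² / 12`. The midpoint rule on the segments
`[(s + k - 1/2) ℓ, (s + k + 1/2) ℓ]` gives `ℓ ∑ₖ f ((s + k) ℓ) = Φ ((s - 1/2) ℓ) + O(ℓ²)` for
`Re s > 1/2`, and `Φ (w ℓ) = π² / 12 - w ℓ log 2 + o(ℓ)`; hence the logarithm of
`∏ₖ (1 + e^{-(s + k) ℓ})` is `π² / (12 ℓ) + (1/2 - s) log 2 + o(1)`. Splitting off the factor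
`k = 0`, which tends to `2`, carries the asymptotics from `s + 1` to `s`, and so to all `s ∈ ℂ`.
-/

open Set
open scoped Topology

section NormedSpace

variable {E : Type*} [NormedAddCommGroup E]

lemma norm_sub_le_of_norm_telescope_sub_le {u v : ℕ → E} {S : E} {c : ℕ → ℝ} {C : ℝ}
    (hu : Tendsto u atTop (𝓝 0)) (hv : HasSum v S) (hc : HasSum c C)
    (huv : ∀ k, ‖u k - u (k + 1) - v k‖ ≤ c k) : ‖u 0 - S‖ ≤ C := by
  have partial_sum_le (N : ℕ) :
      ‖u 0 - u N - ∑ k ∈ Finset.range N, v k‖ ≤ ∑ k ∈ Finset.range N, c k := by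
    rw [← Finset.sum_range_sub', ← Finset.sum_sub_distrib]
    exact norm_sum_le_of_le _ fun k _ => huv k
  have hlim : Tendsto (fun N => ‖u 0 - u N - ∑ k ∈ Finset.range N, v k‖) atTop (𝓝 ‖u 0 - S‖) := by
    simpa using ((hu.const_sub (u 0)).sub hv.tendsto_sum_nat).norm
  exact le_of_tendsto_of_tendsto' hlim hc.tendsto_sum_nat partial_sum_le

variable [NormedSpace ℝ E]

lemma norm_le_of_norm_deriv_le_mul_pow {g g' : ℝ → E} {C h : ℝ} {n : ℕ}
    (hg : ∀ t ∈ Icc 0 h, HasDerivAt g (g' t) t) (hg0 : g 0 = 0)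
    (hg' : ∀ t ∈ Icc 0 h, ‖g' t‖ ≤ C * t ^ n) :
    ∀ t ∈ Icc 0 h, ‖g t‖ ≤ C / (n + 1) * t ^ (n + 1) := by
  have hB (t : ℝ) : HasDerivAt (fun t => C / (n + 1) * t ^ (n + 1)) (C * t ^ n) t := by
    refine ((hasDerivAt_pow (n + 1) t).const_mul _).congr_deriv ?_
    rw [Nat.add_sub_cancel]
    push_cast
    field_simp
  exact fun t ht => image_norm_le_of_norm_deriv_right_le_deriv_boundary
    (fun t ht => (hg t ht).continuousAt.continuousWithinAt)
    (fun t ht => (hg t (Ico_subset_Icc_self ht)).hasDerivWithinAt) (by simp [hg0]) hB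
    (fun t ht => hg' t (Ico_subset_Icc_self ht)) ht

theorem norm_midpoint_rule_error_le {F f f' f'' : ℝ → E} {c h M : ℝ} (hh : 0 ≤ h)
    (hF : ∀ t ∈ Icc (c - h) (c + h), HasDerivAt F (f t) t)
    (hf : ∀ t ∈ Icc (c - h) (c + h), HasDerivAt f (f' t) t)
    (hf' : ∀ t ∈ Icc (c - h) (c + h), HasDerivAt f' (f'' t) t)
    (hM : ∀ t ∈ Icc (c - h) (c + h), ‖f'' t‖ ≤ M) :
    ‖F (c + h) - F (c - h) - (2 * h) • f c‖ ≤ M / 3 * h ^ 3 := by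
  have right_mem {t : ℝ} (ht : t ∈ Icc 0 h) : c + t ∈ Icc (c - h) (c + h) := by
    constructor <;> linarith [ht.1, ht.2]
  have left_mem {t : ℝ} (ht : t ∈ Icc 0 h) : c - t ∈ Icc (c - h) (c + h) := by
    constructor <;> linarith [ht.1, ht.2]
  have third_deriv_le : ∀ t ∈ Icc 0 h, ‖f'' (c + t) + f'' (c - t)‖ ≤ 2 * M * t ^ 0 := fun t ht =>
    (norm_add_le_of_le (hM _ (right_mem ht)) (hM _ (left_mem ht))).trans_eq (by ring)
  have second_deriv_le := norm_le_of_norm_deriv_le_mul_pow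
    (g := fun t => f' (c + t) - f' (c - t))
    (fun t ht => (((hf' _ (right_mem ht)).comp_const_add c t).sub
      ((hf' _ (left_mem ht)).comp_const_sub c t)).congr_deriv (sub_neg_eq_add _ _))
    (by simp) third_deriv_le
  have first_deriv_le := norm_le_of_norm_deriv_le_mul_pow
    (g := fun t => f (c + t) + f (c - t) - (2 : ℝ) • f c)
    (fun t ht => ((((hf _ (right_mem ht)).comp_const_add c t).add
      ((hf _ (left_mem ht)).comp_const_sub c t)).sub_const _).congr_deriv
        (sub_eq_add_neg _ _).symm)
    (by simp [two_smul]) second_deriv_le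
  have error_le := norm_le_of_norm_deriv_le_mul_pow
    (g := fun t => F (c + t) - F (c - t) - (2 * t) • f c)
    (fun t ht => ((((hF _ (right_mem ht)).comp_const_add c t).sub
      ((hF _ (left_mem ht)).comp_const_sub c t)).sub
        (((hasDerivAt_id t).const_mul 2).smul_const (f c))).congr_deriv (by simp))
    (by simp) first_deriv_le
  refine (error_le h (right_mem_Icc.mpr hh)).trans_eq ?_
  norm_num

end NormedSpace

section Dilogarithm

/-- The dilogarithm `Li₂`, given by its power series on the closed unit disc; the term `n = 0`
is `1 / 0 = 0`. -/
noncomputable def dilog (w : ℂ) : ℂ := ∑' n : ℕ, w ^ n / (n : ℂ) ^ 2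

lemma norm_pow_div_sq_le {w : ℂ} (hw : ‖w‖ ≤ 1) (n : ℕ) :
    ‖w ^ n / (n : ℂ) ^ 2‖ ≤ ‖w‖ * (1 / (n : ℝ) ^ 2) := by
  rcases eq_or_ne n 0 with rfl | hn
  · simp
  · rw [norm_div, norm_pow, norm_pow, Complex.norm_natCast, mul_one_div]
    gcongr
    exact pow_le_of_le_one (norm_nonneg _) hw hn

lemma norm_pow_div_sq_le_one_div_sq {w : ℂ} (hw : ‖w‖ ≤ 1) (n : ℕ) :
    ‖w ^ n / (n : ℂ) ^ 2‖ ≤ 1 / (n : ℝ) ^ 2 :=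
  (norm_pow_div_sq_le hw n).trans (mul_le_of_le_one_left (by positivity) hw)

lemma norm_dilog_le {w : ℂ} (hw : ‖w‖ ≤ 1) : ‖dilog w‖ ≤ ‖w‖ * (Real.pi ^ 2 / 6) :=
  tsum_of_norm_bounded (hasSum_zeta_two.mul_left _) (norm_pow_div_sq_le hw)

lemma continuousOn_dilog : ContinuousOn dilog (Metric.closedBall 0 1) :=
  continuousOn_tsum (fun n => by fun_prop) hasSum_zeta_two.summable
    fun n w hw => norm_pow_div_sq_le_one_div_sq (by simpa using hw) n

lemma hasDerivAt_dilog {w : ℂ} (hw : ‖w‖ < 1) (hw0 : w ≠ 0) :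
    HasDerivAt dilog (-Complex.log (1 - w) / w) w := by
  have hmem : w ∈ Metric.ball (0 : ℂ) 1 := by simpa using hw
  have hdiff (n : ℕ) :
      DifferentiableOn ℂ (fun w : ℂ => w ^ n / (n : ℂ) ^ 2) (Metric.ball 0 1) := by fun_prop
  have hbound (n : ℕ) (v : ℂ) (hv : v ∈ Metric.ball (0 : ℂ) 1) :
      ‖v ^ n / (n : ℂ) ^ 2‖ ≤ 1 / (n : ℝ) ^ 2 :=
    norm_pow_div_sq_le_one_div_sq (by simpa using (mem_ball_zero_iff.mp hv).le) n
  have hderiv_term (n : ℕ) : deriv (fun w : ℂ => w ^ n / (n : ℂ) ^ 2) w = w ^ n / n / w := by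
    rcases n with _ | n
    · simp
    · rw [deriv_div_const, deriv_pow_field, Nat.add_sub_cancel]
      field_simp
      ring
  have hsum := Complex.hasSum_deriv_of_summable_norm hasSum_zeta_two.summable hdiff
    Metric.isOpen_ball hbound hmem
  simp only [hderiv_term] at hsum
  have hderiv : deriv dilog w = -Complex.log (1 - w) / w :=
    hsum.unique ((Complex.hasSum_taylorSeries_neg_log hw).div_const w)
  rw [← hderiv]
  exact ((Complex.differentiableOn_tsum_of_summable_norm hasSum_zeta_two.summable hdiff
    Metric.isOpen_ball hbound).differentiableAt (Metric.isOpen_ball.mem_nhds hmem)).hasDerivAt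

lemma dilog_neg_one : dilog (-1) = -(Real.pi ^ 2 / 12 : ℝ) := by
  have hfourier := hasSum_one_div_nat_pow_mul_cos one_ne_zero
    (x := 2⁻¹) (by constructor <;> norm_num)
  have hvalue : (-1 : ℝ) ^ (1 + 1) * (2 * Real.pi) ^ (2 * 1) / 2 / (2 * 1).factorial *
      bernoulliFun (2 * 1) 2⁻¹ = -(Real.pi ^ 2 / 12) := by
    rw [bernoulliFun_eval_half, mul_one, bernoulli_two]
    norm_num
    ring
  have hterm (n : ℕ) : 1 / (n : ℝ) ^ (2 * 1) * Real.cos (2 * Real.pi * n * 2⁻¹) =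
      (-1) ^ n / (n : ℝ) ^ 2 := by
    rw [show 2 * Real.pi * n * 2⁻¹ = n * Real.pi by ring, Real.cos_nat_mul_pi]
    ring
  rw [← bernoulliFun, hvalue] at hfourier
  simp only [hterm] at hfourier
  simpa [dilog] using (Complex.hasSum_ofReal.mpr hfourier).tsum_eq

end Dilogarithm

section LogFactor

/-- The function `f z = log (1 + e^{-z})`, whose values at `(s + k) ℓ` are the logarithms of the
factors of `Z_η(s, ℓ)`, up to the exponent `2`. -/
noncomputable def logFactor (z : ℂ) : ℂ := Complex.log (1 + Complex.exp (-z))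

/-- The function `Φ z = -Li₂(-e^{-z})`: the primitive of `-logFactor` on the right half-plane that
vanishes at infinity. -/
noncomputable def logFactorTail (z : ℂ) : ℂ := -dilog (-Complex.exp (-z))

lemma norm_exp_neg_le_one {z : ℂ} (hz : 0 ≤ z.re) : ‖Complex.exp (-z)‖ ≤ 1 := by
  simpa [Complex.norm_exp] using hz

lemma norm_exp_neg_lt_one {z : ℂ} (hz : 0 < z.re) : ‖Complex.exp (-z)‖ < 1 := by
  simpa [Complex.norm_exp] using hz

lemma hasDerivAt_exp_neg (z : ℂ) :
    HasDerivAt (fun z => Complex.exp (-z)) (-Complex.exp (-z)) z := by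
  simpa using (hasDerivAt_neg z).cexp

lemma logFactor_zero : logFactor 0 = Real.log 2 := by
  rw [logFactor, Complex.ofReal_log zero_le_two]
  norm_num

lemma logFactorTail_zero : logFactorTail 0 = (Real.pi ^ 2 / 12 : ℝ) := by
  rw [logFactorTail, neg_zero, Complex.exp_zero, dilog_neg_one, neg_neg]

lemma norm_logFactorTail_le {z : ℂ} (hz : 0 ≤ z.re) :
    ‖logFactorTail z‖ ≤ ‖Complex.exp (-z)‖ * (Real.pi ^ 2 / 6) := by
  simpa [logFactorTail] using norm_dilog_le (w := -Complex.exp (-z))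
    (by simpa only [norm_neg] using norm_exp_neg_le_one hz)

lemma continuousOn_logFactorTail : ContinuousOn logFactorTail {z | 0 ≤ z.re} :=
  (continuousOn_dilog.comp (by fun_prop) fun z hz => by
    simpa only [mem_closedBall_zero_iff, norm_neg] using norm_exp_neg_le_one hz).neg

lemma hasDerivAt_logFactorTail {z : ℂ} (hz : 0 < z.re) :
    HasDerivAt logFactorTail (-logFactor z) z := by
  have hdilog := hasDerivAt_dilog (w := -Complex.exp (-z))
    (by simpa only [norm_neg] using norm_exp_neg_lt_one hz)
    (neg_ne_zero.mpr (Complex.exp_ne_zero _))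
  refine (hdilog.comp z (hasDerivAt_exp_neg z).neg).neg.congr_deriv ?_
  rw [logFactor, sub_neg_eq_add]
  field_simp [Complex.exp_ne_zero]

lemma hasDerivAt_logFactor {z : ℂ} (hz : 1 + Complex.exp (-z) ∈ Complex.slitPlane) :
    HasDerivAt logFactor (-Complex.exp (-z) / (1 + Complex.exp (-z))) z :=
  ((hasDerivAt_exp_neg z).const_add 1).clog hz

lemma hasDerivAt_neg_exp_neg_div_one_add {z : ℂ} (hz : 1 + Complex.exp (-z) ≠ 0) :
    HasDerivAt (fun z => -Complex.exp (-z) / (1 + Complex.exp (-z)))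
      (Complex.exp (-z) / (1 + Complex.exp (-z)) ^ 2) z := by
  refine ((hasDerivAt_exp_neg z).neg.div ((hasDerivAt_exp_neg z).const_add 1) hz).congr_deriv ?_
  congr 1
  simp only [Pi.neg_apply]
  ring

lemma one_le_re_one_add_exp_neg {z : ℂ} (hz : |z.im| ≤ Real.pi / 2) :
    1 ≤ (1 + Complex.exp (-z)).re := by
  have hcos : 0 ≤ Real.cos z.im :=
    Real.cos_nonneg_of_neg_pi_div_two_le_of_le (abs_le.mp hz).1 (abs_le.mp hz).2
  rw [Complex.add_re, Complex.one_re, Complex.exp_re, Complex.neg_im, Real.cos_neg]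
  exact le_add_of_nonneg_right (by positivity)

lemma one_add_exp_neg_mem_slitPlane {z : ℂ} (hz : |z.im| ≤ Real.pi / 2) :
    1 + Complex.exp (-z) ∈ Complex.slitPlane :=
  Or.inl (zero_lt_one.trans_le (one_le_re_one_add_exp_neg hz))

lemma norm_exp_neg_div_one_add_sq_le {z : ℂ} (hz : |z.im| ≤ Real.pi / 2) :
    ‖Complex.exp (-z) / (1 + Complex.exp (-z)) ^ 2‖ ≤ Real.exp (-z.re) := by
  have hden : 1 ≤ ‖1 + Complex.exp (-z)‖ :=
    (one_le_re_one_add_exp_neg hz).trans (Complex.re_le_norm _)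
  rw [norm_div, norm_pow, Complex.norm_exp, Complex.neg_re]
  exact div_le_self (Real.exp_pos _).le (one_le_pow₀ hden)

lemma norm_logFactorTail_sub_sub_le {z : ℂ} {h : ℝ} (hh : 0 ≤ h) (hz : h < z.re)
    (him : |z.im| ≤ Real.pi / 2) :
    ‖logFactorTail (z - h) - logFactorTail (z + h) - 2 * h * logFactor z‖ ≤
      Real.exp (-(z.re - h)) / 3 * h ^ 3 := by
  have im_le (t : ℝ) : |(z + t).im| ≤ Real.pi / 2 := by simpa using him
  have along_line {g : ℂ → ℂ} {g' : ℂ} {t : ℝ} (hg : HasDerivAt g g' (z + t)) :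
      HasDerivAt (fun t : ℝ => g (z + t)) g' t :=
    (hg.comp_const_add z t).comp_ofReal
  have le_re {t : ℝ} (ht : t ∈ Icc (0 - h) (0 + h)) : z.re - h ≤ (z + t).re := by
    rw [Complex.add_re, Complex.ofReal_re]
    linarith [ht.1]
  have second_deriv_le : ∀ t ∈ Icc (0 - h) (0 + h),
      ‖Complex.exp (-(z + (t : ℂ))) / (1 + Complex.exp (-(z + t))) ^ 2‖ ≤
        Real.exp (-(z.re - h)) := fun t ht =>
    (norm_exp_neg_div_one_add_sq_le (im_le t)).trans
      (Real.exp_le_exp.mpr (neg_le_neg (le_re ht)))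
  have hmid := norm_midpoint_rule_error_le (F := fun t : ℝ => -logFactorTail (z + t)) hh
    (fun t ht => (along_line (hasDerivAt_logFactorTail
      ((sub_pos.mpr hz).trans_le (le_re ht)))).neg.congr_deriv (neg_neg _))
    (fun t _ => along_line (hasDerivAt_logFactor (one_add_exp_neg_mem_slitPlane (im_le t))))
    (fun t _ => along_line (hasDerivAt_neg_exp_neg_div_one_add
      (Complex.slitPlane_ne_zero (one_add_exp_neg_mem_slitPlane (im_le t)))))
    second_deriv_le
  simpa only [zero_add, zero_sub, Complex.ofReal_neg, ← sub_eq_add_neg, neg_sub_neg,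
    Complex.ofReal_zero, add_zero, Complex.real_smul, Complex.ofReal_mul,
    Complex.ofReal_ofNat] using hmid

end LogFactor

section Asymptotics

lemma summable_exp_neg_add_nat_mul (s : ℂ) {ℓ : ℝ} (hℓ : 0 < ℓ) :
    Summable fun k : ℕ => Complex.exp (-((s + k) * ℓ)) := by
  have hgeom : Summable fun k : ℕ => Complex.exp (-(s * ℓ)) * Complex.exp (-ℓ) ^ k :=
    (summable_geometric_of_norm_lt_one (norm_exp_neg_lt_one (by simpa using hℓ))).mul_left _
  refine hgeom.congr fun k => ?_
  rw [← Complex.exp_nat_mul, ← Complex.exp_add]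
  ring_nf

lemma summable_logFactor (s : ℂ) {ℓ : ℝ} (hℓ : 0 < ℓ) :
    Summable fun k : ℕ => logFactor ((s + k) * ℓ) :=
  Complex.summable_log_one_add_of_summable (summable_exp_neg_add_nat_mul s hℓ)

lemma tendsto_logFactorTail_atTop {s : ℂ} (hs : 0 ≤ s.re) {ℓ : ℝ} (hℓ : 0 < ℓ) :
    Tendsto (fun k : ℕ => logFactorTail ((s + k) * ℓ)) atTop (𝓝 0) := by
  have hre (k : ℕ) : 0 ≤ ((s + k) * ℓ).re := by
    rw [Complex.re_mul_ofReal, Complex.add_re, Complex.natCast_re]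
    positivity
  refine squeeze_zero_norm (fun k => norm_logFactorTail_le (hre k)) ?_
  simpa using
    (summable_exp_neg_add_nat_mul s hℓ).tendsto_atTop_zero.norm.mul_const (Real.pi ^ 2 / 6)

lemma inv_one_sub_exp_neg_le {x : ℝ} (hx : 0 < x) : (1 - Real.exp (-x))⁻¹ ≤ (1 + x) / x := by
  have hexp : Real.exp (-x) ≤ (1 + x)⁻¹ := by
    rw [Real.exp_neg]
    exact inv_anti₀ (by positivity) (by linarith [Real.add_one_le_exp x])
  calc (1 - Real.exp (-x))⁻¹ ≤ (1 - (1 + x)⁻¹)⁻¹ := inv_anti₀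
        (sub_pos.mpr (inv_lt_one_of_one_lt₀ (by linarith))) (by linarith)
    _ = (1 + x) / x := by
      have hsub : 1 - (1 + x)⁻¹ = x / (1 + x) := by field_simp; ring
      rw [hsub, inv_div]

lemma norm_logFactorTail_sub_tsum_logFactor_le {s : ℂ} (hs : 1 / 2 < s.re) {ℓ : ℝ} (hℓ : 0 < ℓ)
    (him : |s.im * ℓ| ≤ Real.pi / 2) :
    ‖logFactorTail ((s - 1 / 2) * ℓ) - ℓ * ∑' k : ℕ, logFactor ((s + k) * ℓ)‖ ≤
      ℓ ^ 3 / 24 * (1 - Real.exp (-ℓ))⁻¹ := by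
  have midpoint_le (k : ℕ) :
      ‖logFactorTail ((s - 1 / 2 + k) * ℓ) - logFactorTail ((s - 1 / 2 + (k + 1 : ℕ)) * ℓ) -
        ℓ * logFactor ((s + k) * ℓ)‖ ≤ ℓ ^ 3 / 24 * Real.exp (-ℓ) ^ k := by
    have hre : ((s + k) * ℓ).re = (s.re + k) * ℓ := by simp
    have hpos : 0 < (s.re - 1 / 2) * ℓ := mul_pos (sub_pos.mpr hs) hℓ
    have hkℓ : 0 ≤ k * ℓ := by positivity
    have herror := norm_logFactorTail_sub_sub_le (z := (s + k) * ℓ) (h := ℓ / 2) (by positivity)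
      (by rw [hre]; linarith) (by simpa using him)
    have hexp : Real.exp (-(((s + k) * ℓ).re - ℓ / 2)) ≤ Real.exp (-ℓ) ^ k := by
      rw [← Real.exp_nat_mul, hre]
      exact Real.exp_le_exp.mpr (by linarith)
    calc _ = ‖logFactorTail ((s + k) * ℓ - (ℓ / 2 : ℝ)) -
            logFactorTail ((s + k) * ℓ + (ℓ / 2 : ℝ)) -
            2 * (ℓ / 2 : ℝ) * logFactor ((s + k) * ℓ)‖ := by push_cast; ring_nf
      _ ≤ Real.exp (-(((s + k) * ℓ).re - ℓ / 2)) / 3 * (ℓ / 2) ^ 3 := herror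
      _ ≤ Real.exp (-ℓ) ^ k / 3 * (ℓ / 2) ^ 3 := by gcongr
      _ = ℓ ^ 3 / 24 * Real.exp (-ℓ) ^ k := by ring
  have hgeom : HasSum (fun k : ℕ => ℓ ^ 3 / 24 * Real.exp (-ℓ) ^ k)
      (ℓ ^ 3 / 24 * (1 - Real.exp (-ℓ))⁻¹) :=
    (hasSum_geometric_of_lt_one (Real.exp_pos _).le (by simpa using hℓ)).mul_left _
  simpa using norm_sub_le_of_norm_telescope_sub_le
    (tendsto_logFactorTail_atTop (s := s - 1 / 2) (by simpa using hs.le) hℓ)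
    ((summable_logFactor s hℓ).hasSum.mul_left (ℓ : ℂ)) hgeom midpoint_le

lemma tendsto_logFactor_mul (w : ℂ) :
    Tendsto (fun ℓ : ℝ => logFactor (w * ℓ)) (𝓝[>] 0) (𝓝 (Real.log 2)) := by
  have hlogFactor : ContinuousAt logFactor (w * (0 : ℝ)) :=
    (hasDerivAt_logFactor
      (one_add_exp_neg_mem_slitPlane (by simpa using Real.pi_div_two_pos.le))).continuousAt
  have hcomp : ContinuousAt (fun ℓ : ℝ => logFactor (w * ℓ)) 0 :=
    hlogFactor.comp (f := fun ℓ : ℝ => w * ℓ) (by fun_prop)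
  simpa [logFactor_zero] using hcomp.tendsto.mono_left nhdsWithin_le_nhds

lemma tendsto_logFactorTail_mul_sub_div {w : ℂ} (hw : 0 < w.re) :
    Tendsto (fun ℓ : ℝ => (logFactorTail (w * ℓ) - logFactorTail 0) / ℓ) (𝓝[>] 0)
      (𝓝 (-(w * Real.log 2))) := by
  have re_pos {t : ℝ} (ht : 0 < t) : 0 < (w * t).re := by
    rw [Complex.re_mul_ofReal]
    positivity
  have hderiv {t : ℝ} (ht : 0 < t) :
      HasDerivAt (fun ℓ : ℝ => logFactorTail (w * ℓ)) (-(w * logFactor (w * t))) t :=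
    ((hasDerivAt_logFactorTail (re_pos ht)).comp (t : ℂ)
      ((hasDerivAt_id (t : ℂ)).const_mul w)).comp_ofReal.congr_deriv (by ring)
  have hcont : ContinuousWithinAt (fun ℓ : ℝ => logFactorTail (w * ℓ)) (Ioi 0) 0 :=
    (continuousOn_logFactorTail (w * (0 : ℝ)) (by simp)).comp (f := fun ℓ : ℝ => w * ℓ)
      (by fun_prop) fun t ht => (re_pos ht).le
  have hderiv_zero : HasDerivWithinAt (fun ℓ : ℝ => logFactorTail (w * ℓ))
      (-(w * Real.log 2)) (Ici 0) 0 :=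
    hasDerivWithinAt_Ici_of_tendsto_deriv
      (fun t ht => (hderiv ht).differentiableAt.differentiableWithinAt) hcont self_mem_nhdsWithin
      (((tendsto_logFactor_mul w).const_mul w).neg.congr'
        (eventually_mem_nhdsWithin.mono fun t ht => (hderiv ht).deriv.symm))
  refine ((hasDerivWithinAt_iff_tendsto_slope' (by simp)).mp hderiv_zero.Ioi_of_Ici).congr
    fun t => ?_
  simp [slope, div_eq_inv_mul]

lemma tendsto_midpoint_error_div {s : ℂ} (hs : 1 / 2 < s.re) :
    Tendsto (fun ℓ : ℝ =>
      (logFactorTail ((s - 1 / 2) * ℓ) - ℓ * ∑' k : ℕ, logFactor ((s + k) * ℓ)) / ℓ)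
      (𝓝[>] 0) (𝓝 0) := by
  have im_small : ∀ᶠ ℓ : ℝ in 𝓝[>] 0, |s.im * ℓ| < Real.pi / 2 := by
    have hcont : ContinuousAt (fun ℓ : ℝ => |s.im * ℓ|) 0 := by fun_prop
    exact nhdsWithin_le_nhds (hcont.eventually_lt continuousAt_const (by simp [Real.pi_pos]))
  have bound_tendsto : Tendsto (fun ℓ : ℝ => ℓ * (1 + ℓ) / 24) (𝓝[>] 0) (𝓝 0) := by
    have hcont : Continuous fun ℓ : ℝ => ℓ * (1 + ℓ) / 24 := by fun_prop
    simpa using (hcont.tendsto 0).mono_left nhdsWithin_le_nhds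
  refine squeeze_zero_norm' ?_ bound_tendsto
  filter_upwards [im_small, self_mem_nhdsWithin] with ℓ him hℓ
  have hℓ : 0 < ℓ := hℓ
  rw [norm_div, Complex.norm_real, Real.norm_of_nonneg hℓ.le, div_le_iff₀ hℓ]
  calc _ ≤ ℓ ^ 3 / 24 * (1 - Real.exp (-ℓ))⁻¹ :=
        norm_logFactorTail_sub_tsum_logFactor_le hs hℓ him.le
    _ ≤ ℓ ^ 3 / 24 * ((1 + ℓ) / ℓ) := by gcongr; exact inv_one_sub_exp_neg_le hℓ
    _ = ℓ * (1 + ℓ) / 24 * ℓ := by field_simp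

lemma tendsto_tsum_logFactor_sub {s : ℂ} (hs : 1 / 2 < s.re) :
    Tendsto (fun ℓ : ℝ => ∑' k : ℕ, logFactor ((s + k) * ℓ) - (Real.pi ^ 2 / (12 * ℓ) : ℝ))
      (𝓝[>] 0) (𝓝 ((1 / 2 - s) * Real.log 2)) := by
  have hslope := tendsto_logFactorTail_mul_sub_div (w := s - 1 / 2) (by simpa using hs)
  have hlim := hslope.sub (tendsto_midpoint_error_div hs)
  rw [sub_zero, ← neg_mul, neg_sub] at hlim
  refine hlim.congr' ?_
  filter_upwards [self_mem_nhdsWithin] with ℓ hℓ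
  have hℓ0 : (ℓ : ℂ) ≠ 0 := Complex.ofReal_ne_zero.mpr (ne_of_gt hℓ)
  rw [logFactorTail_zero]
  push_cast
  field_simp
  ring

end Asymptotics

section PinchingProduct

/-- The product `∏ₖ (1 + e^{-(s + k) ℓ})`, i.e. the `q`-Pochhammer symbol
`(-e^{-s ℓ}; e^{-ℓ})_∞`; its square is `Z_η(s, ℓ)`. -/
noncomputable def pinchingProduct (s : ℂ) (ℓ : ℝ) : ℂ :=
  ∏' k : ℕ, (1 + Complex.exp (-(s + k) * ℓ))

lemma multipliable_one_add_exp (s : ℂ) {ℓ : ℝ} (hℓ : 0 < ℓ) :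
    Multipliable fun k : ℕ => 1 + Complex.exp (-(s + k) * ℓ) := by
  simpa only [neg_mul] using
    Complex.multipliable_one_add_of_summable (summable_exp_neg_add_nat_mul s hℓ)

lemma pinchingProduct_eq_mul_add_one (s : ℂ) {ℓ : ℝ} (hℓ : 0 < ℓ) :
    pinchingProduct s ℓ = (1 + Complex.exp (-s * ℓ)) * pinchingProduct (s + 1) ℓ := by
  have hshift (k : ℕ) : s + (k + 1 : ℕ) = s + 1 + k := by push_cast; ring
  rw [pinchingProduct, tprod_eq_zero_mul']
  · simp only [hshift, Nat.cast_zero, add_zero, pinchingProduct]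
  · simpa only [hshift] using multipliable_one_add_exp (s + 1) hℓ

lemma exp_tsum_logFactor {s : ℂ} (hs : 0 < s.re) {ℓ : ℝ} (hℓ : 0 < ℓ) :
    Complex.exp (∑' k : ℕ, logFactor ((s + k) * ℓ)) = pinchingProduct s ℓ := by
  have factor_ne_zero (k : ℕ) : 1 + Complex.exp (-((s + k) * ℓ)) ≠ 0 := by
    refine Complex.slitPlane_ne_zero (Complex.mem_slitPlane_of_norm_lt_one (norm_exp_neg_lt_one ?_))
    rw [Complex.re_mul_ofReal, Complex.add_re, Complex.natCast_re]
    positivity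
  simpa only [pinchingProduct, logFactor, neg_mul] using
    Complex.cexp_tsum_eq_tprod factor_ne_zero (summable_logFactor s hℓ)

lemma tendsto_exp_mul_pinchingProduct_of_half_lt_re {s : ℂ} (hs : 1 / 2 < s.re) :
    Tendsto (fun ℓ : ℝ => Complex.exp (-(Real.pi ^ 2 / (12 * ℓ) : ℝ)) * pinchingProduct s ℓ)
      (𝓝[>] 0) (𝓝 (Complex.exp ((1 / 2 - s) * Real.log 2))) := by
  refine (tendsto_tsum_logFactor_sub hs).cexp.congr' ?_
  filter_upwards [self_mem_nhdsWithin] with ℓ hℓ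
  rw [sub_eq_neg_add, Complex.exp_add, exp_tsum_logFactor (by linarith) hℓ]

lemma tendsto_exp_mul_pinchingProduct_of_add_one {s : ℂ}
    (hs : Tendsto (fun ℓ : ℝ =>
      Complex.exp (-(Real.pi ^ 2 / (12 * ℓ) : ℝ)) * pinchingProduct (s + 1) ℓ)
      (𝓝[>] 0) (𝓝 (Complex.exp ((1 / 2 - (s + 1)) * Real.log 2)))) :
    Tendsto (fun ℓ : ℝ => Complex.exp (-(Real.pi ^ 2 / (12 * ℓ) : ℝ)) * pinchingProduct s ℓ)
      (𝓝[>] 0) (𝓝 (Complex.exp ((1 / 2 - s) * Real.log 2))) := by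
  have hfactor : Tendsto (fun ℓ : ℝ => 1 + Complex.exp (-s * ℓ)) (𝓝[>] 0) (𝓝 2) := by
    have hcont : Continuous fun ℓ : ℝ => 1 + Complex.exp (-s * ℓ) := by fun_prop
    simpa [one_add_one_eq_two] using (hcont.tendsto 0).mono_left nhdsWithin_le_nhds
  have hlimit : 2 * Complex.exp ((1 / 2 - (s + 1)) * Real.log 2) =
      Complex.exp ((1 / 2 - s) * Real.log 2) := by
    have hexp_log : Complex.exp (Real.log 2) = 2 := by
      rw [← Complex.ofReal_exp, Real.exp_log two_pos, Complex.ofReal_ofNat]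
    nth_rw 1 [← hexp_log]
    rw [← Complex.exp_add]
    ring_nf
  rw [← hlimit]
  refine (hfactor.mul hs).congr' ?_
  filter_upwards [self_mem_nhdsWithin] with ℓ hℓ
  rw [pinchingProduct_eq_mul_add_one s hℓ, mul_left_comm]

theorem tendsto_exp_mul_pinchingProduct (s : ℂ) :
    Tendsto (fun ℓ : ℝ => Complex.exp (-(Real.pi ^ 2 / (12 * ℓ) : ℝ)) * pinchingProduct s ℓ)
      (𝓝[>] 0) (𝓝 (Complex.exp ((1 / 2 - s) * Real.log 2))) := by
  obtain ⟨n, hn⟩ := exists_nat_gt (1 / 2 - s.re)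
  induction n generalizing s with
  | zero => exact tendsto_exp_mul_pinchingProduct_of_half_lt_re (by simpa using hn)
  | succ n ih =>
    refine tendsto_exp_mul_pinchingProduct_of_add_one (ih (s + 1) ?_)
    rw [Complex.add_re, Complex.one_re]
    push_cast at hn
    linarith

end PinchingProduct

theorem stmt_15_general (s : ℂ) :
    (∀ ℓ : ℝ, 0 < ℓ →
      Multipliable (fun k : ℕ => (1 + Complex.exp (-(s + k) * ℓ)) ^ 2)) ∧
    Tendsto (fun ℓ : ℝ => (Real.exp (-(Real.pi ^ 2 / (6 * ℓ))) : ℂ) *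
        ∏' k : ℕ, (1 + Complex.exp (-(s + k) * ℓ)) ^ 2)
      (nhdsWithin 0 (Set.Ioi 0))
      (nhds (Complex.exp ((1 - 2 * s) * (Real.log 2 : ℂ)))) := by
  refine ⟨fun ℓ hℓ => (multipliable_one_add_exp s hℓ).pow 2, ?_⟩
  have hsq := (tendsto_exp_mul_pinchingProduct s).pow 2
  have hlimit : Complex.exp ((1 / 2 - s) * Real.log 2) ^ 2 =
      Complex.exp ((1 - 2 * s) * Real.log 2) := by
    rw [← Complex.exp_nat_mul]
    push_cast
    ring_nf
  rw [hlimit] at hsq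
  refine hsq.congr' ?_
  filter_upwards [self_mem_nhdsWithin] with ℓ hℓ
  rw [mul_pow, ← Complex.exp_nat_mul, (multipliable_one_add_exp s hℓ).tprod_pow, pinchingProduct]
  push_cast
  ring_nf

/-- Lemma `ZetaExponentialGrowth`: for `Re s > 1`, the product
`Z_η(s,ℓ) = ∏_{k≥0} (1 + e^{−(s+k)ℓ})²` converges for every `ℓ > 0` and
`e^{−π²/(6ℓ)}·Z_η(s,ℓ) → 2^{1−2s}` as `ℓ → 0⁺`. -/
theorem stmt_15 (s : ℂ) (hs : 1 < s.re) :
    (∀ ℓ : ℝ, 0 < ℓ →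
      Multipliable (fun k : ℕ => (1 + Complex.exp (-(s + k) * ℓ)) ^ 2)) ∧
    Tendsto (fun ℓ : ℝ => (Real.exp (-(Real.pi ^ 2 / (6 * ℓ))) : ℂ) *
        ∏' k : ℕ, (1 + Complex.exp (-(s + k) * ℓ)) ^ 2)
      (nhdsWithin 0 (Set.Ioi 0))
      (nhds (Complex.exp ((1 - 2 * s) * (Real.log 2 : ℂ)))) :=
  stmt_15_general s
end
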